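/- Under the pure-jump CGMY model, third-order close-to-the-money call price expansion: define d₁ := (1/π)·Γ(1−1/Y)·(2·C·Γ(−Y)·|cos(πY/2)|)^{1/Y}; d₂ := (C·Γ(−Y)/2)·((M−1)^Y − M^Y − (G+1)^Y + G^Y) − e₁/2; d₃₁ := ((γ̃−e₁)²/(2π))·Γ(1+1/Y)·(−2·C·Γ(−Y)·cos(πY/2))^{−1/Y} − e₂/2; and d₃₂ := −(1/2)·E[(Z⁺+Ũ)²·1_{Z⁺+Ũ≤0}] − ∫₀^∞ w·(P(Z⁺+Ũ ≥ w) − C·M^Y/(Y·w^Y) − C·(G+1)^Y/(Y·w^Y)) dw. Then, as t → 0⁺, Π(t) = d₁·t^{1/Y} + d₂·t + d₃₁·t^{2−1/Y} + d₃₂·t^{2/Y} + o(t^{min(2−1/Y, 2/Y)}). -/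

import Mathlib

open MeasureTheory ProbabilityTheory Filter Topology Asymptotics Set

/-!
For `U`, `V` independent one-sided stable variables, the law of the CGMY process at time `t` is an
exponential tilt of the law of `t ^ (1 / Y) * (U - V)` plus a drift: the Laplace transform of a
one-sided stable law extends to the right half-plane, so it can be evaluated at `M - i * u`, and its
values at `M` and `G` are the normalizing constants of the tilt. With `s = t ^ (1 / Y)` and
`θ = (c * t - κ t) / s` the call price is therefore exactly `1 - exp (-η * t) * Φ s θ`, where
`Φ s θ = E[exp (-s * (A + max (U - V + θ) 0))]`, `A = (M - 1) * U + (G + 1) * V` and `η` is the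
constant `C * Γ(-Y) * ((M - 1) ^ Y + (G + 1) ^ Y)`.

Three expansions then combine. First, `W = A + max (U - V) 0` has the upper tail
`C / Y * (M ^ Y + (G + 1) ^ Y) * w ^ (-Y) + O(w ^ (-Y - 1))`, because `W` is large only if exactly
one of `U` and `V` is, and then `W` is essentially `M * U` or `(G + 1) * V`. Subtracting this tail
in the layer-cake formula expands `Φ s 0` up to `o(s ^ 2)`. Second, changing `θ` alters `Φ s θ` by
`-s * (E[max (U - V + θ) 0] - E[max (U - V) 0])` up to `O(s ^ 2 * |θ|)`. Third, Fourier inversion of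
`|x|` gives `E[max (U - V + θ) 0]` to second order in `θ`.

That one-sided stable laws have finite exponential moments on the negative side, and the tail used
above, come from a density defined as a contour integral, whose contour can be shifted to the right
for the Laplace transform and rotated onto a ray for the tail.
-/

section Contour

variable {E : Type*} [NormedAddCommGroup E] [NormedSpace ℂ E]

theorem tendsto_intervalIntegral_vertical_zero {ι : Type*} {l : Filter ι} {T : ι → ℝ} {g : ℂ → E}
    {a b : ℝ} (hab : a ≤ b) {B : ℝ → ℝ}
    (hB : ∀ x : ℝ, ∀ y ∈ Icc a b, ‖g (x + y * Complex.I)‖ ≤ B x)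
    (hT : Tendsto (B ∘ T) l (𝓝 0)) :
    Tendsto (fun i ↦ ∫ y : ℝ in a..b, g ((T i : ℂ) + y * Complex.I)) l (𝓝 0) := by
  refine squeeze_zero_norm (fun i ↦ ?_) (by simpa using hT.mul_const |b - a|)
  refine intervalIntegral.norm_integral_le_of_norm_le_const fun y hy ↦ hB (T i) y ?_
  exact Ioc_subset_Icc_self (uIoc_of_le hab ▸ hy)

theorem integral_horizontal_eq_of_tendsto_zero [CompleteSpace E] {g : ℂ → E} {a b : ℝ} (hab : a ≤ b)
    (hc : ContinuousOn g {z | z.im ∈ Icc a b}) (hd : DifferentiableOn ℂ g {z | z.im ∈ Ioo a b})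
    (ha : Integrable fun x : ℝ ↦ g (x + a * Complex.I))
    (hb : Integrable fun x : ℝ ↦ g (x + b * Complex.I))
    {B : ℝ → ℝ} (hB : ∀ x : ℝ, ∀ y ∈ Icc a b, ‖g (x + y * Complex.I)‖ ≤ B x)
    (hB_top : Tendsto B atTop (𝓝 0)) (hB_bot : Tendsto B atBot (𝓝 0)) :
    ∫ x : ℝ, g (x + a * Complex.I) = ∫ x : ℝ, g (x + b * Complex.I) := by
  have rectangle (T : ℝ) : (∫ x : ℝ in (-T)..T, g (x + a * Complex.I))
      - (∫ x : ℝ in (-T)..T, g (x + b * Complex.I))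
      + Complex.I • (∫ y : ℝ in a..b, g ((T : ℂ) + y * Complex.I))
      - Complex.I • (∫ y : ℝ in a..b, g (((-T : ℝ) : ℂ) + y * Complex.I)) = 0 := by
    simpa using Complex.integral_boundary_rect_eq_zero_of_continuousOn_of_differentiableOn g
      ((-T : ℝ) + a * Complex.I) (T + b * Complex.I)
      (hc.mono fun z hz ↦ by simpa [uIcc_of_le hab] using (Complex.mem_reProdIm.1 hz).2)
      (hd.mono fun z hz ↦ by simpa [hab] using (Complex.mem_reProdIm.1 hz).2)
  have horizontal := (intervalIntegral_tendsto_integral ha tendsto_neg_atTop_atBot tendsto_id).sub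
    (intervalIntegral_tendsto_integral hb tendsto_neg_atTop_atBot tendsto_id)
  have right := tendsto_intervalIntegral_vertical_zero (T := id) hab hB hB_top
  have left := tendsto_intervalIntegral_vertical_zero hab hB (hB_bot.comp tendsto_neg_atTop_atBot)
  have limit := (horizontal.add (right.const_smul Complex.I)).sub (left.const_smul Complex.I)
  have := tendsto_nhds_unique (limit.congr rectangle) tendsto_const_nhds
  simpa [sub_eq_zero] using this

end Contour

section ExpSubstitution

variable {E : Type*} [NormedAddCommGroup E] [NormedSpace ℝ E]

theorem integral_exp_smul_comp_exp (f : ℝ → E) :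
    ∫ ρ, Real.exp ρ • f (Real.exp ρ) = ∫ r in Ioi 0, f r := by
  rw [← Real.range_exp, ← image_univ, integral_image_eq_integral_abs_deriv_smul
    MeasurableSet.univ (fun x _ ↦ (Real.hasDerivAt_exp x).hasDerivWithinAt)
    Real.exp_injective.injOn f]
  simp [abs_of_pos (Real.exp_pos _)]

theorem integrable_exp_smul_comp_exp_iff (f : ℝ → E) :
    Integrable (fun ρ ↦ Real.exp ρ • f (Real.exp ρ)) ↔ IntegrableOn f (Ioi 0) := by
  rw [← Real.range_exp, ← image_univ, integrableOn_image_iff_integrableOn_abs_deriv_smul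
    MeasurableSet.univ (fun x _ ↦ (Real.hasDerivAt_exp x).hasDerivWithinAt)
    Real.exp_injective.injOn f]
  simp [abs_of_pos (Real.exp_pos _)]

end ExpSubstitution

section Laplace

variable {K Y : ℝ}

theorem cos_pi_mul_div_two_neg (hY : Y ∈ Ioo (1 : ℝ) 2) : Real.cos (Real.pi * Y / 2) < 0 :=
  Real.cos_neg_of_pi_div_two_lt_of_lt (by nlinarith [Real.pi_pos, hY.1])
    (by nlinarith [Real.pi_pos, hY.2])

theorem cos_mul_le_cos_add_mul_cos {t : ℝ} (hY : 0 ≤ Y) (ht : t ≤ Real.pi / 2) (ht₀ : 0 ≤ t) :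
    Real.cos (t * Y) ≤ Real.cos (Real.pi * Y / 2) + Y * Real.pi / 2 * Real.cos t := by
  have lipschitz : Real.cos (t * Y) - Real.cos (Real.pi * Y / 2) ≤ Y * (Real.pi / 2 - t) := by
    have h := Real.lipschitzWith_cos.dist_le_mul (t * Y) (Real.pi * Y / 2)
    rw [Real.dist_eq, Real.dist_eq, NNReal.coe_one, one_mul,
      show t * Y - Real.pi * Y / 2 = -(Y * (Real.pi / 2 - t)) by ring, abs_neg,
      abs_of_nonneg (mul_nonneg hY (sub_nonneg.2 ht))] at h
    exact (le_abs_self _).trans h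
  have jordan : 2 / Real.pi * (Real.pi / 2 - t) ≤ Real.cos t := by
    simpa [Real.sin_pi_div_two_sub] using
      Real.mul_le_sin (x := Real.pi / 2 - t) (by linarith) (by linarith)
  calc Real.cos (t * Y) ≤ Real.cos (Real.pi * Y / 2) + Y * (Real.pi / 2 - t) := by linarith
    _ = Real.cos (Real.pi * Y / 2) + Y * Real.pi / 2 * (2 / Real.pi * (Real.pi / 2 - t)) := by
        field_simp
    _ ≤ _ := by gcongr

theorem re_cpow_le_of_re_nonneg (hY : 0 < Y) {z : ℂ} (hz : 0 ≤ z.re) :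
    (z ^ (Y : ℂ)).re ≤
      Real.cos (Real.pi * Y / 2) * ‖z‖ ^ Y + Y * Real.pi / 2 * z.re * ‖z‖ ^ (Y - 1) := by
  rcases eq_or_ne z 0 with rfl | hz0
  · simp [hY.ne']
  have hcos : Real.cos (|z.arg| * Y) = Real.cos (z.arg * Y) := by
    rcases abs_choice z.arg with h | h <;> simp [h]
  have harg := cos_mul_le_cos_add_mul_cos hY.le (Complex.abs_arg_le_pi_div_two_iff.2 hz)
    (abs_nonneg _)
  rw [hcos, Real.cos_abs] at harg
  calc (z ^ (Y : ℂ)).re = ‖z‖ ^ Y * Real.cos (z.arg * Y) := Complex.cpow_ofReal_re z Y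
    _ ≤ ‖z‖ ^ Y * (Real.cos (Real.pi * Y / 2) + Y * Real.pi / 2 * Real.cos z.arg) := by gcongr
    _ = Real.cos (Real.pi * Y / 2) * ‖z‖ ^ Y
          + Y * Real.pi / 2 * (‖z‖ * Real.cos z.arg) * ‖z‖ ^ (Y - 1) := by
        rw [Real.rpow_sub_one (norm_ne_zero_iff.2 hz0)]
        field_simp
    _ = _ := by rw [Complex.norm_mul_cos_arg]

theorem self_le_one_add_rpow {r : ℝ} (hY : 1 ≤ Y) (hr : 0 ≤ r) : r ≤ 1 + r ^ Y := by
  rcases le_total r 1 with h | h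
  · linarith [Real.rpow_nonneg hr Y]
  · linarith [Real.self_le_rpow_of_one_le h hY]

theorem exists_mul_rpow_sub_one_le (hY : 1 ≤ Y) {b ε : ℝ} (hb : 0 ≤ b) (hε : 0 < ε) :
    ∃ A, ∀ r, 0 ≤ r → b * r ^ (Y - 1) ≤ ε * r ^ Y + A := by
  refine ⟨b * (b / ε) ^ (Y - 1), fun r hr ↦ ?_⟩
  have hr' : 0 ≤ r ^ (Y - 1) := Real.rpow_nonneg hr _
  rcases le_total r (b / ε) with h | h
  · have : b * r ^ (Y - 1) ≤ b * (b / ε) ^ (Y - 1) := by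
      gcongr
    linarith [mul_nonneg hε.le (Real.rpow_nonneg hr Y)]
  · have hsplit : r ^ Y = r * r ^ (Y - 1) := by
      rw [← Real.rpow_one_add' hr (by linarith)]
      ring_nf
    rw [div_le_iff₀ hε] at h
    rw [hsplit]
    nlinarith [mul_nonneg hb (Real.rpow_nonneg (div_nonneg hb hε.le) (Y - 1))]

/-- The Laplace transform `z ↦ E exp (-z X)` of the centered, totally positively skewed strictly
`Y`-stable law with scale `K`, on the half-plane `0 ≤ re z`. -/
noncomputable def stableLaplace (K Y : ℝ) (z : ℂ) : ℂ := Complex.exp (K * z ^ (Y : ℂ))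

theorem continuousOn_stableLaplace (hY : 0 < Y) :
    ContinuousOn (stableLaplace K Y) {z | 0 ≤ z.re} := fun _ hz ↦
  ((Complex.continuousAt_cpow_const_of_re_pos (.inl hz) (by simpa using hY)).const_mul
    (K : ℂ)).cexp.continuousWithinAt

theorem differentiableAt_stableLaplace {z : ℂ} (hz : 0 < z.re) :
    DifferentiableAt ℂ (stableLaplace K Y) z :=
  ((differentiableAt_id.cpow_const (.inl hz)).const_mul _).cexp

theorem stableLaplace_conj {z : ℂ} (hz : 0 ≤ z.re) :
    stableLaplace K Y (starRingEnd ℂ z) = starRingEnd ℂ (stableLaplace K Y z) := by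
  have harg : z.arg ≠ Real.pi := fun h ↦ (Complex.arg_eq_pi_iff.1 h).1.not_ge hz
  simp [stableLaplace, ← Complex.exp_conj, Complex.conj_cpow z (Y : ℂ) harg]

theorem continuous_stableLaplace_vertical (hY : 0 < Y) {l : ℝ} (hl : 0 ≤ l) :
    Continuous fun u : ℝ ↦ stableLaplace K Y (l - u * Complex.I) :=
  (continuousOn_stableLaplace hY).comp_continuous (by fun_prop) fun u ↦ by simpa using hl

theorem exists_norm_stableLaplace_le (hK : 0 < K) (hY : Y ∈ Ioo (1 : ℝ) 2) {L : ℝ} (hL : 0 ≤ L) :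
    ∃ A, ∃ c > 0, ∀ z : ℂ, z.re ∈ Icc 0 L →
      ‖stableLaplace K Y z‖ ≤ Real.exp (A - c * |z.im|) := by
  have hY₁ : 1 ≤ Y := hY.1.le
  have hcos := cos_pi_mul_div_two_neg hY
  have hc : 0 < -(K * Real.cos (Real.pi * Y / 2)) / 2 := by
    have := mul_neg_of_pos_of_neg hK hcos
    linarith
  obtain ⟨A, hA⟩ := exists_mul_rpow_sub_one_le hY₁
    (b := K * (Y * Real.pi / 2 * L)) (by have := Real.pi_pos; positivity) hc
  set c := -(K * Real.cos (Real.pi * Y / 2)) / 2 with hc_def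
  refine ⟨c + A, c, hc, fun z ⟨hz₀, hzL⟩ ↦ ?_⟩
  rw [stableLaplace, Complex.norm_exp, Complex.re_ofReal_mul, Real.exp_le_exp]
  calc K * (z ^ (Y : ℂ)).re
      ≤ K * (Real.cos (Real.pi * Y / 2) * ‖z‖ ^ Y
          + Y * Real.pi / 2 * L * ‖z‖ ^ (Y - 1)) := by
        gcongr
        refine (re_cpow_le_of_re_nonneg (by linarith) hz₀).trans ?_
        gcongr
    _ = -(2 * c) * ‖z‖ ^ Y + K * (Y * Real.pi / 2 * L) * ‖z‖ ^ (Y - 1) := by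
        rw [hc_def]
        ring
    _ ≤ A - c * ‖z‖ ^ Y := by linarith [hA ‖z‖ (norm_nonneg z)]
    _ ≤ A - c * (|z.im| - 1) := by
        gcongr
        linarith [self_le_one_add_rpow hY₁ (norm_nonneg z), Complex.abs_im_le_norm z]
    _ = c + A - c * |z.im| := by ring

theorem integrable_exp_neg_mul_abs {c : ℝ} (hc : 0 < c) :
    Integrable fun u : ℝ ↦ Real.exp (-c * |u|) := by
  have hneg : IntegrableOn (fun u : ℝ ↦ Real.exp (-c * |u|)) (Iic 0) :=
    (integrableOn_exp_mul_Iic hc 0).congr_fun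
      (fun u hu ↦ by simp [abs_of_nonpos (mem_Iic.1 hu)]) measurableSet_Iic
  have hpos : IntegrableOn (fun u : ℝ ↦ Real.exp (-c * |u|)) (Ioi 0) :=
    (exp_neg_integrableOn_Ioi 0 hc).congr_fun
      (fun u hu ↦ by simp [abs_of_pos (mem_Ioi.1 hu)]) measurableSet_Ioi
  simpa [Iic_union_Ioi] using hneg.union hpos

theorem integrable_stableLaplace_vertical (hK : 0 < K) (hY : Y ∈ Ioo (1 : ℝ) 2) {l : ℝ}
    (hl : 0 ≤ l) : Integrable fun u : ℝ ↦ stableLaplace K Y (l - u * Complex.I) := by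
  obtain ⟨A, c, hc, h⟩ := exists_norm_stableLaplace_le hK hY hl
  refine ((integrable_exp_neg_mul_abs hc).const_mul (Real.exp A)).mono'
    (continuous_stableLaplace_vertical (by linarith [hY.1]) hl).aestronglyMeasurable
    (ae_of_all _ fun u ↦ ?_)
  simpa [sub_eq_add_neg, Real.exp_add] using h (l - u * Complex.I) (by simpa using hl)

/-- The integrand `u ↦ exp (z x) * E exp (-z X)`, `z = l - i u`, of the Laplace inversion formula
for the one-sided stable law along the vertical line of abscissa `l`. -/
noncomputable def laplaceInversionIntegrand (K Y l x u : ℝ) : ℂ :=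
  Complex.exp ((l - u * Complex.I) * x) * stableLaplace K Y (l - u * Complex.I)

theorem norm_laplaceInversionIntegrand (K Y l x u : ℝ) :
    ‖laplaceInversionIntegrand K Y l x u‖ =
      Real.exp (l * x) * ‖stableLaplace K Y (l - u * Complex.I)‖ := by
  simp [laplaceInversionIntegrand, Complex.norm_exp]

theorem integrable_laplaceInversionIntegrand (hK : 0 < K) (hY : Y ∈ Ioo (1 : ℝ) 2) {l : ℝ}
    (hl : 0 ≤ l) (x : ℝ) : Integrable (laplaceInversionIntegrand K Y l x) :=
  (integrable_stableLaplace_vertical hK hY hl).bdd_mul (c := Real.exp (l * x)) (by fun_prop)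
    (ae_of_all _ fun u ↦ by simp [Complex.norm_exp])

theorem laplaceInversionIntegrand_neg {l : ℝ} (hl : 0 ≤ l) (x u : ℝ) :
    laplaceInversionIntegrand K Y l x (-u) =
      starRingEnd ℂ (laplaceInversionIntegrand K Y l x u) := by
  have hconj : ((l : ℂ) - ((-u : ℝ) : ℂ) * Complex.I) = starRingEnd ℂ (l - u * Complex.I) := by
    simp
  simp only [laplaceInversionIntegrand, hconj, map_mul, ← Complex.exp_conj, Complex.conj_ofReal,
    stableLaplace_conj (z := l - u * Complex.I) (by simpa using hl)]

theorem integral_laplaceInversionIntegrand_eq_zero_line (hK : 0 < K) (hY : Y ∈ Ioo (1 : ℝ) 2)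
    {l : ℝ} (hl : 0 ≤ l) (x : ℝ) :
    ∫ u, laplaceInversionIntegrand K Y l x u = ∫ u, laplaceInversionIntegrand K Y 0 x u := by
  obtain ⟨A, c, hc, hbound⟩ := exists_norm_stableLaplace_le hK hY hl
  let g (ζ : ℂ) := Complex.exp (-Complex.I * ζ * x) * stableLaplace K Y (-Complex.I * ζ)
  have hrot (u y : ℝ) : -Complex.I * (u + y * Complex.I) = y - u * Complex.I := by
    linear_combination (-(y : ℂ)) * Complex.I_mul_I
  have hg (u y : ℝ) : g (u + y * Complex.I) = laplaceInversionIntegrand K Y y x u := by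
    simp only [g, hrot, laplaceInversionIntegrand]
  have hlim {F : Filter ℝ} (hF : Tendsto (fun u : ℝ ↦ |u|) F atTop) :
      Tendsto (fun u ↦ Real.exp (l * |x|) * Real.exp (A - c * |u|)) F (𝓝 0) := by
    have h := tendsto_atBot_add_const_left F A (hF.const_mul_atTop_of_neg (neg_neg_of_pos hc))
    simpa [sub_eq_add_neg] using (Real.tendsto_exp_atBot.comp h).const_mul (Real.exp (l * |x|))
  have shift := integral_horizontal_eq_of_tendsto_zero (g := g) hl
    (ContinuousOn.mul (by fun_prop) ((continuousOn_stableLaplace (by linarith [hY.1])).comp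
      (by fun_prop) fun z hz ↦ by simpa using hz.1))
    (DifferentiableOn.mul (by fun_prop) fun z hz ↦ ((differentiableAt_stableLaplace
      (z := -Complex.I * z) (by simpa using hz.1)).comp z (by fun_prop)).differentiableWithinAt)
    (by simpa only [hg] using integrable_laplaceInversionIntegrand hK hY le_rfl x)
    (by simpa only [hg] using integrable_laplaceInversionIntegrand hK hY hl x)
    (B := fun u ↦ Real.exp (l * |x|) * Real.exp (A - c * |u|)) (fun u y hy ↦ ?_)
    (hlim tendsto_abs_atTop_atTop) (hlim tendsto_abs_atBot_atTop)
  · simpa only [hg] using shift.symm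
  · rw [hg, norm_laplaceInversionIntegrand]
    gcongr ?_ * ?_
    · rw [Real.exp_le_exp]
      exact (mul_le_mul_of_nonneg_left (le_abs_self x) hy.1).trans
        (mul_le_mul_of_nonneg_right hy.2 (abs_nonneg x))
    · simpa using hbound (y - u * Complex.I) (by simpa using hy)

end Laplace

section Density

variable {K Y : ℝ}

theorem integral_eq_two_mul_re_integral_Ioi {f : ℝ → ℂ} (hf : Integrable f)
    (hneg : ∀ x, f (-x) = starRingEnd ℂ (f x)) :
    ∫ x, f x = ((2 * (∫ x in Ioi 0, f x).re : ℝ) : ℂ) := by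
  have hre (x : ℝ) : (f x).re = (f |x|).re := by
    rcases abs_choice x with h | h <;> simp [h, hneg]
  have hreal : starRingEnd ℂ (∫ x, f x) = ∫ x, f x := by
    rw [← integral_conj, ← integral_neg_eq_self f]
    exact integral_congr_ae (.of_forall fun x ↦ (hneg x).symm)
  rw [← Complex.conj_eq_iff_re.1 hreal, Complex.ofReal_inj]
  calc (∫ x, f x).re = ∫ x, (f |x|).re := by
        simp_rw [← hre]
        exact (integral_re hf).symm
    _ = 2 * ∫ x in Ioi 0, (f x).re := integral_comp_abs (f := fun x ↦ (f x).re)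
    _ = 2 * (∫ x in Ioi 0, f x).re := by
        congr 1
        exact integral_re hf.integrableOn

/-- The density of the stable law with Laplace transform `stableLaplace K Y`, given by Laplace
inversion along the imaginary axis, folded onto a half-line. -/
noncomputable def stableDensity (K Y x : ℝ) : ℝ :=
  (∫ u in Ioi 0, laplaceInversionIntegrand K Y 0 x u).re / Real.pi

theorem integral_laplaceInversionIntegrand (hK : 0 < K) (hY : Y ∈ Ioo (1 : ℝ) 2) {l : ℝ}
    (hl : 0 ≤ l) (x : ℝ) :
    ∫ u, laplaceInversionIntegrand K Y l x u = ((2 * Real.pi * stableDensity K Y x : ℝ) : ℂ) := by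
  rw [integral_laplaceInversionIntegrand_eq_zero_line hK hY hl x,
    integral_eq_two_mul_re_integral_Ioi (integrable_laplaceInversionIntegrand hK hY le_rfl x)
      (laplaceInversionIntegrand_neg le_rfl x), stableDensity]
  congr 1
  field_simp

theorem exists_abs_stableDensity_le_exp (hK : 0 < K) (hY : Y ∈ Ioo (1 : ℝ) 2) {l : ℝ}
    (hl : 0 ≤ l) : ∃ D, 0 ≤ D ∧ ∀ x, |stableDensity K Y x| ≤ D * Real.exp (l * x) := by
  refine ⟨(∫ u : ℝ, ‖stableLaplace K Y (l - u * Complex.I)‖) / (2 * Real.pi),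
    div_nonneg (integral_nonneg fun u ↦ norm_nonneg _) Real.two_pi_pos.le, fun x ↦ ?_⟩
  have hnorm : ‖((2 * Real.pi * stableDensity K Y x : ℝ) : ℂ)‖ ≤
      Real.exp (l * x) * ∫ u : ℝ, ‖stableLaplace K Y (l - u * Complex.I)‖ := by
    rw [← integral_laplaceInversionIntegrand hK hY hl x, ← integral_const_mul]
    simpa only [norm_laplaceInversionIntegrand] using norm_integral_le_integral_norm
      (laplaceInversionIntegrand K Y l x)
  rw [Complex.norm_real, Real.norm_eq_abs, abs_mul, abs_of_pos Real.two_pi_pos] at hnorm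
  rw [div_mul_eq_mul_div, le_div_iff₀ Real.two_pi_pos]
  linarith

theorem continuous_stableDensity (hK : 0 < K) (hY : Y ∈ Ioo (1 : ℝ) 2) :
    Continuous (stableDensity K Y) := by
  have hcont : Continuous fun x ↦ ∫ u in Ioi 0, laplaceInversionIntegrand K Y 0 x u := by
    refine continuous_of_dominated
      (bound := fun u ↦ ‖stableLaplace K Y ((0 : ℝ) - u * Complex.I)‖) (fun x ↦ ?_)
      (fun x ↦ ae_of_all _ fun u ↦ ?_) ?_ (ae_of_all _ fun u ↦ ?_)
    · exact (integrable_laplaceInversionIntegrand hK hY le_rfl x).aestronglyMeasurable.restrict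
    · simp [norm_laplaceInversionIntegrand]
    · exact (integrable_stableLaplace_vertical hK hY le_rfl).norm.integrableOn
    · unfold laplaceInversionIntegrand
      fun_prop
  exact (Complex.continuous_re.comp hcont).div_const _

end Density

section Ray

variable {K Y x s A c : ℝ}

/-- The differential form `z ^ (s - 1) * exp (x z + K z ^ Y) dz` on the ray `z = r exp (i θ)`.
The angle `θ` is not reduced modulo `2π`, so the powers are those of the Riemann surface of the
logarithm and no branch cut interferes with rotating the ray. -/
noncomputable def stableRay (K Y x s θ r : ℝ) : ℂ :=
  Complex.exp (s * θ * Complex.I) * (r ^ (s - 1) : ℝ) *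
    Complex.exp (x * r * Complex.exp (θ * Complex.I) +
      K * (r ^ Y : ℝ) * Complex.exp (Y * θ * Complex.I))

theorem norm_stableRay {r : ℝ} (hr : 0 ≤ r) (θ : ℝ) :
    ‖stableRay K Y x s θ r‖ =
      r ^ (s - 1) * Real.exp (x * r * Real.cos θ + K * r ^ Y * Real.cos (Y * θ)) := by
  have h₁ : ‖Complex.exp (s * θ * Complex.I)‖ = 1 := mod_cast Complex.norm_exp_ofReal_mul_I (s * θ)
  have h₂ : (Complex.exp (Y * θ * Complex.I)).re = Real.cos (Y * θ) := mod_cast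
    Complex.exp_ofReal_mul_I_re (Y * θ)
  have h₃ : (x * r * Complex.exp (θ * Complex.I) +
      K * (r ^ Y : ℝ) * Complex.exp (Y * θ * Complex.I)).re =
      x * r * Real.cos θ + K * r ^ Y * Real.cos (Y * θ) := by
    rw [← Complex.ofReal_mul, ← Complex.ofReal_mul, Complex.add_re, Complex.re_ofReal_mul,
      Complex.re_ofReal_mul, Complex.exp_ofReal_mul_I_re, h₂]
  rw [stableRay, norm_mul, norm_mul, h₁, one_mul, Complex.norm_exp, h₃, Complex.norm_real,
    Real.norm_of_nonneg (Real.rpow_nonneg hr _)]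

theorem norm_stableRay_le {θ r : ℝ} (hr : 0 ≤ r)
    (h : x * r * Real.cos θ + K * r ^ Y * Real.cos (Y * θ) ≤ A - c * r) :
    ‖stableRay K Y x s θ r‖ ≤ Real.exp A * (r ^ (s - 1) * Real.exp (-c * r)) := by
  rw [norm_stableRay hr, mul_left_comm, ← Real.exp_add]
  exact mul_le_mul_of_nonneg_left (Real.exp_le_exp.2 (by linarith)) (Real.rpow_nonneg hr _)

theorem integrableOn_stableRay (hs : 0 < s) (hc : 0 < c) {θ : ℝ}
    (h : ∀ r, 0 < r → x * r * Real.cos θ + K * r ^ Y * Real.cos (Y * θ) ≤ A - c * r) :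
    IntegrableOn (stableRay K Y x s θ) (Ioi 0) := by
  have hdom := (integrableOn_rpow_mul_exp_neg_mul_rpow (s := s - 1) (by linarith) one_pos
    hc).const_mul (Real.exp A)
  simp only [Real.rpow_one] at hdom
  refine hdom.mono' ?_ (ae_restrict_of_forall_mem measurableSet_Ioi fun r hr ↦
    norm_stableRay_le (mem_Ioi.1 hr).le (h r hr))
  unfold stableRay
  exact Measurable.aestronglyMeasurable (by fun_prop)

theorem integral_stableRay_eq_of_angle_le (hs : 0 < s) (hc : 0 < c) {a b : ℝ} (hab : a ≤ b)
    (h : ∀ θ ∈ Icc a b, ∀ r, 0 < r →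
      x * r * Real.cos θ + K * r ^ Y * Real.cos (Y * θ) ≤ A - c * r) :
    ∫ r in Ioi 0, stableRay K Y x s a r = ∫ r in Ioi 0, stableRay K Y x s b r := by
  let g (ζ : ℂ) := Complex.exp (s * ζ + (x * Complex.exp ζ + K * Complex.exp (Y * ζ)))
  have hg (θ ρ : ℝ) :
      g (ρ + θ * Complex.I) = Real.exp ρ • stableRay K Y x s θ (Real.exp ρ) := by
    simp only [g, stableRay, ← Real.exp_mul, Complex.real_smul, Complex.ofReal_exp, mul_add,
      Complex.exp_add, ← mul_assoc]
    rw [show Complex.exp (s * ρ) = Complex.exp ρ * Complex.exp ((ρ * (s - 1) : ℝ) : ℂ) by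
      rw [← Complex.exp_add]
      push_cast
      ring_nf]
    push_cast
    ring_nf
  let B (r : ℝ) := Real.exp A * (r ^ s * Real.exp (-c * r))
  have hB_top : Tendsto B atTop (𝓝 0) := by
    simpa [B] using (tendsto_rpow_mul_exp_neg_mul_atTop_nhds_zero s c hc).const_mul (Real.exp A)
  have hB_zero : Tendsto B (𝓝[>] 0) (𝓝 0) := by
    have hcont : ContinuousAt B 0 := by
      refine continuousAt_const.mul (.mul ?_ (by fun_prop))
      exact Real.continuousAt_rpow_const 0 s (.inr hs.le)
    simpa [B, Real.zero_rpow hs.ne'] using hcont.tendsto.mono_left nhdsWithin_le_nhds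
  have hint {θ : ℝ} (hθ : θ ∈ Icc a b) : Integrable fun ρ : ℝ ↦ g (ρ + θ * Complex.I) := by
    simpa only [hg] using (integrable_exp_smul_comp_exp_iff _).2
      (integrableOn_stableRay hs hc (h θ hθ))
  have shift := integral_horizontal_eq_of_tendsto_zero (g := g) hab (by fun_prop) (by fun_prop)
    (hint (left_mem_Icc.2 hab)) (hint (right_mem_Icc.2 hab)) (B := B ∘ Real.exp) (fun ρ θ hθ ↦ ?_)
    (hB_top.comp Real.tendsto_exp_atTop) (hB_zero.comp Real.tendsto_exp_atBot_nhdsGT)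
  · simpa only [hg, integral_exp_smul_comp_exp] using shift
  · have hexp := Real.exp_pos ρ
    rw [hg, norm_smul, Real.norm_of_nonneg hexp.le, Function.comp_apply]
    calc Real.exp ρ * ‖stableRay K Y x s θ (Real.exp ρ)‖
        ≤ Real.exp ρ * (Real.exp A * (Real.exp ρ ^ (s - 1) * Real.exp (-c * Real.exp ρ))) := by
          gcongr
          exact norm_stableRay_le hexp.le (h θ hθ _ hexp)
      _ = B (Real.exp ρ) := by
          simp only [B, Real.rpow_sub_one hexp.ne']
          field_simp

end Ray

section Tail

variable {K Y x s : ℝ}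

theorem ofReal_mul_I_cpow {r : ℝ} (hr : 0 < r) (Y : ℝ) :
    ((r : ℂ) * Complex.I) ^ (Y : ℂ) =
      (r ^ Y : ℝ) * Complex.exp ((Real.pi * Y / 2 : ℝ) * Complex.I) := by
  rw [Complex.cpow_def_of_ne_zero (mul_ne_zero (by simpa using hr.ne') Complex.I_ne_zero),
    Complex.log_ofReal_mul hr Complex.I_ne_zero, Complex.log_I, Real.rpow_def_of_pos hr,
    Complex.ofReal_exp, ← Complex.exp_add]
  push_cast
  ring_nf

theorem integral_stableRay_pi_div_two :
    ∫ r in Ioi 0, stableRay K Y x 1 (Real.pi / 2) r =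
      Complex.I * starRingEnd ℂ (∫ u in Ioi 0, laplaceInversionIntegrand K Y 0 x u) := by
  rw [← integral_conj, ← integral_const_mul]
  refine setIntegral_congr_fun measurableSet_Ioi fun r hr ↦ ?_
  have hz : ((0 : ℝ) : ℂ) - ((-r : ℝ) : ℂ) * Complex.I = r * Complex.I := by
    push_cast
    ring
  rw [← laplaceInversionIntegrand_neg le_rfl, laplaceInversionIntegrand, stableLaplace, hz,
    ofReal_mul_I_cpow hr, ← Complex.exp_add, stableRay]
  push_cast
  rw [one_mul, Complex.exp_pi_div_two_mul_I]
  simp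
  ring_nf

theorem stableDensity_eq_im_integral_stableRay (hK : 0 < K) (hY : Y ∈ Ioo (1 : ℝ) 2) (hx : 0 ≤ x) :
    stableDensity K Y x =
      (∫ r in Ioi 0, stableRay K Y x 1 (Real.pi / Y) r).im / Real.pi := by
  have hY₀ : 0 < Y := by linarith [hY.1]
  have hcos := cos_pi_mul_div_two_neg hY
  have hpi := Real.pi_pos
  have hdecay (θ : ℝ) (hθ : θ ∈ Icc (Real.pi / 2) (Real.pi / Y)) (r : ℝ) (hr : 0 < r) :
      x * r * Real.cos θ + K * r ^ Y * Real.cos (Y * θ) ≤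
        -(K * Real.cos (Real.pi * Y / 2)) - -(K * Real.cos (Real.pi * Y / 2)) * r := by
    have hYθ : Y * θ ≤ Real.pi := by
      have := (le_div_iff₀ hY₀).1 hθ.2
      linarith
    have hcosθ : Real.cos θ ≤ 0 :=
      Real.cos_nonpos_of_pi_div_two_le_of_le hθ.1 (by nlinarith [hθ.1, hY.1])
    have hcosYθ : Real.cos (Y * θ) ≤ Real.cos (Real.pi * Y / 2) :=
      Real.cos_le_cos_of_nonneg_of_le_pi (by positivity) hYθ (by nlinarith [hθ.1])
    have hrY : r ≤ 1 + r ^ Y := self_le_one_add_rpow hY.1.le hr.le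
    have h₁ : x * r * Real.cos θ ≤ 0 := mul_nonpos_of_nonneg_of_nonpos (by positivity) hcosθ
    have h₂ : K * r ^ Y * Real.cos (Y * θ) ≤ K * r ^ Y * Real.cos (Real.pi * Y / 2) := by
      gcongr
    have h₃ := mul_le_mul_of_nonpos_left hrY (mul_neg_of_pos_of_neg hK hcos).le
    linarith
  have hangle : Real.pi / 2 ≤ Real.pi / Y := by
    gcongr
    exact hY.2.le
  rw [← integral_stableRay_eq_of_angle_le one_pos
    (neg_pos.2 (mul_neg_of_pos_of_neg hK hcos)) hangle hdecay, integral_stableRay_pi_div_two]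
  simp [stableDensity]

theorem integral_stableRay_zero {β : ℝ} (hs : 0 < s) (hx : 0 < x) (hβ : Real.pi / 2 < β)
    (hβ' : β ≤ Real.pi) :
    ∫ r in Ioi 0, stableRay 0 Y x s β r =
      Complex.exp (s * Real.pi * Complex.I) * (Real.Gamma s * x ^ (-s) : ℝ) := by
  have hcos : Real.cos β < 0 := Real.cos_neg_of_pi_div_two_lt_of_lt hβ (by linarith)
  rw [integral_stableRay_eq_of_angle_le (A := 0) hs (mul_pos hx (neg_pos.2 hcos)) hβ'
    fun θ hθ r hr ↦ ?_]
  · have heval (r : ℝ) : stableRay 0 Y x s Real.pi r =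
        Complex.exp (s * Real.pi * Complex.I) * ((r ^ (s - 1) * Real.exp (-(x * r)) : ℝ) : ℂ) := by
      simp [stableRay, mul_assoc]
    simp_rw [heval]
    rw [integral_const_mul, integral_complex_ofReal, Real.integral_rpow_mul_exp_neg_mul_Ioi hs hx,
      one_div, Real.inv_rpow hx.le, ← Real.rpow_neg hx.le, mul_comm (x ^ (-s))]
  · have : Real.cos θ ≤ Real.cos β := Real.cos_le_cos_of_nonneg_of_le_pi
      (by linarith [Real.pi_pos]) hθ.2 hθ.1
    have := mul_le_mul_of_nonneg_left this (mul_pos hx hr).le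
    linarith

theorem exp_neg_sub_one_add_nonneg (x : ℝ) : 0 ≤ Real.exp (-x) - 1 + x := by
  linarith [Real.add_one_le_exp (-x)]

theorem abs_exp_neg_sub_one_add_le {y : ℝ} (hy : 0 ≤ y) :
    |Real.exp (-y) - 1 + y| ≤ y ^ 2 / 2 := by
  rw [abs_of_nonneg (exp_neg_sub_one_add_nonneg y)]
  have hexp : Real.exp (-y) * (1 + y + y ^ 2 / 2) ≤ 1 := by
    calc Real.exp (-y) * (1 + y + y ^ 2 / 2) ≤ Real.exp (-y) * Real.exp y := by
          gcongr
          exact Real.quadratic_le_exp_of_nonneg hy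
      _ = 1 := by rw [← Real.exp_add, neg_add_cancel, Real.exp_zero]
  have hpoly : 1 ≤ (1 - y + y ^ 2 / 2) * (1 + y + y ^ 2 / 2) := by nlinarith [sq_nonneg (y ^ 2)]
  linarith [le_of_mul_le_mul_right (hexp.trans hpoly) (by positivity)]

theorem norm_stableRay_sub_le (hK : 0 ≤ K) (hY : Y ≠ 0) {r : ℝ} (hr : 0 < r) :
    ‖stableRay K Y x 1 (Real.pi / Y) r - stableRay 0 Y x 1 (Real.pi / Y) r
        - K * stableRay 0 Y x (Y + 1) (Real.pi / Y) r‖ ≤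
      K ^ 2 / 2 * (r ^ (2 * Y + 1 - 1) * Real.exp (-(x * -Real.cos (Real.pi / Y) * r))) := by
  have hpi : Complex.exp (Y * (Real.pi / Y : ℝ) * Complex.I) = -1 := by
    rw [← Complex.ofReal_mul, mul_div_cancel₀ _ hY, Complex.exp_pi_mul_I]
  have hfactor : stableRay K Y x 1 (Real.pi / Y) r - stableRay 0 Y x 1 (Real.pi / Y) r
        - K * stableRay 0 Y x (Y + 1) (Real.pi / Y) r =
      stableRay 0 Y x 1 (Real.pi / Y) r *
        ((Real.exp (-(K * r ^ Y)) - 1 + K * r ^ Y : ℝ) : ℂ) := by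
    have hpi' : Complex.exp (((Y + 1 : ℝ) : ℂ) * (Real.pi / Y : ℝ) * Complex.I) =
        -Complex.exp (((1 : ℝ) : ℂ) * (Real.pi / Y : ℝ) * Complex.I) := by
      rw [Complex.ofReal_add, add_mul, add_mul, Complex.exp_add, hpi, neg_one_mul]
    simp only [stableRay, hpi, hpi', sub_self, add_sub_cancel_right, Real.rpow_zero,
      Complex.exp_add]
    push_cast
    rw [mul_neg_one, zero_mul, zero_mul, Complex.exp_zero]
    ring
  have hpow : (K * r ^ Y) ^ 2 / 2 = K ^ 2 / 2 * r ^ (2 * Y + 1 - 1) := by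
    rw [add_sub_cancel_right, mul_comm 2 Y, Real.rpow_mul hr.le, mul_pow, Real.rpow_two]
    ring
  rw [hfactor, norm_mul, Complex.norm_real, Real.norm_eq_abs, norm_stableRay hr.le]
  calc r ^ ((1 : ℝ) - 1) * Real.exp (x * r * Real.cos (Real.pi / Y)
          + 0 * r ^ Y * Real.cos (Y * (Real.pi / Y))) * |Real.exp (-(K * r ^ Y)) - 1 + K * r ^ Y|
      ≤ r ^ ((1 : ℝ) - 1) * Real.exp (x * r * Real.cos (Real.pi / Y)
          + 0 * r ^ Y * Real.cos (Y * (Real.pi / Y))) * ((K * r ^ Y) ^ 2 / 2) := by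
        gcongr
        exact abs_exp_neg_sub_one_add_le (by positivity)
    _ = _ := by
        rw [hpow, sub_self, Real.rpow_zero, one_mul]
        ring_nf

theorem neg_cos_pi_div_pos (hY : Y ∈ Ioo (1 : ℝ) 2) : 0 < -Real.cos (Real.pi / Y) := by
  have hY₀ : 0 < Y := by linarith [hY.1]
  have hlow : Real.pi / 2 < Real.pi / Y := div_lt_div_of_pos_left Real.pi_pos hY₀ hY.2
  have hupp : Real.pi / Y ≤ Real.pi := div_le_self Real.pi_pos.le hY.1.le
  exact neg_pos.2 (Real.cos_neg_of_pi_div_two_lt_of_lt hlow (by linarith [Real.pi_pos]))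

theorem norm_integral_stableRay_sub_le (hK : 0 ≤ K) (hY : Y ∈ Ioo (1 : ℝ) 2) (hx : 0 < x) :
    ‖∫ r in Ioi 0, (stableRay K Y x 1 (Real.pi / Y) r - stableRay 0 Y x 1 (Real.pi / Y) r
        - K * stableRay 0 Y x (Y + 1) (Real.pi / Y) r)‖ ≤
      K ^ 2 / 2 * (x ^ (-(2 * Y + 1)) * (-Real.cos (Real.pi / Y)) ^ (-(2 * Y + 1)) *
        Real.Gamma (2 * Y + 1)) := by
  have hcos := neg_cos_pi_div_pos hY
  have hY₀ : 0 < Y := by linarith [hY.1]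
  rw [← Real.mul_rpow hx.le hcos.le, Real.rpow_neg (by positivity), ← Real.inv_rpow (by positivity),
    ← one_div, ← Real.integral_rpow_mul_exp_neg_mul_Ioi (by linarith) (mul_pos hx hcos),
    ← integral_const_mul]
  refine norm_integral_le_of_norm_le ?_ (ae_restrict_of_forall_mem measurableSet_Ioi fun r hr ↦
    norm_stableRay_sub_le hK hY₀.ne' hr)
  have hdom := integrableOn_rpow_mul_exp_neg_mul_rpow (p := 1) (s := 2 * Y + 1 - 1)
    (by linarith) one_pos (mul_pos hx hcos)
  simp only [Real.rpow_one, neg_mul] at hdom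
  exact hdom.const_mul _

theorem abs_im_integral_stableRay_sub_le (hK : 0 ≤ K) (hY : Y ∈ Ioo (1 : ℝ) 2) (hx : 0 < x) :
    |(∫ r in Ioi 0, stableRay K Y x 1 (Real.pi / Y) r).im
        + K * Real.Gamma (Y + 1) * Real.sin (Real.pi * Y) * x ^ (-(Y + 1))| ≤
      K ^ 2 / 2 * (x ^ (-(2 * Y + 1)) * (-Real.cos (Real.pi / Y)) ^ (-(2 * Y + 1)) *
        Real.Gamma (2 * Y + 1)) := by
  have hY₀ : 0 < Y := by linarith [hY.1]
  have hβ : Real.pi / 2 < Real.pi / Y := div_lt_div_of_pos_left Real.pi_pos hY₀ hY.2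
  have hβ' : Real.pi / Y ≤ Real.pi := div_le_self Real.pi_pos.le hY.1.le
  have hx' := mul_pos hx (neg_cos_pi_div_pos hY)
  have hint₀ {s : ℝ} (hs : 0 < s) : IntegrableOn (stableRay 0 Y x s (Real.pi / Y)) (Ioi 0) :=
    integrableOn_stableRay (A := 0) hs hx' fun r _ ↦ by linarith
  have hint₁ : IntegrableOn (stableRay K Y x 1 (Real.pi / Y)) (Ioi 0) := by
    refine integrableOn_stableRay (A := 0) one_pos hx' fun r hr ↦ ?_
    rw [mul_div_cancel₀ _ hY₀.ne', Real.cos_pi]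
    nlinarith [mul_nonneg hK (Real.rpow_nonneg hr.le Y)]
  have hint : IntegrableOn (fun r ↦ stableRay K Y x 1 (Real.pi / Y) r
      - stableRay 0 Y x 1 (Real.pi / Y) r) (Ioi 0) := hint₁.sub (hint₀ one_pos)
  refine le_of_eq_of_le ?_ ((Complex.abs_im_le_norm _).trans
    (norm_integral_stableRay_sub_le hK hY hx))
  have hexp₁ : Complex.exp (((1 : ℝ) : ℂ) * Real.pi * Complex.I) = -1 := by simp
  have hexp₂ : Complex.exp (((Y + 1 : ℝ) : ℂ) * Real.pi * Complex.I) =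
      -Complex.exp ((Real.pi * Y : ℝ) * Complex.I) := by
    rw [← Complex.exp_add_pi_mul_I]
    push_cast
    ring_nf
  rw [integral_sub hint ((hint₀ (by linarith)).const_mul _), integral_sub hint₁ (hint₀ one_pos),
    integral_const_mul, integral_stableRay_zero one_pos hx hβ hβ',
    integral_stableRay_zero (by linarith) hx hβ hβ', hexp₁, hexp₂, Complex.sub_im, Complex.sub_im,
    Complex.im_ofReal_mul, Complex.im_mul_ofReal, Complex.im_mul_ofReal, Complex.neg_im,
    Complex.neg_im, Complex.exp_ofReal_mul_I_im, Complex.one_im]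
  ring_nf

theorem exists_abs_stableDensity_sub_le (hK : 0 < K) (hY : Y ∈ Ioo (1 : ℝ) 2) :
    ∃ B, 0 ≤ B ∧ ∀ x, 0 < x →
      |stableDensity K Y x
          - -(K * Real.Gamma (Y + 1) * Real.sin (Real.pi * Y) / Real.pi) * x ^ (-(Y + 1))| ≤
        B * x ^ (-(2 * Y + 1)) := by
  have hcos := neg_cos_pi_div_pos hY
  have hΓ : 0 < Real.Gamma (2 * Y + 1) := Real.Gamma_pos_of_pos (by linarith [hY.1])
  have hpi := Real.pi_pos
  refine ⟨K ^ 2 / 2 * ((-Real.cos (Real.pi / Y)) ^ (-(2 * Y + 1)) * Real.Gamma (2 * Y + 1))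
    / Real.pi, by positivity, fun x hx ↦ ?_⟩
  rw [stableDensity_eq_im_integral_stableRay hK hY hx.le]
  calc |(∫ r in Ioi 0, stableRay K Y x 1 (Real.pi / Y) r).im / Real.pi
          - -(K * Real.Gamma (Y + 1) * Real.sin (Real.pi * Y) / Real.pi) * x ^ (-(Y + 1))|
      = |(∫ r in Ioi 0, stableRay K Y x 1 (Real.pi / Y) r).im
          + K * Real.Gamma (Y + 1) * Real.sin (Real.pi * Y) * x ^ (-(Y + 1))| / Real.pi := by
        rw [← abs_of_pos hpi, ← abs_div, abs_of_pos hpi]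
        ring_nf
    _ ≤ K ^ 2 / 2 * (x ^ (-(2 * Y + 1)) * (-Real.cos (Real.pi / Y)) ^ (-(2 * Y + 1)) *
          Real.Gamma (2 * Y + 1)) / Real.pi := by
        gcongr
        exact abs_im_integral_stableRay_sub_le hK.le hY hx
    _ = _ := by ring

end Tail

section Moments

variable {K Y l : ℝ}

theorem exists_abs_stableDensity_le_rpow (hK : 0 < K) (hY : Y ∈ Ioo (1 : ℝ) 2) :
    ∃ D, 0 ≤ D ∧ ∀ x, 1 ≤ x → |stableDensity K Y x| ≤ D * x ^ (-(Y + 1)) := by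
  obtain ⟨B, hB, h⟩ := exists_abs_stableDensity_sub_le hK hY
  set a := -(K * Real.Gamma (Y + 1) * Real.sin (Real.pi * Y) / Real.pi)
  refine ⟨B + |a|, by positivity, fun x hx ↦ ?_⟩
  have hx₀ : 0 < x := by linarith
  have hpow : x ^ (-(2 * Y + 1)) ≤ x ^ (-(Y + 1)) :=
    Real.rpow_le_rpow_of_exponent_le hx (by linarith [hY.1])
  calc |stableDensity K Y x|
      ≤ |stableDensity K Y x - a * x ^ (-(Y + 1))| + |a * x ^ (-(Y + 1))| := by
        simpa only [sub_add_cancel] using abs_add_le (stableDensity K Y x - a * x ^ (-(Y + 1)))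
          (a * x ^ (-(Y + 1)))
    _ ≤ B * x ^ (-(Y + 1)) + |a| * x ^ (-(Y + 1)) := by
        rw [abs_mul, abs_of_pos (Real.rpow_pos_of_pos hx₀ _)]
        gcongr
        exact (h x hx₀).trans (by gcongr)
    _ = (B + |a|) * x ^ (-(Y + 1)) := by ring

theorem integrable_mul_stableDensity (hK : 0 < K) (hY : Y ∈ Ioo (1 : ℝ) 2) (hl : 0 ≤ l) {w : ℝ → ℝ}
    (hw : Continuous w) {A B : ℝ} (hleft : ∀ x ≤ 1, |w x| ≤ A * Real.exp (-(l * x)))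
    (hright : ∀ x ≥ 1, |w x| ≤ B * x) :
    Integrable fun x ↦ w x * stableDensity K Y x := by
  have hmeas : Continuous fun x ↦ w x * stableDensity K Y x :=
    hw.mul (continuous_stableDensity hK hY)
  rw [← integrableOn_univ, ← Iic_union_Ioi (a := (1 : ℝ))]
  refine IntegrableOn.union ?_ ?_
  · obtain ⟨D, -, hD⟩ := exists_abs_stableDensity_le_exp hK hY (l := l + 1) (by linarith)
    refine ((integrableOn_exp_mul_Iic one_pos 1).const_mul (A * D)).mono'
      hmeas.aestronglyMeasurable (ae_restrict_of_forall_mem measurableSet_Iic fun x hx ↦ ?_)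
    calc ‖w x * stableDensity K Y x‖ = |w x| * |stableDensity K Y x| := abs_mul _ _
      _ ≤ A * Real.exp (-(l * x)) * (D * Real.exp ((l + 1) * x)) :=
          mul_le_mul (hleft x hx) (hD x) (abs_nonneg _) ((abs_nonneg _).trans (hleft x hx))
      _ = A * D * Real.exp (1 * x) := by
          rw [mul_mul_mul_comm, ← Real.exp_add]
          ring_nf
  · obtain ⟨D, -, hD⟩ := exists_abs_stableDensity_le_rpow hK hY
    refine ((integrableOn_Ioi_rpow_of_lt (a := -Y) (by linarith [hY.1]) one_pos).const_mul
      (B * D)).mono' hmeas.aestronglyMeasurable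
      (ae_restrict_of_forall_mem measurableSet_Ioi fun x hx ↦ ?_)
    have hx : 1 < x := hx
    calc ‖w x * stableDensity K Y x‖ = |w x| * |stableDensity K Y x| := abs_mul _ _
      _ ≤ B * x * (D * x ^ (-(Y + 1))) :=
          mul_le_mul (hright x hx.le) (hD x hx.le) (abs_nonneg _)
            ((abs_nonneg _).trans (hright x hx.le))
      _ = B * D * x ^ (-Y) := by
          rw [show -Y = 1 + -(Y + 1) by ring, Real.rpow_add (by linarith), Real.rpow_one]
          ring

theorem integrable_exp_neg_mul_stableDensity (hK : 0 < K) (hY : Y ∈ Ioo (1 : ℝ) 2) (hl : 0 ≤ l) :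
    Integrable fun x ↦ Real.exp (-(l * x)) * stableDensity K Y x := by
  refine integrable_mul_stableDensity hK hY hl (by fun_prop) (A := 1) (B := 1)
    (fun x _ ↦ ?_) fun x hx ↦ ?_
  · rw [Real.abs_exp, one_mul]
  · rw [Real.abs_exp, one_mul]
    exact (Real.exp_le_one_iff.2 (neg_nonpos.2 (by positivity))).trans hx

theorem integrable_id_mul_stableDensity (hK : 0 < K) (hY : Y ∈ Ioo (1 : ℝ) 2) :
    Integrable fun x ↦ x * stableDensity K Y x := by
  refine integrable_mul_stableDensity hK hY zero_le_one (w := fun x ↦ x) (by fun_prop)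
    (A := Real.exp 2) (B := 1) (fun x hx ↦ ?_) fun x hx ↦ ?_
  · rw [← Real.exp_add, abs_le]
    constructor <;> linarith [Real.add_one_le_exp (2 + -(1 * x))]
  · rw [abs_of_nonneg (by linarith), one_mul]

theorem fourier_stableLaplace_vertical (hK : 0 < K) (hY : Y ∈ Ioo (1 : ℝ) 2) (hl : 0 ≤ l) (x : ℝ) :
    FourierTransform.fourier
        (fun v : ℝ ↦ stableLaplace K Y (l - (2 * Real.pi * v : ℝ) * Complex.I)) x =
      ((Real.exp (-(l * x)) * stableDensity K Y x : ℝ) : ℂ) := by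
  have hintegrand (v : ℝ) :
      Complex.exp (((-2 * Real.pi * v * x : ℝ) : ℂ) * Complex.I) •
        stableLaplace K Y (l - (2 * Real.pi * v : ℝ) * Complex.I) =
      Real.exp (-(l * x)) * laplaceInversionIntegrand K Y l x (2 * Real.pi * v) := by
    rw [laplaceInversionIntegrand, ← mul_assoc, Complex.ofReal_exp, ← Complex.exp_add, smul_eq_mul]
    push_cast
    ring_nf
  rw [Real.fourier_real_eq_integral_exp_smul, integral_congr_ae (ae_of_all _ hintegrand),
    integral_const_mul, Measure.integral_comp_mul_left (laplaceInversionIntegrand K Y l x),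
    integral_laplaceInversionIntegrand hK hY hl, abs_of_pos (by positivity), Complex.real_smul,
    ← Complex.ofReal_mul, inv_mul_cancel_left₀ (by positivity), Complex.ofReal_mul]

theorem integral_stableDensity_mul_exp (hK : 0 < K) (hY : Y ∈ Ioo (1 : ℝ) 2) (hl : 0 ≤ l)
    (u : ℝ) :
    ∫ x, (stableDensity K Y x : ℂ) * Complex.exp (-((l - u * Complex.I) * x)) =
      stableLaplace K Y (l - u * Complex.I) := by
  have hpi : 2 * Real.pi ≠ 0 := by positivity
  have hfourier := funext (fourier_stableLaplace_vertical hK hY hl)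
  have hcont := (continuous_stableLaplace_vertical (K := K) (by linarith [hY.1] : 0 < Y) hl).comp
    (continuous_const_mul (2 * Real.pi))
  have hinv := congrFun (hcont.fourierInv_fourier_eq
    ((integrable_stableLaplace_vertical hK hY hl).comp_mul_left' hpi)
    (hfourier ▸ (integrable_exp_neg_mul_stableDensity hK hY hl).ofReal)) (u / (2 * Real.pi))
  have hval := mul_div_cancel₀ u hpi
  rw [Real.fourierInv_eq'] at hinv
  simp only [Function.comp_def] at hinv
  rw [hfourier, hval] at hinv
  rw [← hinv]
  congr 1 with x
  beta_reduce
  rw [smul_eq_mul, Complex.ofReal_mul (Real.exp _), ← mul_assoc, mul_comm, Complex.ofReal_exp,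
    ← Complex.exp_add, RCLike.inner_apply, conj_trivial]
  have hπ : (Real.pi : ℂ) ≠ 0 := by exact_mod_cast Real.pi_ne_zero
  congr 2
  push_cast
  field_simp
  ring

end Moments

section TailOfDensity

variable {C Y : ℝ}

theorem Gamma_neg_pos (hY : Y ∈ Ioo (1 : ℝ) 2) : 0 < Real.Gamma (-Y) := by
  have h₁ : Real.Gamma (-Y + 1) = -Y * Real.Gamma (-Y) := Real.Gamma_add_one (by linarith [hY.1])
  have h₂ : Real.Gamma (-Y + 1 + 1) = (-Y + 1) * Real.Gamma (-Y + 1) :=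
    Real.Gamma_add_one (by linarith [hY.1])
  have h₃ : 0 < Real.Gamma (-Y + 1 + 1) := Real.Gamma_pos_of_pos (by linarith [hY.2])
  rw [h₂, h₁, ← mul_assoc] at h₃
  exact (pos_iff_pos_of_mul_pos h₃).1 (mul_pos_of_neg_of_neg (by linarith [hY.1])
    (by linarith [hY.1]))

theorem neg_Gamma_mul_sin_div_pi (hY : Y ∈ Ioo (1 : ℝ) 2) :
    -(C * Real.Gamma (-Y) * Real.Gamma (Y + 1) * Real.sin (Real.pi * Y) / Real.pi) = C := by
  have hsin : Real.sin (Real.pi * Y) ≠ 0 := by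
    have : 0 < Real.sin (Real.pi * Y - Real.pi) :=
      Real.sin_pos_of_pos_of_lt_pi (by nlinarith [hY.1, Real.pi_pos])
        (by nlinarith [hY.2, Real.pi_pos])
    rw [Real.sin_sub_pi] at this
    linarith
  have hreflect := Real.Gamma_mul_Gamma_one_sub (-Y)
  rw [mul_neg, Real.sin_neg, sub_neg_eq_add, add_comm 1 Y] at hreflect
  rw [mul_assoc C, hreflect]
  field_simp

theorem exists_abs_integral_Ioi_stableDensity_sub_le (hC : 0 < C) (hY : Y ∈ Ioo (1 : ℝ) 2) :
    ∃ B, 0 ≤ B ∧ ∀ w, 0 < w →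
      |(∫ x in Ioi w, stableDensity (C * Real.Gamma (-Y)) Y x) - C / Y * w ^ (-Y)| ≤
        B * w ^ (-(2 * Y)) := by
  have hY₀ : 0 < Y := by linarith [hY.1]
  have hK : 0 < C * Real.Gamma (-Y) := mul_pos hC (Gamma_neg_pos hY)
  obtain ⟨B, hB, h⟩ := exists_abs_stableDensity_sub_le hK hY
  simp only [neg_Gamma_mul_sin_div_pi hY] at h
  refine ⟨B / (2 * Y), by positivity, fun w hw ↦ ?_⟩
  have hq : Integrable (stableDensity (C * Real.Gamma (-Y)) Y) := by
    simpa using integrable_exp_neg_mul_stableDensity hK hY le_rfl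
  have hpow {a : ℝ} (ha : 0 < a) : IntegrableOn (fun x : ℝ ↦ x ^ (-(a + 1))) (Ioi w) :=
    integrableOn_Ioi_rpow_of_lt (by linarith) hw
  have hval {a : ℝ} (ha : 0 < a) (b : ℝ) :
      b / a * w ^ (-a) = ∫ x in Ioi w, b * x ^ (-(a + 1)) := by
    rw [integral_const_mul, integral_Ioi_rpow_of_lt (by linarith) hw, neg_add, neg_add_cancel_right]
    field_simp
  rw [hval hY₀, hval (mul_pos two_pos hY₀), ← integral_sub hq.integrableOn ((hpow hY₀).const_mul C),
    ← Real.norm_eq_abs]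
  exact norm_integral_le_of_norm_le ((hpow (mul_pos two_pos hY₀)).const_mul B)
    (ae_restrict_of_forall_mem measurableSet_Ioi fun x hx ↦ h x (hw.trans hx))

end TailOfDensity

section DensityOfCharFun

variable {E : Type*} [MeasurableSpace E] [NormedAddCommGroup E] [InnerProductSpace ℝ E]

theorem charFun_withDensity_ofReal {μ : Measure E} {f : E → ℝ} (hf : Integrable f μ) (t : E) :
    charFun (μ.withDensity fun x ↦ ENNReal.ofReal (f x)) t =
      ∫ x, max (f x) 0 • Complex.exp (inner ℝ x t * Complex.I) ∂μ := by
  rw [charFun_apply, integral_withDensity_eq_integral_toReal_smul₀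
    hf.aestronglyMeasurable.aemeasurable.ennreal_ofReal (ae_of_all _ fun _ ↦ ENNReal.ofReal_lt_top)]
  simp only [ENNReal.toReal_ofReal']

variable [BorelSpace E] [SecondCountableTopology E]

theorem integrable_exp_inner_mul_I (ν : Measure E) [IsFiniteMeasure ν] (t : E) :
    Integrable (fun x ↦ Complex.exp (inner ℝ x t * Complex.I)) ν :=
  (integrable_const (1 : ℝ)).mono' (by fun_prop) (ae_of_all _ fun x ↦
    (Complex.norm_exp_ofReal_mul_I _).le)

theorem eq_withDensity_ofReal_of_charFun_eq [CompleteSpace E] {μ ν : Measure E} [SigmaFinite μ]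
    [IsFiniteMeasure ν] {f : E → ℝ} (hf : Integrable f μ)
    (h : ∀ t, charFun ν t = ∫ x, f x • Complex.exp (inner ℝ x t * Complex.I) ∂μ) :
    0 ≤ᵐ[μ] f ∧ ν = μ.withDensity fun x ↦ ENNReal.ofReal (f x) := by
  have := isFiniteMeasure_withDensity_ofReal hf.2
  have := isFiniteMeasure_withDensity_ofReal hf.neg.2
  have hexp (t : E) {g : E → ℝ} (hg : Integrable g μ) :
      Integrable (fun x ↦ g x • Complex.exp (inner ℝ x t * Complex.I)) μ :=
    hg.smul_of_top_left (memLp_top_of_bound (C := 1) (by fun_prop) (ae_of_all _ fun x ↦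
      (Complex.norm_exp_ofReal_mul_I _).le))
  have hadd : ν + μ.withDensity (fun x ↦ ENNReal.ofReal ((-f) x)) =
      μ.withDensity fun x ↦ ENNReal.ofReal (f x) := by
    refine Measure.ext_of_charFun (funext fun t ↦ ?_)
    rw [charFun_apply, integral_add_measure (integrable_exp_inner_mul_I _ t)
      (integrable_exp_inner_mul_I _ t), ← charFun_apply, ← charFun_apply, h,
      charFun_withDensity_ofReal hf, charFun_withDensity_ofReal hf.neg,
      ← integral_add (hexp t hf) (hexp t hf.neg.pos_part)]
    refine integral_congr_ae (ae_of_all _ fun x ↦ ?_)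
    simp only [← add_smul, Pi.neg_apply]
    rw [← eq_sub_iff_add_eq.1 (max_zero_sub_max_neg_zero_eq_self (f x)).symm]
  have hneg : (fun x ↦ ENNReal.ofReal ((-f) x)) ≤ᵐ[μ] fun x ↦ ENNReal.ofReal (f x) := by
    refine ae_le_of_forall_setLIntegral_le_of_sigmaFinite₀ (by fun_prop) fun s hs _ ↦ ?_
    rw [← withDensity_apply _ hs, ← withDensity_apply _ hs, ← hadd]
    exact Measure.le_add_left le_rfl s
  have hnonneg : 0 ≤ᵐ[μ] f := by
    filter_upwards [hneg] with x hx
    by_contra hlt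
    rw [Pi.zero_apply, not_le] at hlt
    rw [ENNReal.ofReal_of_nonpos hlt.le, nonpos_iff_eq_zero, ENNReal.ofReal_eq_zero] at hx
    linarith [show (-f) x = -f x from rfl]
  refine ⟨hnonneg, ?_⟩
  rw [← hadd, withDensity_eq_zero_iff (by fun_prop) |>.2, add_zero]
  filter_upwards [hnonneg] with x hx
  exact ENNReal.ofReal_of_nonpos (neg_nonpos.2 hx)

end DensityOfCharFun

section Stable

variable {Ω : Type*} [MeasurableSpace Ω] {P : Measure Ω} {C Y : ℝ} {X : Ω → ℝ}

/-- `X` follows the centered, totally positively skewed strictly `Y`-stable law with Lévy density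
`C * x ^ (-Y - 1)` on `(0, ∞)`. The characteristic exponent is written as `K * (-i u) ^ Y` with
`K = C * Γ (-Y)`, that is, as the boundary value of the Laplace exponent `K * z ^ Y`. -/
structure IsOneSidedStable (P : Measure Ω) (C Y : ℝ) (X : Ω → ℝ) : Prop where
  measurable : Measurable X
  charFun_map (u : ℝ) :
    charFun (P.map X) u = stableLaplace (C * Real.Gamma (-Y)) Y (-(u * Complex.I))

theorem neg_ofReal_mul_I_cpow (hY : Y ≠ 0) (u : ℝ) :
    (-(u * Complex.I)) ^ (Y : ℂ) = (|u| ^ Y : ℝ) * (Real.cos (Real.pi * Y / 2)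
      - Complex.I * Real.sign u * Real.sin (Real.pi * Y / 2)) := by
  have hpos {v : ℝ} (hv : 0 < v) : ((v : ℂ) * Complex.I) ^ (Y : ℂ) = (v ^ Y : ℝ) *
      (Real.cos (Real.pi * Y / 2) + Real.sin (Real.pi * Y / 2) * Complex.I) := by
    rw [ofReal_mul_I_cpow hv, Complex.exp_mul_I, Complex.ofReal_cos, Complex.ofReal_sin]
  rcases lt_trichotomy u 0 with hu | rfl | hu
  · rw [← neg_mul, ← Complex.ofReal_neg, hpos (neg_pos.2 hu), abs_of_neg hu, Real.sign_of_neg hu]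
    push_cast
    ring
  · simp [hY]
  · have harg : ((u : ℂ) * Complex.I).arg ≠ Real.pi := by
      rw [Complex.arg_real_mul _ hu, Complex.arg_I]
      linarith [Real.pi_pos]
    have hconj := Complex.conj_cpow ((u : ℂ) * Complex.I) Y harg
    rw [Complex.conj_ofReal, map_mul, Complex.conj_ofReal, Complex.conj_I, mul_neg] at hconj
    rw [hconj, hpos hu, abs_of_pos hu, Real.sign_of_pos hu]
    simp only [map_mul, map_add, Complex.conj_ofReal, Complex.conj_I, Complex.ofReal_one]
    ring

theorem isOneSidedStable_of_integral_cexp (hY : Y ≠ 0) (hX : Measurable X)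
    (h : ∀ u : ℝ, (∫ ω, Complex.exp (Complex.I * u * (X ω)) ∂P) =
      Complex.exp (((C * Real.Gamma (-Y) * |u| ^ Y : ℝ) : ℂ) *
        (((Real.cos (Real.pi * Y / 2) : ℝ) : ℂ)
          - Complex.I * ((Real.sign u : ℝ) : ℂ) * ((Real.sin (Real.pi * Y / 2) : ℝ) : ℂ)))) :
    IsOneSidedStable P C Y X where
  measurable := hX
  charFun_map u := by
    rw [charFun_apply_real, integral_map hX.aemeasurable (by fun_prop), stableLaplace,
      neg_ofReal_mul_I_cpow hY, ← mul_assoc, ← Complex.ofReal_mul, ← h]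
    congr 1 with ω
    ring_nf

theorem hasDerivAt_stableLaplace_neg_mul_I (K : ℝ) (hY : 1 < Y) :
    HasDerivAt (fun u : ℝ ↦ stableLaplace K Y (-(u * Complex.I))) 0 0 := by
  have hY₀ : Y ≠ 0 := by linarith
  have hpow : HasDerivAt (fun u : ℝ ↦ (-((u : ℂ) * Complex.I)) ^ (Y : ℂ)) 0 0 := by
    have habs : HasDerivAt (fun u : ℝ ↦ |u| ^ Y) 0 0 := hasDerivAt_abs_rpow 0 hY |>.congr_deriv
      (by simp)
    rw [hasDerivAt_iff_isLittleO] at habs ⊢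
    refine (isBigO_of_le _ fun u ↦ ?_).trans_isLittleO habs
    simp [hY₀, Complex.norm_cpow_real, abs_of_nonneg, Real.rpow_nonneg]
  simpa only [mul_zero, stableLaplace] using (hpow.const_mul (K : ℂ)).cexp

namespace IsOneSidedStable

variable [IsProbabilityMeasure P]

theorem map_eq (h : IsOneSidedStable P C Y X) (hC : 0 < C) (hY : Y ∈ Ioo (1 : ℝ) 2) :
    0 ≤ᵐ[volume] stableDensity (C * Real.Gamma (-Y)) Y ∧
      P.map X =
        volume.withDensity fun x ↦ ENNReal.ofReal (stableDensity (C * Real.Gamma (-Y)) Y x) := by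
  have hK : 0 < C * Real.Gamma (-Y) := mul_pos hC (Gamma_neg_pos hY)
  have := Measure.isProbabilityMeasure_map (μ := P) h.measurable.aemeasurable
  refine eq_withDensity_ofReal_of_charFun_eq
    (by simpa using integrable_exp_neg_mul_stableDensity hK hY le_rfl) fun u ↦ ?_
  have hlap := integral_stableDensity_mul_exp hK hY le_rfl u
  rw [Complex.ofReal_zero, zero_sub] at hlap
  rw [h.charFun_map, ← hlap]
  congr 1 with x
  rw [RCLike.inner_apply, conj_trivial, Complex.real_smul]
  push_cast
  ring_nf

variable {E : Type*} [NormedAddCommGroup E] [NormedSpace ℝ E]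

theorem integrable_comp_iff (h : IsOneSidedStable P C Y X) (hC : 0 < C)
    (hY : Y ∈ Ioo (1 : ℝ) 2) {g : ℝ → E} (hg : Continuous g) :
    Integrable (fun ω ↦ g (X ω)) P ↔
      Integrable fun x ↦ stableDensity (C * Real.Gamma (-Y)) Y x • g x := by
  obtain ⟨hq, hmap⟩ := h.map_eq hC hY
  have hcont := continuous_stableDensity (mul_pos hC (Gamma_neg_pos hY)) hY
  change Integrable (g ∘ X) P ↔ _
  rw [← integrable_map_measure hg.aestronglyMeasurable h.measurable.aemeasurable, hmap,
    integrable_withDensity_iff_integrable_smul' (by fun_prop)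
      (ae_of_all _ fun _ ↦ ENNReal.ofReal_lt_top)]
  refine integrable_congr ?_
  filter_upwards [hq] with x hx
  rw [ENNReal.toReal_ofReal hx]

theorem integral_comp (h : IsOneSidedStable P C Y X) (hC : 0 < C)
    (hY : Y ∈ Ioo (1 : ℝ) 2) {g : ℝ → E} (hg : Continuous g) :
    ∫ ω, g (X ω) ∂P = ∫ x, stableDensity (C * Real.Gamma (-Y)) Y x • g x := by
  obtain ⟨hq, hmap⟩ := h.map_eq hC hY
  have hcont := continuous_stableDensity (mul_pos hC (Gamma_neg_pos hY)) hY
  rw [← integral_map h.measurable.aemeasurable hg.aestronglyMeasurable, hmap,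
    integral_withDensity_eq_integral_toReal_smul (by fun_prop)
      (ae_of_all _ fun _ ↦ ENNReal.ofReal_lt_top)]
  refine integral_congr_ae ?_
  filter_upwards [hq] with x hx
  rw [ENNReal.toReal_ofReal hx]

theorem integrable_exp_neg_mul (h : IsOneSidedStable P C Y X) (hC : 0 < C)
    (hY : Y ∈ Ioo (1 : ℝ) 2) {l : ℝ} (hl : 0 ≤ l) :
    Integrable (fun ω ↦ Real.exp (-(l * X ω))) P := by
  rw [h.integrable_comp_iff hC hY (g := fun x ↦ Real.exp (-(l * x))) (by fun_prop)]
  simp_rw [smul_eq_mul, mul_comm (stableDensity _ _ _)]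
  exact integrable_exp_neg_mul_stableDensity (mul_pos hC (Gamma_neg_pos hY)) hY hl

theorem integral_cexp_neg_mul (h : IsOneSidedStable P C Y X) (hC : 0 < C)
    (hY : Y ∈ Ioo (1 : ℝ) 2) {z : ℂ} (hz : 0 ≤ z.re) :
    ∫ ω, Complex.exp (-(z * X ω)) ∂P = stableLaplace (C * Real.Gamma (-Y)) Y z := by
  have hlap := integral_stableDensity_mul_exp (mul_pos hC (Gamma_neg_pos hY)) hY hz (-z.im)
  rw [Complex.ofReal_neg, neg_mul, sub_neg_eq_add, Complex.re_add_im] at hlap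
  rw [h.integral_comp hC hY (g := fun x ↦ Complex.exp (-(z * x))) (by fun_prop), ← hlap]
  simp_rw [Complex.real_smul]

theorem integrable (h : IsOneSidedStable P C Y X) (hC : 0 < C) (hY : Y ∈ Ioo (1 : ℝ) 2) :
    Integrable X P := by
  rw [h.integrable_comp_iff hC hY (g := fun x ↦ x) (by fun_prop)]
  simp_rw [smul_eq_mul, mul_comm (stableDensity _ _ _)]
  exact integrable_id_mul_stableDensity (mul_pos hC (Gamma_neg_pos hY)) hY

theorem integral_eq_zero (h : IsOneSidedStable P C Y X) (hC : 0 < C) (hY : Y ∈ Ioo (1 : ℝ) 2) :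
    ∫ ω, X ω ∂P = 0 := by
  have := Measure.isProbabilityMeasure_map (μ := P) h.measurable.aemeasurable
  have hint : MemLp id ((1 : ℕ) : ENNReal) (P.map X) := by
    rw [Nat.cast_one, memLp_one_iff_integrable,
      integrable_map_measure (by fun_prop) h.measurable.aemeasurable]
    exact h.integrable hC hY
  have hderiv := iteratedDeriv_charFun_zero hint
  rw [iteratedDeriv_one, funext h.charFun_map, (hasDerivAt_stableLaplace_neg_mul_I _ hY.1).deriv,
    pow_one, eq_comm, mul_eq_zero, or_iff_right Complex.I_ne_zero] at hderiv
  rw [← integral_map h.measurable.aemeasurable (f := fun x ↦ x) (by fun_prop)]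
  simp only [pow_one] at hderiv
  exact_mod_cast hderiv

theorem exists_abs_measureReal_le_sub_le (h : IsOneSidedStable P C Y X) (hC : 0 < C)
    (hY : Y ∈ Ioo (1 : ℝ) 2) :
    ∃ B, 0 ≤ B ∧ ∀ w, 0 < w → |P.real {ω | w ≤ X ω} - C / Y * w ^ (-Y)| ≤ B * w ^ (-(2 * Y)) := by
  obtain ⟨B, hB, hbound⟩ := exists_abs_integral_Ioi_stableDensity_sub_le hC hY
  obtain ⟨hq, hmap⟩ := h.map_eq hC hY
  have hcont := continuous_stableDensity (mul_pos hC (Gamma_neg_pos hY)) hY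
  refine ⟨B, hB, fun w hw ↦ ?_⟩
  have htail : P.real {ω | w ≤ X ω} =
      ∫ x in Ioi w, stableDensity (C * Real.Gamma (-Y)) Y x := by
    rw [show {ω | w ≤ X ω} = X ⁻¹' Ici w from rfl,
      ← map_measureReal_apply h.measurable measurableSet_Ici, hmap, measureReal_def,
      withDensity_apply _ measurableSet_Ici, ← integral_Ici_eq_integral_Ioi,
      integral_eq_lintegral_of_nonneg_ae (ae_restrict_of_ae hq)
        hcont.aestronglyMeasurable.restrict]
  rw [htail]
  exact hbound w hw

end IsOneSidedStable

end Stable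

section Tempering

theorem ofReal_mul_cpow {s Y : ℝ} (hs : 0 < s) (hY : Y ≠ 0) (z : ℂ) :
    (s * z) ^ (Y : ℂ) = (s ^ Y : ℝ) * z ^ (Y : ℂ) := by
  rcases eq_or_ne z 0 with rfl | hz
  · simp [hY]
  · rw [Complex.cpow_def_of_ne_zero (mul_ne_zero (Complex.ofReal_ne_zero.2 hs.ne') hz),
      Complex.log_ofReal_mul hs hz, Complex.cpow_def_of_ne_zero hz, Real.rpow_def_of_pos hs,
      add_mul, Complex.exp_add]
    push_cast
    rfl

/-- The driftless characteristic exponent of the CGMY process: a CGMY process with drift `c` has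
characteristic function `u ↦ exp (t * (i * c * u + cgmyExponent C G M Y u))` at time `t`. -/
noncomputable def cgmyExponent (C G M Y u : ℝ) : ℂ :=
  (C * Real.Gamma (-Y) : ℝ) * ((M - Complex.I * u) ^ (Y : ℂ) + (G + Complex.I * u) ^ (Y : ℂ)
    - (M : ℂ) ^ (Y : ℂ) - (G : ℂ) ^ (Y : ℂ))

variable {Ω : Type*} [MeasurableSpace Ω] {P : Measure Ω} [IsProbabilityMeasure P]
  {C G M Y a b c k s θ : ℝ} {U V : Ω → ℝ}

theorem integrable_exp_neg_add (hC : 0 < C) (hY : Y ∈ Ioo (1 : ℝ) 2)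
    (hU : IsOneSidedStable P C Y U) (hV : IsOneSidedStable P C Y V) (hUV : IndepFun U V P)
    (ha : 0 ≤ a) (hb : 0 ≤ b) :
    Integrable (fun ω ↦ Real.exp (-(a * U ω + b * V ω))) P := by
  simp_rw [neg_add, Real.exp_add]
  exact (hUV.comp (φ := fun x ↦ Real.exp (-(a * x))) (ψ := fun x ↦ Real.exp (-(b * x)))
    (by fun_prop) (by fun_prop)).integrable_mul (hU.integrable_exp_neg_mul hC hY ha)
      (hV.integrable_exp_neg_mul hC hY hb)

theorem integral_cexp_neg_add (hC : 0 < C) (hY : Y ∈ Ioo (1 : ℝ) 2)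
    (hU : IsOneSidedStable P C Y U) (hV : IsOneSidedStable P C Y V) (hUV : IndepFun U V P)
    {z w : ℂ} (hz : 0 ≤ z.re) (hw : 0 ≤ w.re) :
    ∫ ω, Complex.exp (-(z * U ω + w * V ω)) ∂P =
      Complex.exp ((C * Real.Gamma (-Y) : ℝ) * (z ^ (Y : ℂ) + w ^ (Y : ℂ))) := by
  simp_rw [neg_add, Complex.exp_add]
  rw [hUV.integral_fun_comp_mul_comp (f := fun x : ℝ ↦ Complex.exp (-(z * x)))
    (g := fun x : ℝ ↦ Complex.exp (-(w * x))) hU.measurable.aemeasurable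
    hV.measurable.aemeasurable (by fun_prop) (by fun_prop), hU.integral_cexp_neg_mul hC hY hz,
    hV.integral_cexp_neg_mul hC hY hw, stableLaplace, stableLaplace, ← Complex.exp_add, mul_add]

theorem integral_exp_neg_add (hC : 0 < C) (hY : Y ∈ Ioo (1 : ℝ) 2)
    (hU : IsOneSidedStable P C Y U) (hV : IsOneSidedStable P C Y V) (hUV : IndepFun U V P)
    (ha : 0 ≤ a) (hb : 0 ≤ b) :
    ∫ ω, Real.exp (-(a * U ω + b * V ω)) ∂P =
      Real.exp (C * Real.Gamma (-Y) * (a ^ Y + b ^ Y)) := by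
  have h := integral_cexp_neg_add hC hY hU hV hUV (z := a) (w := b) ha hb
  rw [← Complex.ofReal_cpow ha, ← Complex.ofReal_cpow hb] at h
  exact_mod_cast h

theorem integral_cexp_tilted (hC : 0 < C) (hY : Y ∈ Ioo (1 : ℝ) 2)
    (hU : IsOneSidedStable P C Y U) (hV : IsOneSidedStable P C Y V) (hUV : IndepFun U V P)
    (hG : 0 ≤ G) (hM : 0 ≤ M) (hs : 0 < s) (u : ℝ) :
    ∫ ω, Complex.exp (Complex.I * u * (s * (U ω - V ω)))
        ∂P.tilted (fun ω ↦ -(s * M * U ω + s * G * V ω)) =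
      Complex.exp ((s ^ Y : ℝ) * cgmyExponent C G M Y u) := by
  have hY₀ : Y ≠ 0 := by linarith [hY.1]
  have hlap := integral_cexp_neg_add hC hY hU hV hUV (z := s * (M - Complex.I * u))
    (w := s * (G + Complex.I * u))
    (by simpa using mul_nonneg hs.le hM) (by simpa using mul_nonneg hs.le hG)
  rw [integral_tilted, integral_exp_neg_add hC hY hU hV hUV (by positivity) (by positivity)]
  simp_rw [← Real.exp_sub]
  have hsplit (ω : Ω) : Real.exp (-(s * M * U ω + s * G * V ω)
        - C * Real.Gamma (-Y) * ((s * M) ^ Y + (s * G) ^ Y)) •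
          Complex.exp (Complex.I * u * (s * (U ω - V ω))) =
      Complex.exp (-(C * Real.Gamma (-Y) * ((s * M) ^ Y + (s * G) ^ Y) : ℝ)) *
        Complex.exp (-(s * (M - Complex.I * u) * U ω + s * (G + Complex.I * u) * V ω)) := by
    rw [Complex.real_smul, Complex.ofReal_exp, ← Complex.exp_add, ← Complex.exp_add]
    push_cast
    ring_nf
  simp_rw [hsplit]
  rw [integral_const_mul, hlap, ← Complex.exp_add, ofReal_mul_cpow hs hY₀, ofReal_mul_cpow hs hY₀,
    Real.mul_rpow hs.le hM, Real.mul_rpow hs.le hG, cgmyExponent, ← Complex.ofReal_cpow hM,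
    ← Complex.ofReal_cpow hG]
  push_cast
  ring_nf

variable {μ : Measure ℝ} [IsProbabilityMeasure μ]

theorem eq_map_tilted_of_charFun_eq (hC : 0 < C) (hY : Y ∈ Ioo (1 : ℝ) 2)
    (hU : IsOneSidedStable P C Y U) (hV : IsOneSidedStable P C Y V) (hUV : IndepFun U V P)
    (hG : 0 ≤ G) (hM : 0 ≤ M) (hs : 0 < s)
    (hμ : ∀ u : ℝ, charFun μ u =
      Complex.exp ((s ^ Y : ℝ) * (Complex.I * c * u + cgmyExponent C G M Y u))) :
    μ = (P.tilted fun ω ↦ -(s * M * U ω + s * G * V ω)).map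
      fun ω ↦ s * (U ω - V ω) + c * s ^ Y := by
  have := hU.measurable
  have := hV.measurable
  have := isProbabilityMeasure_tilted (integrable_exp_neg_add hC hY hU hV hUV
    (mul_nonneg hs.le hM) (mul_nonneg hs.le hG))
  have hS : Measurable fun ω ↦ s * (U ω - V ω) + c * s ^ Y := by fun_prop
  refine Measure.ext_of_charFun (funext fun u ↦ ?_)
  rw [hμ, charFun_apply_real, integral_map hS.aemeasurable (by fun_prop), mul_add,
    Complex.exp_add, ← integral_cexp_tilted hC hY hU hV hUV hG hM hs u, ← integral_const_mul]
  congr 1 with ω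
  rw [← Complex.exp_add]
  push_cast
  ring_nf

theorem integral_eq_integral_exp_mul (hC : 0 < C) (hY : Y ∈ Ioo (1 : ℝ) 2)
    (hU : IsOneSidedStable P C Y U) (hV : IsOneSidedStable P C Y V) (hUV : IndepFun U V P)
    (hG : 0 ≤ G) (hM : 0 ≤ M) (hs : 0 < s)
    (hμ : ∀ u : ℝ, charFun μ u =
      Complex.exp ((s ^ Y : ℝ) * (Complex.I * c * u + cgmyExponent C G M Y u)))
    {g : ℝ → ℝ} (hg : Continuous g) :
    ∫ x, g x ∂μ = ∫ ω, Real.exp (-(s * M * U ω + s * G * V ω)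
      - C * Real.Gamma (-Y) * (M ^ Y + G ^ Y) * s ^ Y) * g (s * (U ω - V ω) + c * s ^ Y) ∂P := by
  have := hU.measurable
  have := hV.measurable
  rw [eq_map_tilted_of_charFun_eq hC hY hU hV hUV hG hM hs hμ,
    integral_map (by fun_prop) hg.aestronglyMeasurable, integral_tilted,
    integral_exp_neg_add hC hY hU hV hUV (by positivity) (by positivity),
    Real.mul_rpow hs.le hM, Real.mul_rpow hs.le hG]
  congr 1 with ω
  rw [smul_eq_mul, ← Real.exp_sub]
  ring_nf

theorem integrable_exp_neg_add_max (hC : 0 < C) (hY : Y ∈ Ioo (1 : ℝ) 2)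
    (hU : IsOneSidedStable P C Y U) (hV : IsOneSidedStable P C Y V) (hUV : IndepFun U V P)
    (ha : 0 ≤ a) (hb : 0 ≤ b) (hs : 0 ≤ s) (θ : ℝ) :
    Integrable (fun ω ↦ Real.exp (-(s * (a * U ω + b * V ω + max (U ω - V ω + θ) 0)))) P := by
  have := hU.measurable
  have := hV.measurable
  refine (integrable_exp_neg_add hC hY hU hV hUV (mul_nonneg hs ha) (mul_nonneg hs hb)).mono'
    (by fun_prop) (ae_of_all _ fun ω ↦ ?_)
  rw [Real.norm_of_nonneg (Real.exp_pos _).le, Real.exp_le_exp]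
  linarith [mul_nonneg hs (le_max_right (U ω - V ω + θ) 0)]

theorem max_exp_sub_exp_zero (x k : ℝ) :
    max (Real.exp x - Real.exp k) 0 = Real.exp x - Real.exp (x - max (x - k) 0) := by
  rcases le_total k x with h | h
  · rw [max_eq_left (by simpa using h), max_eq_left (by linarith), sub_sub_cancel]
  · rw [max_eq_right (by simpa using h), max_eq_right (by linarith), sub_zero, sub_self]

theorem integral_max_exp_sub_exp_eq (hC : 0 < C) (hY : Y ∈ Ioo (1 : ℝ) 2)
    (hU : IsOneSidedStable P C Y U) (hV : IsOneSidedStable P C Y V) (hUV : IndepFun U V P)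
    (hG : 0 ≤ G) (hM : 1 ≤ M) (hs : 0 < s)
    (hc : c = -C * Real.Gamma (-Y) * ((M - 1) ^ Y + (G + 1) ^ Y - M ^ Y - G ^ Y))
    (hμ : ∀ u : ℝ, charFun μ u =
      Complex.exp ((s ^ Y : ℝ) * (Complex.I * c * u + cgmyExponent C G M Y u)))
    (hθ : s * θ = c * s ^ Y - k) :
    ∫ x, max (Real.exp x - Real.exp k) 0 ∂μ =
      1 - Real.exp (-(C * Real.Gamma (-Y) * ((M - 1) ^ Y + (G + 1) ^ Y) * s ^ Y)) *
        ∫ ω, Real.exp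
          (-(s * ((M - 1) * U ω + (G + 1) * V ω + max (U ω - V ω + θ) 0))) ∂P := by
  have hM₁ : 0 ≤ M - 1 := sub_nonneg.2 hM
  have hG₁ : 0 ≤ G + 1 := by linarith
  set B := C * Real.Gamma (-Y) * ((M - 1) ^ Y + (G + 1) ^ Y) * s ^ Y with hB
  rw [integral_eq_integral_exp_mul hC hY hU hV hUV hG (by linarith) hs hμ
    (g := fun x ↦ max (Real.exp x - Real.exp k) 0) (by fun_prop)]
  have hpoint (ω : Ω) : Real.exp (-(s * M * U ω + s * G * V ω)
        - C * Real.Gamma (-Y) * (M ^ Y + G ^ Y) * s ^ Y) *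
          max (Real.exp (s * (U ω - V ω) + c * s ^ Y) - Real.exp k) 0 =
      Real.exp (-B) * (Real.exp (-(s * (M - 1) * U ω + s * (G + 1) * V ω)) -
        Real.exp (-(s * ((M - 1) * U ω + (G + 1) * V ω + max (U ω - V ω + θ) 0)))) := by
    have hmax : max (s * (U ω - V ω) + c * s ^ Y - k) 0 = s * max (U ω - V ω + θ) 0 := by
      rw [mul_max_of_nonneg _ _ hs.le, mul_zero, mul_add, hθ, add_sub_assoc]
    rw [max_exp_sub_exp_zero, hmax]
    simp only [mul_sub (Real.exp _), ← Real.exp_add]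
    rw [hc, hB]
    ring_nf
  simp_rw [hpoint]
  rw [integral_const_mul, integral_sub
    (integrable_exp_neg_add hC hY hU hV hUV (by positivity) (by positivity))
    (integrable_exp_neg_add_max hC hY hU hV hUV hM₁ hG₁ hs.le θ),
    integral_exp_neg_add hC hY hU hV hUV (by positivity) (by positivity), mul_sub, ← Real.exp_add,
    Real.mul_rpow hs.le hM₁, Real.mul_rpow hs.le hG₁, hB]
  congr 1
  rw [Real.exp_eq_one_iff]
  ring

end Tempering

section CosineIntegrals

theorem hasDerivAt_exp_neg_mul_cos_sub_sin (y u : ℝ) :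
    HasDerivAt (fun u ↦ Real.exp (-(u * y)) * (y * (y * Real.cos u - Real.sin u) / (1 + y ^ 2) - 1))
      ((1 - Real.cos u) * (y * Real.exp (-(u * y)))) u := by
  have hexp : HasDerivAt (fun u ↦ Real.exp (-(u * y))) (Real.exp (-(u * y)) * -(1 * y)) u :=
    ((hasDerivAt_id u).mul_const y).neg.exp
  have htrig : HasDerivAt (fun u ↦ y * (y * Real.cos u - Real.sin u) / (1 + y ^ 2) - 1)
      (y * (y * -Real.sin u - Real.cos u) / (1 + y ^ 2)) u :=
    (((((Real.hasDerivAt_cos u).const_mul y).sub (Real.hasDerivAt_sin u)).const_mul y).div_const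
      _).sub_const 1
  refine (hexp.mul htrig).congr_deriv ?_
  field_simp
  ring

theorem tendsto_exp_neg_mul_cos_sub_sin {y : ℝ} (hy : 0 < y) :
    Tendsto (fun u ↦ Real.exp (-(u * y)) * (y * (y * Real.cos u - Real.sin u) / (1 + y ^ 2) - 1))
      atTop (𝓝 0) := by
  have hexp : Tendsto (fun u ↦ Real.exp (-(u * y))) atTop (𝓝 0) :=
    Real.tendsto_exp_neg_atTop_nhds_zero.comp (tendsto_id.atTop_mul_const hy)
  refine hexp.zero_mul_isBoundedUnder_le ⟨y * (y + 1) / (1 + y ^ 2) + 1, ?_⟩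
  refine eventually_map.2 (Eventually.of_forall fun u ↦ ?_)
  have hnum : |y * (y * Real.cos u - Real.sin u)| ≤ y * (y + 1) := by
    rw [abs_mul, abs_of_pos hy]
    gcongr
    refine (abs_sub _ _).trans (add_le_add ?_ (Real.abs_sin_le_one u))
    rw [abs_mul, abs_of_pos hy]
    exact mul_le_of_le_one_right hy.le (Real.abs_cos_le_one u)
  simp only [Function.comp_apply, Real.norm_eq_abs]
  refine (abs_sub _ _).trans (add_le_add ?_ abs_one.le)
  rw [abs_div, abs_of_pos (by positivity : 0 < 1 + y ^ 2)]
  gcongr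

theorem one_sub_cos_mul_exp_nonneg {y : ℝ} (hy : 0 ≤ y) (u : ℝ) :
    0 ≤ (1 - Real.cos u) * (y * Real.exp (-(u * y))) :=
  mul_nonneg (sub_nonneg.2 (Real.cos_le_one u)) (by positivity)

theorem integrableOn_one_sub_cos_mul_exp {y : ℝ} (hy : 0 < y) :
    IntegrableOn (fun u ↦ (1 - Real.cos u) * (y * Real.exp (-(u * y)))) (Ioi 0) :=
  integrableOn_Ioi_deriv_of_nonneg' (fun u _ ↦ hasDerivAt_exp_neg_mul_cos_sub_sin y u)
    (fun u _ ↦ one_sub_cos_mul_exp_nonneg hy.le u) (tendsto_exp_neg_mul_cos_sub_sin hy)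

theorem integral_one_sub_cos_mul_exp {y : ℝ} (hy : 0 < y) :
    ∫ u in Ioi 0, (1 - Real.cos u) * (y * Real.exp (-(u * y))) = (1 + y ^ 2)⁻¹ := by
  rw [integral_Ioi_of_hasDerivAt_of_nonneg' (fun u _ ↦ hasDerivAt_exp_neg_mul_cos_sub_sin y u)
    (fun u _ ↦ one_sub_cos_mul_exp_nonneg hy.le u) (tendsto_exp_neg_mul_cos_sub_sin hy)]
  simp only [zero_mul, neg_zero, Real.exp_zero, Real.cos_zero, Real.sin_zero]
  field_simp
  ring

theorem integral_mul_exp_neg_mul {u : ℝ} (hu : 0 < u) :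
    ∫ y in Ioi 0, y * Real.exp (-(u * y)) = 1 / u ^ 2 := by
  simpa [show (2 : ℝ) - 1 = 1 by norm_num] using
    Real.integral_rpow_mul_exp_neg_mul_Ioi (a := 2) two_pos hu

theorem integrable_prod_one_sub_cos_mul_exp :
    Integrable (fun p : ℝ × ℝ ↦ (1 - Real.cos p.1) * (p.2 * Real.exp (-(p.1 * p.2))))
      ((volume.restrict (Ioi 0)).prod (volume.restrict (Ioi 0))) := by
  rw [integrable_prod_iff' (Continuous.aestronglyMeasurable (by fun_prop))]
  refine ⟨ae_restrict_of_forall_mem measurableSet_Ioi fun y hy ↦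
    integrableOn_one_sub_cos_mul_exp hy, ?_⟩
  refine integrable_inv_one_add_sq.integrableOn.congr_fun (fun y hy ↦ ?_) measurableSet_Ioi
  simp_rw [Real.norm_of_nonneg (one_sub_cos_mul_exp_nonneg (le_of_lt hy) _)]
  exact (integral_one_sub_cos_mul_exp hy).symm

theorem integrableOn_one_sub_cos_div_sq :
    IntegrableOn (fun u : ℝ ↦ (1 - Real.cos u) / u ^ 2) (Ioi 0) := by
  refine IntegrableOn.congr_fun integrable_prod_one_sub_cos_mul_exp.integral_prod_left
    (fun u hu ↦ ?_) measurableSet_Ioi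
  simp only
  rw [integral_const_mul, integral_mul_exp_neg_mul hu, mul_one_div]

theorem integral_one_sub_cos_div_sq :
    ∫ u in Ioi (0 : ℝ), (1 - Real.cos u) / u ^ 2 = Real.pi / 2 := by
  calc ∫ u in Ioi (0 : ℝ), (1 - Real.cos u) / u ^ 2
      = ∫ u in Ioi 0, ∫ y in Ioi 0, (1 - Real.cos u) * (y * Real.exp (-(u * y))) :=
        setIntegral_congr_fun measurableSet_Ioi fun u hu ↦ by
          rw [integral_const_mul, integral_mul_exp_neg_mul hu, mul_one_div]
    _ = ∫ y in Ioi 0, ∫ u in Ioi 0, (1 - Real.cos u) * (y * Real.exp (-(u * y))) :=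
        integral_integral_swap integrable_prod_one_sub_cos_mul_exp
    _ = ∫ y in Ioi (0 : ℝ), (1 + y ^ 2)⁻¹ :=
        setIntegral_congr_fun measurableSet_Ioi fun y hy ↦ integral_one_sub_cos_mul_exp hy
    _ = Real.pi / 2 := by rw [integral_Ioi_inv_one_add_sq, Real.arctan_zero, sub_zero]

theorem one_sub_cos_mul_div_sq_eq (x u : ℝ) :
    (1 - Real.cos (u * x)) / u ^ 2 = |x| ^ 2 * ((1 - Real.cos (|x| * u)) / (|x| * u) ^ 2) := by
  rcases eq_or_ne x 0 with rfl | hx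
  · simp
  · have hcos : Real.cos (|x| * u) = Real.cos (u * x) := by
      rcases abs_choice x with h | h <;> simp [h, mul_comm]
    rw [hcos, mul_pow, ← mul_div_assoc, mul_div_mul_left _ _ (by positivity : |x| ^ 2 ≠ 0)]

theorem integrableOn_one_sub_cos_mul_div_sq (x : ℝ) :
    IntegrableOn (fun u : ℝ ↦ (1 - Real.cos (u * x)) / u ^ 2) (Ioi 0) := by
  rcases eq_or_ne x 0 with rfl | hx
  · simp
  simp_rw [one_sub_cos_mul_div_sq_eq x]
  refine Integrable.const_mul ?_ _
  have h := integrableOn_Ioi_comp_mul_left_iff (fun u : ℝ ↦ (1 - Real.cos u) / u ^ 2) 0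
    (abs_pos.2 hx)
  rw [mul_zero] at h
  exact h.2 integrableOn_one_sub_cos_div_sq

theorem integral_one_sub_cos_mul_div_sq (x : ℝ) :
    ∫ u in Ioi (0 : ℝ), (1 - Real.cos (u * x)) / u ^ 2 = Real.pi / 2 * |x| := by
  rcases eq_or_ne x 0 with rfl | hx
  · simp
  simp_rw [one_sub_cos_mul_div_sq_eq x]
  rw [integral_const_mul, integral_comp_mul_left_Ioi (fun u : ℝ ↦ (1 - Real.cos u) / u ^ 2) 0
    (abs_pos.2 hx), mul_zero, integral_one_sub_cos_div_sq, smul_eq_mul]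
  field_simp

end CosineIntegrals

section StretchedExponential

variable {p q b : ℝ}

theorem one_sub_exp_neg_mul_rpow_mem_Icc (hb : 0 ≤ b) {u : ℝ} (hu : 0 ≤ u) :
    1 - Real.exp (-b * u ^ p) ∈ Icc 0 (min 1 (b * u ^ p)) := by
  have hle : Real.exp (-b * u ^ p) ≤ 1 :=
    Real.exp_le_one_iff.2 (by simpa using mul_nonneg hb (Real.rpow_nonneg hu p))
  refine ⟨sub_nonneg.2 hle, le_min (sub_le_self _ (Real.exp_pos _).le) ?_⟩
  linarith [Real.add_one_le_exp (-b * u ^ p)]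

theorem norm_one_sub_exp_mul_rpow_neg_le (hb : 0 ≤ b) {u : ℝ} (hu : 0 < u) (r : ℝ) :
    ‖(1 - Real.exp (-b * u ^ p)) * u ^ r‖ ≤ min (u ^ r) (b * u ^ (p + r)) := by
  obtain ⟨h₀, h₁⟩ := one_sub_exp_neg_mul_rpow_mem_Icc (p := p) hb hu.le
  rw [Real.norm_of_nonneg (by positivity), Real.rpow_add hu, ← mul_assoc]
  refine le_min ?_ ?_
  · exact mul_le_of_le_one_left (by positivity) (h₁.trans (min_le_left _ _))
  · gcongr
    exact h₁.trans (min_le_right _ _)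

theorem integrableOn_one_sub_exp_mul_rpow_neg (hq : 1 < q) (hpq : q < p + 1) (hb : 0 ≤ b) :
    IntegrableOn (fun u : ℝ ↦ (1 - Real.exp (-b * u ^ p)) * u ^ (-q)) (Ioi 0) := by
  have hmeas : Measurable fun u : ℝ ↦ (1 - Real.exp (-b * u ^ p)) * u ^ (-q) := by fun_prop
  rw [← Ioc_union_Ioi_eq_Ioi zero_le_one, integrableOn_union]
  constructor
  · refine Integrable.mono' (g := fun u ↦ b * u ^ (p + -q)) (Integrable.const_mul
      (intervalIntegral.intervalIntegrable_rpow' (by linarith)).1 b) hmeas.aestronglyMeasurable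
      (ae_restrict_of_forall_mem measurableSet_Ioc fun u hu ↦ ?_)
    exact (norm_one_sub_exp_mul_rpow_neg_le hb hu.1 _).trans (min_le_right _ _)
  · refine Integrable.mono' (integrableOn_Ioi_rpow_of_lt (by linarith : -q < -1) one_pos)
      hmeas.aestronglyMeasurable (ae_restrict_of_forall_mem measurableSet_Ioi fun u hu ↦ ?_)
    exact (norm_one_sub_exp_mul_rpow_neg_le hb (one_pos.trans hu) _).trans (min_le_left _ _)

theorem tendsto_one_sub_exp_mul_rpow_nhdsGT_zero (hq : q < p + 1) (hb : 0 ≤ b) :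
    Tendsto (fun u : ℝ ↦ (1 - Real.exp (-b * u ^ p)) * u ^ (1 - q)) (𝓝[>] 0) (𝓝 0) := by
  have hpos : 0 < p + (1 - q) := by linarith
  have hlim : Tendsto (fun u : ℝ ↦ b * u ^ (p + (1 - q))) (𝓝[>] 0) (𝓝 0) := by
    simpa [Real.zero_rpow hpos.ne'] using
      ((Real.continuousAt_rpow_const 0 _ (Or.inr hpos.le)).tendsto.const_mul b).mono_left
        nhdsWithin_le_nhds
  refine squeeze_zero_norm' ?_ hlim
  filter_upwards [self_mem_nhdsWithin] with u hu
  exact (norm_one_sub_exp_mul_rpow_neg_le hb hu _).trans (min_le_right _ _)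

theorem tendsto_one_sub_exp_mul_rpow_atTop (hq : 1 < q) (hb : 0 ≤ b) :
    Tendsto (fun u : ℝ ↦ (1 - Real.exp (-b * u ^ p)) * u ^ (1 - q)) atTop (𝓝 0) := by
  have hlim := tendsto_rpow_neg_atTop (sub_pos.2 hq)
  rw [neg_sub] at hlim
  refine squeeze_zero_norm' ?_ hlim
  filter_upwards [Ioi_mem_atTop 0] with u hu
  exact (norm_one_sub_exp_mul_rpow_neg_le hb hu _).trans (min_le_left _ _)

theorem hasDerivAt_one_sub_exp_neg_mul_rpow (b p : ℝ) {u : ℝ} (hu : 0 < u) :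
    HasDerivAt (fun u : ℝ ↦ 1 - Real.exp (-b * u ^ p))
      (b * p * u ^ (p - 1) * Real.exp (-b * u ^ p)) u := by
  refine ((((Real.hasDerivAt_rpow_const (Or.inl hu.ne')).const_mul
    (-b)).exp).const_sub 1).congr_deriv ?_
  ring

theorem hasDerivAt_rpow_one_sub_div (hq : 1 - q ≠ 0) {u : ℝ} (hu : 0 < u) :
    HasDerivAt (fun u : ℝ ↦ u ^ (1 - q) / (1 - q)) (u ^ (-q)) u := by
  refine ((Real.hasDerivAt_rpow_const (Or.inl hu.ne')).div_const _).congr_deriv ?_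
  rw [mul_div_cancel_left₀ _ hq]
  ring_nf

theorem integral_one_sub_exp_mul_rpow_neg (hq : 1 < q) (hpq : q < p + 1) (hb : 0 < b) :
    ∫ u in Ioi (0 : ℝ), (1 - Real.exp (-b * u ^ p)) * u ^ (-q) =
      b ^ ((q - 1) / p) * Real.Gamma (1 - (q - 1) / p) / (q - 1) := by
  have hp : 0 < p := by linarith
  have hq₁ : 1 - q ≠ 0 := by linarith
  have hprod : EqOn (fun u : ℝ ↦ b * p * u ^ (p - 1) * Real.exp (-b * u ^ p) *
      (u ^ (1 - q) / (1 - q))) (fun u ↦ b * p / (1 - q) * (u ^ (p - q) * Real.exp (-b * u ^ p)))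
      (Ioi 0) := fun u hu ↦ by
    simp only [show p - q = (p - 1) + (1 - q) by ring, Real.rpow_add hu]
    ring
  have hint : IntegrableOn (fun u ↦ b * p / (1 - q) * (u ^ (p - q) * Real.exp (-b * u ^ p)))
      (Ioi 0) :=
    Integrable.const_mul (integrableOn_rpow_mul_exp_neg_mul_rpow (by linarith) hp hb) _
  rw [integral_Ioi_mul_deriv_eq_deriv_mul
    (fun u hu ↦ hasDerivAt_one_sub_exp_neg_mul_rpow b p hu)
    (fun u hu ↦ hasDerivAt_rpow_one_sub_div hq₁ hu)
    (integrableOn_one_sub_exp_mul_rpow_neg hq hpq hb.le)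
    (hint.congr_fun hprod.symm measurableSet_Ioi)
    (by simpa [Pi.mul_def, mul_div_assoc] using
      (tendsto_one_sub_exp_mul_rpow_nhdsGT_zero hpq hb.le).div_const (1 - q))
    (by simpa [Pi.mul_def, mul_div_assoc] using
      (tendsto_one_sub_exp_mul_rpow_atTop hq hb.le).div_const (1 - q)),
    setIntegral_congr_fun measurableSet_Ioi hprod, integral_const_mul,
    integral_rpow_mul_exp_neg_mul_rpow hp (by linarith) hb]
  have hexponent : (p - q + 1) / p = 1 - (q - 1) / p := by
    field_simp
    ring
  have hpow : b ^ (-(p - q + 1) / p) = b ^ ((q - 1) / p) / b := by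
    rw [← Real.rpow_sub_one hb.ne', neg_div, hexponent, neg_sub]
  rw [hpow, hexponent, ← neg_sub q 1]
  have : q - 1 ≠ 0 := by linarith
  field_simp
  ring

end StretchedExponential

section AbsoluteMoment

variable {Ω : Type*} [MeasurableSpace Ω] {P : Measure Ω} [IsProbabilityMeasure P] {X : Ω → ℝ}

theorem integrable_prod_one_sub_cos_div_sq (hX : Measurable X) (hint : Integrable X P) :
    Integrable (fun p : ℝ × Ω ↦ (1 - Real.cos (p.1 * X p.2)) / p.1 ^ 2)
      ((volume.restrict (Ioi 0)).prod P) := by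
  rw [integrable_prod_iff' (Measurable.aestronglyMeasurable (by fun_prop))]
  refine ⟨ae_of_all _ fun ω ↦ integrableOn_one_sub_cos_mul_div_sq (X ω), ?_⟩
  refine (hint.abs.const_mul (Real.pi / 2)).congr (ae_of_all _ fun ω ↦ ?_)
  have hnonneg (u : ℝ) : 0 ≤ (1 - Real.cos (u * X ω)) / u ^ 2 :=
    div_nonneg (sub_nonneg.2 (Real.cos_le_one _)) (sq_nonneg u)
  simp_rw [Real.norm_of_nonneg (hnonneg _)]
  exact (integral_one_sub_cos_mul_div_sq (X ω)).symm

theorem integral_one_sub_cos_div_sq_eq (hX : Measurable X) (u : ℝ) :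
    ∫ ω, (1 - Real.cos (u * X ω)) / u ^ 2 ∂P = (1 - ∫ ω, Real.cos (u * X ω) ∂P) / u ^ 2 := by
  have hcos : Integrable (fun ω ↦ Real.cos (u * X ω)) P :=
    Integrable.of_bound (by fun_prop) 1 (ae_of_all _ fun ω ↦ Real.abs_cos_le_one _)
  rw [integral_div, integral_sub (integrable_const _) hcos, integral_const, probReal_univ, one_smul]

theorem integrableOn_one_sub_integral_cos_div_sq (hX : Measurable X) (hint : Integrable X P) :
    IntegrableOn (fun u : ℝ ↦ (1 - ∫ ω, Real.cos (u * X ω) ∂P) / u ^ 2) (Ioi 0) := by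
  refine (integrable_prod_one_sub_cos_div_sq hX hint).integral_prod_left.congr
    (ae_of_all _ fun u ↦ ?_)
  exact integral_one_sub_cos_div_sq_eq hX u

theorem integral_one_sub_integral_cos_div_sq (hX : Measurable X) (hint : Integrable X P) :
    ∫ u in Ioi (0 : ℝ), (1 - ∫ ω, Real.cos (u * X ω) ∂P) / u ^ 2 =
      Real.pi / 2 * ∫ ω, |X ω| ∂P := by
  simp_rw [← integral_one_sub_cos_div_sq_eq hX]
  rw [integral_integral_swap (integrable_prod_one_sub_cos_div_sq hX hint), ← integral_const_mul]
  simp_rw [integral_one_sub_cos_mul_div_sq]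

end AbsoluteMoment

section SymmetricStable

/-- The constant `A` in the characteristic function `u ↦ exp (-A * |u| ^ Y)` of the difference of
two independent variables with the one-sided `Y`-stable law of Lévy density `C * x ^ (-Y - 1)`. -/
noncomputable def symmStableRate (C Y : ℝ) : ℝ :=
  -2 * C * Real.Gamma (-Y) * Real.cos (Real.pi * Y / 2)

variable {C Y : ℝ}

theorem symmStableRate_pos (hC : 0 < C) (hY : Y ∈ Ioo (1 : ℝ) 2) : 0 < symmStableRate C Y := by
  rw [symmStableRate, mul_assoc (-2 : ℝ)]
  exact mul_pos_of_neg_of_neg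
    (mul_neg_of_neg_of_pos (by norm_num) (mul_pos hC (Gamma_neg_pos hY)))
    (cos_pi_mul_div_two_neg hY)

variable {Ω : Type*} [MeasurableSpace Ω] {P : Measure Ω} [IsProbabilityMeasure P] {U V : Ω → ℝ}

theorem integral_cexp_mul_sub (hC : 0 < C) (hY : Y ∈ Ioo (1 : ℝ) 2)
    (hU : IsOneSidedStable P C Y U) (hV : IsOneSidedStable P C Y V) (hUV : IndepFun U V P)
    (u : ℝ) :
    ∫ ω, Complex.exp ((u * (U ω - V ω) : ℝ) * Complex.I) ∂P =
      Real.exp (-symmStableRate C Y * |u| ^ Y) := by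
  have hY₀ : Y ≠ 0 := by linarith [hY.1]
  have hlap := integral_cexp_neg_add hC hY hU hV hUV (z := -(u * Complex.I))
    (w := -((-u : ℝ) * Complex.I)) (by simp) (by simp)
  rw [neg_ofReal_mul_I_cpow hY₀, neg_ofReal_mul_I_cpow hY₀, Real.sign_neg, abs_neg] at hlap
  rw [symmStableRate, Complex.ofReal_exp]
  convert hlap using 1
  · congr 1 with ω
    push_cast
    ring_nf
  · push_cast
    ring_nf

theorem integral_cos_mul_sub_add (hC : 0 < C) (hY : Y ∈ Ioo (1 : ℝ) 2)
    (hU : IsOneSidedStable P C Y U) (hV : IsOneSidedStable P C Y V) (hUV : IndepFun U V P)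
    (u θ : ℝ) :
    ∫ ω, Real.cos (u * (U ω - V ω + θ)) ∂P =
      Real.cos (u * θ) * Real.exp (-symmStableRate C Y * |u| ^ Y) := by
  have := hU.measurable
  have := hV.measurable
  have hint : Integrable
      (fun ω ↦ Complex.exp ((u * (U ω - V ω) : ℝ) * Complex.I) * Complex.exp (u * θ * Complex.I))
      P := by
    refine (Integrable.of_bound (by fun_prop) 1 (ae_of_all _ fun ω ↦ ?_)).mul_const _
    rw [Complex.norm_exp_ofReal_mul_I]
  have hre := integral_re hint
  rw [integral_mul_const, integral_cexp_mul_sub hC hY hU hV hUV, ← Complex.ofReal_mul,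
    RCLike.re_eq_complex_re, Complex.re_ofReal_mul, Complex.exp_ofReal_mul_I_re] at hre
  rw [mul_comm, ← hre]
  congr 1 with ω
  rw [← Complex.exp_add, ← add_mul, ← Complex.ofReal_add, Complex.exp_ofReal_mul_I_re, mul_add]

theorem integrableOn_one_sub_cos_mul_exp_div_sq (hC : 0 < C) (hY : Y ∈ Ioo (1 : ℝ) 2)
    (hU : IsOneSidedStable P C Y U) (hV : IsOneSidedStable P C Y V) (hUV : IndepFun U V P)
    (θ : ℝ) :
    IntegrableOn
      (fun u : ℝ ↦ (1 - Real.cos (u * θ) * Real.exp (-symmStableRate C Y * u ^ Y)) / u ^ 2)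
      (Ioi 0) := by
  have := hU.measurable
  have := hV.measurable
  refine (integrableOn_one_sub_integral_cos_div_sq (X := fun ω ↦ U ω - V ω + θ) (by fun_prop)
    (((hU.integrable hC hY).sub (hV.integrable hC hY)).add (integrable_const θ))).congr_fun
    (fun u hu ↦ ?_) measurableSet_Ioi
  simp only [integral_cos_mul_sub_add hC hY hU hV hUV, abs_of_pos (show 0 < u from hu)]

theorem integral_one_sub_cos_mul_exp_div_sq (hC : 0 < C) (hY : Y ∈ Ioo (1 : ℝ) 2)
    (hU : IsOneSidedStable P C Y U) (hV : IsOneSidedStable P C Y V) (hUV : IndepFun U V P)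
    (θ : ℝ) :
    ∫ u in Ioi (0 : ℝ),
      (1 - Real.cos (u * θ) * Real.exp (-symmStableRate C Y * u ^ Y)) / u ^ 2 =
        Real.pi / 2 * ∫ ω, |U ω - V ω + θ| ∂P := by
  have := hU.measurable
  have := hV.measurable
  rw [← integral_one_sub_integral_cos_div_sq (X := fun ω ↦ U ω - V ω + θ) (by fun_prop)
    (((hU.integrable hC hY).sub (hV.integrable hC hY)).add (integrable_const θ))]
  refine setIntegral_congr_fun measurableSet_Ioi fun u hu ↦ ?_
  simp only [integral_cos_mul_sub_add hC hY hU hV hUV, abs_of_pos (show 0 < u from hu)]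

theorem integral_abs_sub_eq (hC : 0 < C) (hY : Y ∈ Ioo (1 : ℝ) 2)
    (hU : IsOneSidedStable P C Y U) (hV : IsOneSidedStable P C Y V) (hUV : IndepFun U V P) :
    ∫ ω, |U ω - V ω| ∂P =
      2 / Real.pi * (symmStableRate C Y ^ (1 / Y) * Real.Gamma (1 - 1 / Y)) := by
  have hcos := integral_one_sub_cos_mul_exp_div_sq hC hY hU hV hUV 0
  simp only [mul_zero, Real.cos_zero, one_mul, add_zero] at hcos
  have hgamma := integral_one_sub_exp_mul_rpow_neg (p := Y) one_lt_two (by linarith [hY.1])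
    (symmStableRate_pos hC hY)
  simp only [Real.rpow_neg_ofNat, Int.reduceNeg, zpow_neg, zpow_ofNat, ← div_eq_mul_inv] at hgamma
  rw [hcos, show (2 : ℝ) - 1 = 1 by norm_num, div_one] at hgamma
  rw [← hgamma]
  field_simp

theorem one_sub_cos_mul_eq_sinc_sq (u θ : ℝ) :
    1 - Real.cos (u * θ) = u ^ 2 * (θ ^ 2 * (1 / 2 * Real.sinc (u * θ / 2) ^ 2)) := by
  rcases eq_or_ne (u * θ / 2) 0 with h | h
  · rcases mul_eq_zero.1 (by linarith : u * θ = 0) with rfl | rfl <;> simp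
  · have hsin : Real.sinc (u * θ / 2) * (u * θ / 2) = Real.sin (u * θ / 2) := by
      rw [Real.sinc_of_ne_zero h, div_mul_cancel₀ _ h]
    have hcos := Real.cos_two_mul (u * θ / 2)
    rw [Real.cos_sq', ← hsin, mul_div_cancel₀ _ two_ne_zero] at hcos
    linear_combination -hcos

theorem integral_abs_sub_add_eq (hC : 0 < C) (hY : Y ∈ Ioo (1 : ℝ) 2)
    (hU : IsOneSidedStable P C Y U) (hV : IsOneSidedStable P C Y V) (hUV : IndepFun U V P)
    (θ : ℝ) :
    ∫ ω, |U ω - V ω + θ| ∂P = ∫ ω, |U ω - V ω| ∂P + 2 / Real.pi * (θ ^ 2 *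
      ∫ u in Ioi (0 : ℝ), 1 / 2 * Real.sinc (u * θ / 2) ^ 2 *
        Real.exp (-symmStableRate C Y * u ^ Y)) := by
  have hθ := integral_one_sub_cos_mul_exp_div_sq hC hY hU hV hUV θ
  have h₀ := integral_one_sub_cos_mul_exp_div_sq hC hY hU hV hUV 0
  have hsub := integral_sub (integrableOn_one_sub_cos_mul_exp_div_sq hC hY hU hV hUV θ)
    (integrableOn_one_sub_cos_mul_exp_div_sq hC hY hU hV hUV 0)
  rw [hθ, h₀] at hsub
  simp only [add_zero, mul_zero, Real.cos_zero, one_mul] at hsub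
  have hsinc : EqOn (fun u : ℝ ↦
      (1 - Real.cos (u * θ) * Real.exp (-symmStableRate C Y * u ^ Y)) / u ^ 2 -
        (1 - Real.exp (-symmStableRate C Y * u ^ Y)) / u ^ 2)
      (fun u ↦ θ ^ 2 * (1 / 2 * Real.sinc (u * θ / 2) ^ 2 *
        Real.exp (-symmStableRate C Y * u ^ Y))) (Ioi 0) := fun u hu ↦ by
    have hu₀ : u ≠ 0 := ne_of_gt hu
    simp only [← sub_div]
    rw [div_eq_iff (pow_ne_zero 2 hu₀)]
    linear_combination Real.exp (-symmStableRate C Y * u ^ Y) * one_sub_cos_mul_eq_sinc_sq u θ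
  rw [setIntegral_congr_fun measurableSet_Ioi hsinc, integral_const_mul] at hsub
  rw [hsub]
  field_simp
  ring

theorem tendsto_integral_sinc_sq_mul_exp {A p : ℝ} (hA : 0 < A) (hp : 0 < p) :
    Tendsto (fun θ : ℝ ↦ ∫ u in Ioi (0 : ℝ), 1 / 2 * Real.sinc (u * θ / 2) ^ 2 *
      Real.exp (-A * u ^ p)) (𝓝 0)
      (𝓝 (1 / 2 * (A ^ (-(1 / p)) * Real.Gamma (1 + 1 / p)))) := by
  have hlim : 1 / 2 * (A ^ (-(1 / p)) * Real.Gamma (1 + 1 / p)) =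
      ∫ u in Ioi (0 : ℝ), 1 / 2 * Real.sinc (u * 0 / 2) ^ 2 * Real.exp (-A * u ^ p) := by
    simp only [mul_zero, zero_div, Real.sinc_zero, one_pow, mul_one]
    rw [integral_const_mul, integral_exp_neg_mul_rpow hp hA, add_comm, neg_div]
  have hint : IntegrableOn (fun u : ℝ ↦ Real.exp (-A * u ^ p)) (Ioi 0) := by
    simpa using integrableOn_rpow_mul_exp_neg_mul_rpow (s := 0) (by norm_num) hp hA
  have hsinc := Real.continuous_sinc
  rw [hlim]
  refine tendsto_integral_filter_of_dominated_convergence (fun u ↦ Real.exp (-A * u ^ p))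
    (Eventually.of_forall fun θ ↦ ?_) (Eventually.of_forall fun θ ↦ ae_of_all _ fun u ↦ ?_) hint
    (ae_of_all _ fun u ↦ ?_)
  · have := hsinc.measurable
    exact Measurable.aestronglyMeasurable (by fun_prop)
  · have hle : Real.sinc (u * θ / 2) ^ 2 ≤ 1 :=
      (sq_le_one_iff_abs_le_one _).2 (Real.abs_sinc_le_one _)
    rw [Real.norm_of_nonneg (by positivity)]
    exact mul_le_of_le_one_left (Real.exp_pos _).le (by linarith)
  · exact Continuous.tendsto (f := fun θ ↦
      1 / 2 * Real.sinc (u * θ / 2) ^ 2 * Real.exp (-A * u ^ p)) (by fun_prop) 0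

theorem integral_max_sub_add_zero (hC : 0 < C) (hY : Y ∈ Ioo (1 : ℝ) 2)
    (hU : IsOneSidedStable P C Y U) (hV : IsOneSidedStable P C Y V) (θ : ℝ) :
    ∫ ω, max (U ω - V ω + θ) 0 ∂P = 1 / 2 * ∫ ω, |U ω - V ω + θ| ∂P + θ / 2 := by
  have hsub : Integrable (fun ω ↦ U ω - V ω) P := (hU.integrable hC hY).sub (hV.integrable hC hY)
  have hadd : Integrable (fun ω ↦ U ω - V ω + θ) P := hsub.add (integrable_const θ)
  have hmax (x : ℝ) : max x 0 = 1 / 2 * (|x| + x) := by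
    rcases le_total 0 x with hx | hx
    · rw [max_eq_left hx, abs_of_nonneg hx]
      ring
    · rw [max_eq_right hx, abs_of_nonpos hx]
      ring
  simp_rw [hmax]
  rw [integral_const_mul, integral_add hadd.abs hadd, integral_add hsub (integrable_const θ),
    integral_sub (hU.integrable hC hY) (hV.integrable hC hY), hU.integral_eq_zero hC hY,
    hV.integral_eq_zero hC hY, integral_const, probReal_univ, one_smul]
  ring

theorem integral_max_sub_zero (hC : 0 < C) (hY : Y ∈ Ioo (1 : ℝ) 2)
    (hU : IsOneSidedStable P C Y U) (hV : IsOneSidedStable P C Y V) (hUV : IndepFun U V P) :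
    ∫ ω, max (U ω - V ω) 0 ∂P =
      1 / Real.pi * Real.Gamma (1 - 1 / Y) * symmStableRate C Y ^ (1 / Y) := by
  have h := integral_max_sub_add_zero hC hY hU hV 0
  simp only [add_zero, zero_div] at h
  rw [h, integral_abs_sub_eq hC hY hU hV hUV]
  ring

theorem isLittleO_integral_max_sub_add_zero (hC : 0 < C) (hY : Y ∈ Ioo (1 : ℝ) 2)
    (hU : IsOneSidedStable P C Y U) (hV : IsOneSidedStable P C Y V) (hUV : IndepFun U V P) :
    (fun θ ↦ ∫ ω, max (U ω - V ω + θ) 0 ∂P - ∫ ω, max (U ω - V ω) 0 ∂P - θ / 2 -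
      1 / (2 * Real.pi) * Real.Gamma (1 + 1 / Y) * symmStableRate C Y ^ (-(1 / Y)) * θ ^ 2)
        =o[𝓝 0] fun θ ↦ θ ^ 2 := by
  set g : ℝ → ℝ := fun θ ↦ ∫ u in Ioi (0 : ℝ), 1 / 2 * Real.sinc (u * θ / 2) ^ 2 *
    Real.exp (-symmStableRate C Y * u ^ Y)
  set L := 1 / 2 * (symmStableRate C Y ^ (-(1 / Y)) * Real.Gamma (1 + 1 / Y)) with hL
  have hg : Tendsto g (𝓝 0) (𝓝 L) :=
    tendsto_integral_sinc_sq_mul_exp (symmStableRate_pos hC hY) (by linarith [hY.1])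
  have hsmall : (fun θ ↦ 1 / Real.pi * (g θ - L)) =o[𝓝 0] fun _ ↦ (1 : ℝ) :=
    (isLittleO_one_iff ℝ).2 (by simpa using (hg.sub_const L).const_mul (1 / Real.pi))
  have hmul := (isBigO_refl (fun θ : ℝ ↦ θ ^ 2) (𝓝 0)).mul_isLittleO hsmall
  simp only [mul_one] at hmul
  refine hmul.congr_left fun θ ↦ ?_
  have h₀ := integral_max_sub_add_zero hC hY hU hV 0
  simp only [add_zero, zero_div] at h₀
  rw [integral_max_sub_add_zero hC hY hU hV, h₀, integral_abs_sub_add_eq hC hY hU hV hUV, hL]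
  rw [show (∫ u in Ioi (0 : ℝ), 1 / 2 * Real.sinc (u * θ / 2) ^ 2 *
    Real.exp (-symmStableRate C Y * u ^ Y)) = g θ from rfl]
  field_simp
  ring

end SymmetricStable

section JointTail

theorem abs_rpow_neg_sub_rpow_neg_le {Y w r : ℝ} (hY : 0 ≤ Y) (hw : 0 < w) (hr : w / 2 ≤ r) :
    |r ^ (-Y) - w ^ (-Y)| ≤ Y * (w / 2) ^ (-Y - 1) * |r - w| := by
  have hpos {x : ℝ} (hx : x ∈ Ici (w / 2)) : 0 < x := (half_pos hw).trans_le hx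
  refine (convex_Ici (w / 2)).norm_image_sub_le_of_norm_hasDerivWithin_le
    (f := fun x ↦ x ^ (-Y)) (f' := fun x ↦ -Y * x ^ (-Y - 1))
    (fun x hx ↦ (Real.hasDerivAt_rpow_const (Or.inl (hpos hx).ne')).hasDerivWithinAt)
    (fun x hx ↦ ?_) (half_le_self hw.le) hr
  rw [norm_mul, norm_neg, Real.norm_of_nonneg hY,
    Real.norm_of_nonneg (Real.rpow_nonneg (hpos hx).le _)]
  exact mul_le_mul_of_nonneg_left
    (Real.rpow_le_rpow_of_nonpos (half_pos hw) hx (by linarith)) hY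

theorem setOf_le_add_max_subset {Ω : Type*} {a b δ w : ℝ} (U V : Ω → ℝ) :
    {ω | w ≤ a * U ω + b * V ω + max (U ω - V ω) 0} ⊆
      {ω | w ≤ (a + 1) * U ω + (b - 1) * V ω ∧ V ω < δ * w} ∪
        {ω | w ≤ b * V ω + a * U ω ∧ U ω < δ * w} ∪
          ({ω | δ * w ≤ U ω} ∩ {ω | δ * w ≤ V ω}) := by
  intro ω (hω : w ≤ a * U ω + b * V ω + max (U ω - V ω) 0)
  by_contra hnot
  simp only [mem_union, mem_inter_iff, mem_ofPred_eq, not_or, not_and, not_lt, not_le] at hnot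
  obtain ⟨⟨hV_of, hU_of⟩, hnotboth⟩ := hnot
  rcases le_total (U ω) (V ω) with hle | hle
  · rw [max_eq_right (by linarith)] at hω
    have hUge := hU_of (by linarith)
    linarith [hnotboth hUge]
  · rw [max_eq_left (by linarith)] at hω
    have hVge := hV_of (by linarith)
    linarith [hnotboth (hVge.trans hle)]

theorem union_subset_setOf_le_add_max {Ω : Type*} {a b δ w : ℝ} (U V : Ω → ℝ) :
    {ω | w ≤ (a + 1) * U ω + (b - 1) * V ω ∧ V ω < δ * w} ∪
        {ω | w ≤ b * V ω + a * U ω ∧ U ω < δ * w} ⊆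
      {ω | w ≤ a * U ω + b * V ω + max (U ω - V ω) 0} := by
  rintro ω (⟨hle, -⟩ | ⟨hle, -⟩)
  · exact hle.trans (by linarith [le_max_left (U ω - V ω) 0])
  · exact hle.trans (by linarith [le_max_right (U ω - V ω) 0])

variable {Ω : Type*} [MeasurableSpace Ω] {P : Measure Ω} [IsProbabilityMeasure P] {C Y : ℝ}
  {X X' U V : Ω → ℝ}

theorem integrable_measureReal_prodMk_mem (hX : Measurable X) (hX' : Measurable X')
    {S : Set (ℝ × ℝ)} (hS : MeasurableSet S) :
    Integrable (fun ω ↦ P.real {ω' | (X ω', X' ω) ∈ S}) P := by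
  have : IsProbabilityMeasure (P.map X) := Measure.isProbabilityMeasure_map hX.aemeasurable
  have hslice (x : ℝ) : P {ω' | (X ω', x) ∈ S} = P.map X ((·, x) ⁻¹' S) :=
    (Measure.map_apply hX (measurable_prodMk_right hS)).symm
  refine Integrable.of_bound (Measurable.aestronglyMeasurable ?_) 1 (ae_of_all _ fun ω ↦ ?_)
  · simp_rw [measureReal_def, hslice]
    exact ((measurable_measure_prodMk_right hS).comp hX').ennreal_toReal
  · rw [Real.norm_of_nonneg measureReal_nonneg]
    exact measureReal_le_one

theorem measureReal_prodMk_mem_eq_integral (hX : Measurable X) (hX' : Measurable X')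
    (hXX' : IndepFun X X' P) {S : Set (ℝ × ℝ)} (hS : MeasurableSet S) :
    P.real {ω | (X ω, X' ω) ∈ S} = ∫ ω, P.real {ω' | (X ω', X' ω) ∈ S} ∂P := by
  have : IsProbabilityMeasure (P.map X) := Measure.isProbabilityMeasure_map hX.aemeasurable
  have : IsProbabilityMeasure (P.map X') := Measure.isProbabilityMeasure_map hX'.aemeasurable
  have hprod := (indepFun_iff_map_prod_eq_prod_map_map hX.aemeasurable hX'.aemeasurable).1 hXX'
  have hslice (x : ℝ) : P {ω' | (X ω', x) ∈ S} = P.map X ((·, x) ⁻¹' S) :=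
    (Measure.map_apply hX (measurable_prodMk_right hS)).symm
  have hmeas := measurable_measure_prodMk_right (μ := P.map X) hS
  have hjoint : P {ω | (X ω, X' ω) ∈ S} = ((P.map X).prod (P.map X')) S := by
    rw [← hprod, Measure.map_apply (hX.prodMk hX') hS]
    rfl
  simp_rw [measureReal_def, hslice]
  rw [hjoint, Measure.prod_apply_symm hS, lintegral_map hmeas hX']
  exact (integral_toReal (hmeas.comp hX').aemeasurable
    (ae_of_all _ fun ω ↦ measure_lt_top _ _)).symm

namespace IsOneSidedStable

theorem exists_measureReal_mul_le_le (hX : IsOneSidedStable P C Y X) (hC : 0 < C)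
    (hY : Y ∈ Ioo (1 : ℝ) 2) {δ : ℝ} (hδ : 0 < δ) :
    ∃ D, 0 ≤ D ∧ ∀ w, 1 ≤ w → P.real {ω | δ * w ≤ X ω} ≤ D * w ^ (-Y) := by
  obtain ⟨B, hB, htail⟩ := hX.exists_abs_measureReal_le_sub_le hC hY
  have hY₀ : 0 < Y := by linarith [hY.1]
  refine ⟨C / Y * δ ^ (-Y) + B * δ ^ (-(2 * Y)), by positivity, fun w hw ↦ ?_⟩
  have hw₀ : 0 < w := by linarith
  have hle := (abs_le.1 (htail (δ * w) (mul_pos hδ hw₀))).2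
  have hexp : w ^ (-(2 * Y)) ≤ w ^ (-Y) := Real.rpow_le_rpow_of_exponent_le hw (by linarith)
  have hmul := mul_le_mul_of_nonneg_left hexp (by positivity : 0 ≤ B * δ ^ (-(2 * Y)))
  rw [Real.mul_rpow hδ.le hw₀.le, Real.mul_rpow hδ.le hw₀.le] at hle
  linarith

theorem exists_abs_measureReal_le_const_mul_sub_le (hX : IsOneSidedStable P C Y X)
    (hC : 0 < C) (hY : Y ∈ Ioo (1 : ℝ) 2) {a : ℝ} (ha : 0 < a) :
    ∃ B, 0 ≤ B ∧ ∀ w, 0 < w →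
      |P.real {ω | w ≤ a * X ω} - C / Y * a ^ Y * w ^ (-Y)| ≤ B * w ^ (-(2 * Y)) := by
  obtain ⟨B, hB, htail⟩ := hX.exists_abs_measureReal_le_sub_le hC hY
  refine ⟨B * a ^ (2 * Y), by positivity, fun w hw ↦ ?_⟩
  have hset : {ω | w ≤ a * X ω} = {ω | w / a ≤ X ω} := by
    ext ω
    rw [mem_ofPred_eq, mem_ofPred_eq, div_le_iff₀ ha, mul_comm]
  have hscale (p : ℝ) : (w / a) ^ (-p) = a ^ p * w ^ (-p) := by
    rw [Real.div_rpow hw.le ha.le, Real.rpow_neg ha.le, div_inv_eq_mul, mul_comm]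
  have h := htail _ (div_pos hw ha)
  rwa [hscale, hscale, ← hset, ← mul_assoc, ← mul_assoc] at h

theorem exists_abs_measureReal_le_const_mul_add_sub_le (hX : IsOneSidedStable P C Y X)
    (hC : 0 < C) (hY : Y ∈ Ioo (1 : ℝ) 2) {a : ℝ} (ha : 0 < a) :
    ∃ B, 0 ≤ B ∧ ∀ w y, 1 ≤ w → y ≤ w / 2 →
      |P.real {ω | w ≤ a * X ω + y} - C / Y * a ^ Y * w ^ (-Y)| ≤
        B * (1 + |y|) * w ^ (-Y - 1) := by
  obtain ⟨B, hB, htail⟩ := hX.exists_abs_measureReal_le_const_mul_sub_le hC hY ha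
  have hY₁ := hY.1
  set K := C / Y * a ^ Y
  have hK : 0 ≤ K := by positivity
  set L := Y * (1 / 2) ^ (-Y - 1)
  have : 0 ≤ L := by positivity
  refine ⟨B * (1 / 2) ^ (-(2 * Y)) + K * L, by positivity, fun w y hw hy ↦ ?_⟩
  have hw₀ : 0 < w := by linarith
  have hhalf (p : ℝ) : (w / 2) ^ p = (1 / 2) ^ p * w ^ p := by
    rw [← Real.mul_rpow (by norm_num) hw₀.le, one_div_mul_eq_div]
  have herror : (w - y) ^ (-(2 * Y)) ≤ (1 / 2) ^ (-(2 * Y)) * w ^ (-Y - 1) := calc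
    (w - y) ^ (-(2 * Y)) ≤ (w / 2) ^ (-(2 * Y)) :=
      Real.rpow_le_rpow_of_nonpos (half_pos hw₀) (by linarith) (by linarith)
    _ = (1 / 2) ^ (-(2 * Y)) * w ^ (-(2 * Y)) := hhalf _
    _ ≤ _ := mul_le_mul_of_nonneg_left
      (Real.rpow_le_rpow_of_exponent_le hw (by linarith)) (by positivity)
  have hshift : |K * (w - y) ^ (-Y) - K * w ^ (-Y)| ≤ K * (L * w ^ (-Y - 1) * |y|) := by
    have h := abs_rpow_neg_sub_rpow_neg_le (Y := Y) (by linarith) hw₀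
      (by linarith : w / 2 ≤ w - y)
    rw [hhalf, sub_sub_cancel_left, abs_neg, ← mul_assoc] at h
    rw [← mul_sub, abs_mul, abs_of_nonneg hK]
    exact mul_le_mul_of_nonneg_left h hK
  have hset : {ω | w ≤ a * X ω + y} = {ω | w - y ≤ a * X ω} := by
    ext ω
    rw [mem_ofPred_eq, mem_ofPred_eq, sub_le_iff_le_add]
  rw [hset]
  calc _ ≤ _ := abs_sub_le _ (K * (w - y) ^ (-Y)) _
    _ ≤ B * ((1 / 2) ^ (-(2 * Y)) * w ^ (-Y - 1)) + K * (L * w ^ (-Y - 1) * |y|) :=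
      add_le_add ((htail _ (by linarith)).trans (mul_le_mul_of_nonneg_left herror hB)) hshift
    _ ≤ _ := by
      have h₁ : 0 ≤ B * ((1 / 2) ^ (-(2 * Y)) * w ^ (-Y - 1)) * |y| := by positivity
      have h₂ : 0 ≤ K * (L * w ^ (-Y - 1)) := by positivity
      linarith

theorem exists_abs_measureReal_le_add_and_lt_sub_le_of_const (hX : IsOneSidedStable P C Y X)
    (hC : 0 < C) (hY : Y ∈ Ioo (1 : ℝ) 2) {a b δ : ℝ} (ha : 0 < a) (hb : 0 ≤ b) (hδ : 0 < δ)
    (hbδ : b * δ ≤ 1 / 2) :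
    ∃ B, ∀ w x, 1 ≤ w →
      |P.real {ω | w ≤ a * X ω + b * x ∧ x < δ * w} - C / Y * a ^ Y * w ^ (-Y)| ≤
        B * (1 + |x|) * w ^ (-Y - 1) := by
  obtain ⟨B, hB, hshift⟩ := hX.exists_abs_measureReal_le_const_mul_add_sub_le hC hY ha
  have hY₀ : 0 < Y := by linarith [hY.1]
  set K := C / Y * a ^ Y
  have : 0 ≤ K := by positivity
  refine ⟨B * (1 + b) + K / δ, fun w x hw ↦ ?_⟩
  have hw₀ : 0 < w := by linarith
  rcases lt_or_ge x (δ * w) with hx | hx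
  · have hbx : b * x ≤ w / 2 := by nlinarith
    simp only [hx, and_true]
    refine (hshift w (b * x) hw hbx).trans (mul_le_mul_of_nonneg_right ?_ (by positivity))
    rw [abs_mul, abs_of_nonneg hb]
    have h₁ : 0 ≤ B * (|x| + b) := by positivity
    have h₂ : 0 ≤ K / δ * (1 + |x|) := by positivity
    linarith
  · have hone : w ≤ |x| / δ := by
      rw [le_div_iff₀ hδ, mul_comm]
      exact hx.trans (le_abs_self x)
    simp only [hx.not_gt, and_false, ofPred_false, measureReal_empty, zero_sub, abs_neg]
    rw [abs_of_nonneg (by positivity)]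
    calc K * w ^ (-Y) = K * w * w ^ (-Y - 1) := by
          rw [Real.rpow_sub_one hw₀.ne']
          field_simp
      _ ≤ K * (|x| / δ) * w ^ (-Y - 1) := by gcongr
      _ ≤ _ := by
          refine mul_le_mul_of_nonneg_right ?_ (by positivity)
          have h₁ : 0 ≤ B * (1 + b) * (1 + |x|) := by positivity
          have h₂ : 0 ≤ K / δ := by positivity
          rw [← mul_div_assoc, mul_div_right_comm]
          linarith

theorem exists_abs_measureReal_le_add_and_lt_sub_le (hX : IsOneSidedStable P C Y X)
    (hX' : IsOneSidedStable P C Y X') (hXX' : IndepFun X X' P) (hC : 0 < C)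
    (hY : Y ∈ Ioo (1 : ℝ) 2) {a b δ : ℝ} (ha : 0 < a) (hb : 0 ≤ b) (hδ : 0 < δ)
    (hbδ : b * δ ≤ 1 / 2) :
    ∃ B, ∀ w, 1 ≤ w →
      |P.real {ω | w ≤ a * X ω + b * X' ω ∧ X' ω < δ * w} - C / Y * a ^ Y * w ^ (-Y)| ≤
        B * w ^ (-Y - 1) := by
  obtain ⟨B, hbound⟩ :=
    hX.exists_abs_measureReal_le_add_and_lt_sub_le_of_const hC hY ha hb hδ hbδ
  refine ⟨∫ ω, B * (1 + |X' ω|) ∂P, fun w hw ↦ ?_⟩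
  have hS : MeasurableSet {p : ℝ × ℝ | w ≤ a * p.1 + b * p.2 ∧ p.2 < δ * w} := by
    measurability
  have hcond := measureReal_prodMk_mem_eq_integral hX.measurable hX'.measurable hXX' hS
  have hcondint := integrable_measureReal_prodMk_mem (P := P) hX.measurable hX'.measurable hS
  simp only [mem_ofPred_eq] at hcond hcondint
  have hdom : Integrable (fun ω ↦ B * (1 + |X' ω|) * w ^ (-Y - 1)) P :=
    (((integrable_const 1).add (hX'.integrable hC hY).abs).const_mul B).mul_const _
  have hconst : C / Y * a ^ Y * w ^ (-Y) = ∫ _, C / Y * a ^ Y * w ^ (-Y) ∂P := by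
    rw [integral_const, probReal_univ, one_smul]
  rw [hcond, hconst, ← integral_sub hcondint (integrable_const _), ← integral_mul_const,
    ← Real.norm_eq_abs]
  exact norm_integral_le_of_norm_le hdom (ae_of_all _ fun ω ↦ hbound w (X' ω) hw)

theorem exists_measureReal_le_inter_le (hU : IsOneSidedStable P C Y U)
    (hV : IsOneSidedStable P C Y V) (hUV : IndepFun U V P) (hC : 0 < C)
    (hY : Y ∈ Ioo (1 : ℝ) 2) {δ : ℝ} (hδ : 0 < δ) :
    ∃ D, ∀ w, 1 ≤ w →
      P.real ({ω | δ * w ≤ U ω} ∩ {ω | δ * w ≤ V ω}) ≤ D * w ^ (-Y - 1) := by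
  obtain ⟨D₁, hD₁, hU_le⟩ := hU.exists_measureReal_mul_le_le hC hY hδ
  obtain ⟨D₂, hD₂, hV_le⟩ := hV.exists_measureReal_mul_le_le hC hY hδ
  refine ⟨D₁ * D₂, fun w hw ↦ ?_⟩
  have hw₀ : 0 < w := by linarith
  have hprod := congrArg ENNReal.toReal (hUV.measure_inter_preimage_eq_mul (Ici (δ * w))
    (Ici (δ * w)) measurableSet_Ici measurableSet_Ici)
  rw [ENNReal.toReal_mul] at hprod
  calc P.real ({ω | δ * w ≤ U ω} ∩ {ω | δ * w ≤ V ω})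
      = P.real {ω | δ * w ≤ U ω} * P.real {ω | δ * w ≤ V ω} := hprod
    _ ≤ (D₁ * w ^ (-Y)) * (D₂ * w ^ (-Y)) :=
      mul_le_mul (hU_le w hw) (hV_le w hw) measureReal_nonneg (by positivity)
    _ = D₁ * D₂ * w ^ (-Y + -Y) := by
      rw [Real.rpow_add hw₀]
      ring
    _ ≤ D₁ * D₂ * w ^ (-Y - 1) := mul_le_mul_of_nonneg_left
      (Real.rpow_le_rpow_of_exponent_le hw (by linarith [hY.1])) (by positivity)

end IsOneSidedStable

theorem exists_abs_measureReal_le_add_max_sub_le (hC : 0 < C) (hY : Y ∈ Ioo (1 : ℝ) 2)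
    (hU : IsOneSidedStable P C Y U) (hV : IsOneSidedStable P C Y V) (hUV : IndepFun U V P)
    {a b : ℝ} (ha : 0 ≤ a) (hb : 1 ≤ b) :
    ∃ B, ∀ w, 1 ≤ w →
      |P.real {ω | w ≤ a * U ω + b * V ω + max (U ω - V ω) 0} -
        C / Y * ((a + 1) ^ Y + b ^ Y) * w ^ (-Y)| ≤ B * w ^ (-Y - 1) := by
  set δ := 1 / (2 * (a + b)) with hδ_def
  have hδ : 0 < δ := by positivity
  have hδab : δ * (a + b) = 1 / 2 := by
    rw [hδ_def]
    field_simp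
  obtain ⟨B₁, h₁⟩ := hU.exists_abs_measureReal_le_add_and_lt_sub_le hV hUV hC hY
    (by linarith : 0 < a + 1) (sub_nonneg.2 hb) hδ (by nlinarith)
  obtain ⟨B₂, h₂⟩ := hV.exists_abs_measureReal_le_add_and_lt_sub_le hU hUV.symm hC hY
    (by linarith : 0 < b) ha hδ (by nlinarith)
  obtain ⟨D, h₃⟩ := hU.exists_measureReal_le_inter_le hV hUV hC hY hδ
  refine ⟨B₁ + B₂ + D, fun w hw ↦ ?_⟩
  have := hU.measurable
  have := hV.measurable
  set E₁ := {ω | w ≤ (a + 1) * U ω + (b - 1) * V ω ∧ V ω < δ * w}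
  set E₂ := {ω | w ≤ b * V ω + a * U ω ∧ U ω < δ * w}
  set E := {ω | w ≤ a * U ω + b * V ω + max (U ω - V ω) 0}
  set R := {ω | δ * w ≤ U ω} ∩ {ω | δ * w ≤ V ω}
  have hE₂meas : MeasurableSet E₂ := by measurability
  have hdisj : Disjoint E₁ E₂ := by
    rw [Set.disjoint_left]
    rintro ω ⟨hle, hVlt⟩ ⟨-, hUlt⟩
    nlinarith
  have hunion : P.real (E₁ ∪ E₂) = P.real E₁ + P.real E₂ := measureReal_union hdisj hE₂meas
  have hge : P.real (E₁ ∪ E₂) ≤ P.real E := measureReal_mono (union_subset_setOf_le_add_max U V)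
  have hle : P.real E ≤ P.real (E₁ ∪ E₂) + P.real R :=
    (measureReal_mono (setOf_le_add_max_subset U V)).trans (measureReal_union_le _ _)
  have habs₁ := abs_le.1 (h₁ w hw)
  have habs₂ := abs_le.1 (h₂ w hw)
  have hRle : P.real R ≤ D * w ^ (-Y - 1) := h₃ w hw
  have : 0 ≤ D * w ^ (-Y - 1) := measureReal_nonneg.trans hRle
  rw [abs_le]
  constructor <;> linarith [habs₁.1, habs₁.2, habs₂.1, habs₂.2]

end JointTail

section LaplaceExpansion

theorem tendsto_exp_neg_mul_sub_one_add_div_sq (x : ℝ) :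
    Tendsto (fun s ↦ (Real.exp (-(s * x)) - 1 + s * x) / s ^ 2) (𝓝[>] 0) (𝓝 (x ^ 2 / 2)) := by
  have hlin : Tendsto (fun s : ℝ ↦ -(s * x)) (𝓝[>] 0) (𝓝 0) := by
    have h : Continuous fun s : ℝ ↦ -(s * x) := by fun_prop
    exact (h.tendsto' 0 0 (by simp)).mono_left nhdsWithin_le_nhds
  have htaylor : (fun s ↦ Real.exp (-(s * x)) - 1 + s * x - x ^ 2 / 2 * s ^ 2) =o[𝓝[>] 0]
      fun s ↦ s ^ 2 := by
    have h := (Real.exp_sub_sum_range_succ_isLittleO_pow 2).comp_tendsto hlin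
    refine (h.congr_left fun s ↦ ?_).trans_isBigO
      (IsBigO.of_bound (x ^ 2) (Eventually.of_forall fun s ↦ ?_))
    · simp only [Function.comp_apply, Finset.sum_range_succ, Finset.range_zero, Finset.sum_empty,
        Nat.factorial]
      push_cast
      ring
    · simp [mul_pow, mul_comm]
  have hquot := htaylor.tendsto_div_nhds_zero.add_const (x ^ 2 / 2)
  rw [zero_add] at hquot
  refine hquot.congr' ?_
  filter_upwards [self_mem_nhdsWithin] with s (hs : 0 < s)
  field_simp
  ring

theorem exp_neg_mul_sub_one_add_div_sq_le {s x : ℝ} (hs : 0 < s) (hs' : s ≤ 1 / 2) (hx : x ≤ 0) :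
    (Real.exp (-(s * x)) - 1 + s * x) / s ^ 2 ≤ 8 * Real.exp (-x) := by
  have hquad : Real.exp (-(s * x)) - 1 + s * x ≤ (s * x) ^ 2 * Real.exp (-(s * x)) := by
    have h := mul_le_mul_of_nonneg_left (Real.add_one_le_exp (s * x))
      (Real.exp_pos (-(s * x))).le
    rw [← Real.exp_add, neg_add_cancel, Real.exp_zero] at h
    nlinarith [mul_le_mul_of_nonneg_right h (by nlinarith : 0 ≤ 1 - s * x)]
  have hsq : x ^ 2 ≤ 8 * Real.exp (-x / 2) := by
    nlinarith [Real.quadratic_le_exp_of_nonneg (x := -x / 2) (by linarith)]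
  rw [div_le_iff₀ (by positivity)]
  calc _ ≤ x ^ 2 * Real.exp (-(s * x)) * s ^ 2 := hquad.trans_eq (by ring)
    _ ≤ (8 * Real.exp (-x / 2)) * Real.exp (-x / 2) * s ^ 2 := by
      gcongr
      nlinarith
    _ = 8 * Real.exp (-x) * s ^ 2 := by
      rw [mul_assoc 8, ← Real.exp_add, add_halves]

theorem one_sub_exp_neg_mul_div_mem_Icc {s w : ℝ} (hs : 0 < s) (hw : 0 ≤ w) :
    (1 - Real.exp (-s * w)) / s ∈ Icc 0 w := by
  have hexp : Real.exp (-s * w) ≤ 1 := Real.exp_le_one_iff.2 (by nlinarith)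
  refine ⟨div_nonneg (sub_nonneg.2 hexp) hs.le, ?_⟩
  rw [div_le_iff₀ hs]
  linarith [Real.add_one_le_exp (-s * w)]

theorem tendsto_one_sub_exp_neg_mul_div (w : ℝ) :
    Tendsto (fun s ↦ (1 - Real.exp (-s * w)) / s) (𝓝[>] 0) (𝓝 w) := by
  have hderiv : HasDerivAt (fun s : ℝ ↦ 1 - Real.exp (-s * w)) w 0 := by
    simpa using ((hasDerivAt_neg (0 : ℝ)).mul_const w).exp.const_sub 1
  refine hderiv.tendsto_slope_zero_right.congr fun s ↦ ?_
  simp [div_eq_inv_mul]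

theorem intervalIntegral_mul_one_sub_exp_neg_mul (s x : ℝ) :
    ∫ w in (0 : ℝ)..x, s * (1 - Real.exp (-s * w)) = Real.exp (-(s * x)) - 1 + s * x := by
  have hderiv (w : ℝ) : HasDerivAt (fun w ↦ Real.exp (-s * w) + s * w)
      (s * (1 - Real.exp (-s * w))) w := by
    convert! ((hasDerivAt_id w).const_mul (-s)).exp.add ((hasDerivAt_id w).const_mul s) using 1
    simp only [id]
    ring
  have hcont : Continuous fun w ↦ s * (1 - Real.exp (-s * w)) := by fun_prop
  rw [intervalIntegral.integral_eq_sub_of_hasDerivAt (fun w _ ↦ hderiv w)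
    (hcont.intervalIntegrable _ _), mul_zero, mul_zero, Real.exp_zero, neg_mul]
  ring

variable {Ω : Type*} [MeasurableSpace Ω] {P : Measure Ω} {W : Ω → ℝ}

theorem tendsto_integral_exp_neg_mul_sub_one_add_div_sq (hW : Measurable W) (hW₀ : ∀ ω, W ω ≤ 0)
    (hexp : Integrable (fun ω ↦ Real.exp (-W ω)) P) :
    Tendsto (fun s ↦ ∫ ω, (Real.exp (-(s * W ω)) - 1 + s * W ω) / s ^ 2 ∂P) (𝓝[>] 0)
      (𝓝 (∫ ω, W ω ^ 2 / 2 ∂P)) := by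
  refine tendsto_integral_filter_of_dominated_convergence (fun ω ↦ 8 * Real.exp (-W ω))
    (Eventually.of_forall fun s ↦ by fun_prop) ?_ (hexp.const_mul 8)
    (ae_of_all _ fun ω ↦ tendsto_exp_neg_mul_sub_one_add_div_sq (W ω))
  filter_upwards [Ioc_mem_nhdsGT (one_half_pos (α := ℝ))] with s hs
  refine ae_of_all _ fun ω ↦ ?_
  rw [Real.norm_of_nonneg (div_nonneg (exp_neg_sub_one_add_nonneg _) (sq_nonneg s))]
  exact exp_neg_mul_sub_one_add_div_sq_le hs.1 hs.2 (hW₀ ω)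

variable [IsProbabilityMeasure P] {B T Y : ℝ}

theorem integrable_exp_neg_mul_of_mem_Icc (hexp : Integrable (fun ω ↦ Real.exp (-W ω)) P)
    {s : ℝ} (hs : s ∈ Icc 0 1) : Integrable (fun ω ↦ Real.exp (-(s * W ω))) P := by
  simpa using integrable_exp_mul_of_nonpos_of_ge (X := W) (u := -1) (t := -s)
    (by simpa using hexp) (neg_nonpos.2 hs.1) (neg_le_neg hs.2)

theorem measurable_measureReal_le (W : Ω → ℝ) : Measurable fun w ↦ P.real {ω | w ≤ W ω} :=
  Antitone.measurable fun _ _ h ↦ measureReal_mono fun _ hω ↦ h.trans hω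

theorem integrableOn_mul_measureReal_le_sub (hY : Y ∈ Ioo (1 : ℝ) 2) (hT : 0 ≤ T)
    (htail : ∀ w, 1 ≤ w → |P.real {ω | w ≤ W ω} - T * w ^ (-Y)| ≤ B * w ^ (-Y - 1)) :
    IntegrableOn (fun w ↦ w * (P.real {ω | w ≤ W ω} - T * w ^ (-Y))) (Ioi 0) := by
  have hmeas : Measurable fun w ↦ w * (P.real {ω | w ≤ W ω} - T * w ^ (-Y)) :=
    measurable_id.mul ((measurable_measureReal_le W).sub (by fun_prop))
  rw [← Ioc_union_Ioi_eq_Ioi zero_le_one, integrableOn_union]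
  constructor
  · have hdom : IntegrableOn (fun w : ℝ ↦ 1 + T * w ^ (1 - Y)) (Ioc 0 1) :=
      (integrable_const 1).add
        ((intervalIntegral.intervalIntegrable_rpow' (by linarith [hY.2])).1.const_mul T)
    refine hdom.mono' hmeas.aestronglyMeasurable
      (ae_restrict_of_forall_mem measurableSet_Ioc fun w hw ↦ ?_)
    have hpow : w * w ^ (-Y) = w ^ (1 - Y) := by
      rw [sub_eq_add_neg, Real.rpow_add hw.1, Real.rpow_one]
    have hpow₀ := mul_nonneg hT (Real.rpow_nonneg hw.1.le (1 - Y))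
    have h₀ := mul_nonneg hw.1.le (measureReal_nonneg (μ := P) (s := {ω | w ≤ W ω}))
    have h₁ := mul_le_one₀ hw.2 measureReal_nonneg
      (measureReal_le_one (μ := P) (s := {ω | w ≤ W ω}))
    rw [Real.norm_eq_abs, mul_sub, mul_left_comm, hpow, abs_le]
    constructor <;> linarith
  · refine Integrable.mono' ((integrableOn_Ioi_rpow_of_lt (by linarith [hY.1] : -Y < -1)
      one_pos).const_mul B) hmeas.aestronglyMeasurable
      (ae_restrict_of_forall_mem measurableSet_Ioi fun w (hw : 1 < w) ↦ ?_)
    have hw₀ : 0 < w := one_pos.trans hw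
    rw [norm_mul, Real.norm_of_nonneg hw₀.le, Real.norm_eq_abs]
    calc _ ≤ w * (B * w ^ (-Y - 1)) := mul_le_mul_of_nonneg_left (htail w hw.le) hw₀.le
      _ = B * w ^ (-Y) := by
        rw [Real.rpow_sub_one hw₀.ne']
        field_simp

theorem integral_exp_neg_mul_max_sub_one_add (hW : Measurable W) {s : ℝ} (hs : 0 < s) :
    ∫ ω, (Real.exp (-(s * max (W ω) 0)) - 1 + s * max (W ω) 0) ∂P =
      ∫ w in Ioi (0 : ℝ), s * (1 - Real.exp (-s * w)) * P.real {ω | w ≤ W ω} := by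
  have hweight {w : ℝ} (hw : w ∈ Ioi (0 : ℝ)) : 0 ≤ s * (1 - Real.exp (-s * w)) :=
    mul_nonneg hs.le (sub_nonneg.2 (Real.exp_le_one_iff.2 (by nlinarith [mem_Ioi.1 hw])))
  have hcont : Continuous fun w ↦ s * (1 - Real.exp (-s * w)) := by fun_prop
  have hlayer := lintegral_comp_eq_lintegral_meas_le_mul P
    (ae_of_all _ fun ω ↦ le_max_right (W ω) 0) (by fun_prop)
    (fun _ _ ↦ hcont.intervalIntegrable _ _)
    (ae_restrict_of_forall_mem measurableSet_Ioi fun w hw ↦ hweight hw)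
  simp_rw [intervalIntegral_mul_one_sub_exp_neg_mul] at hlayer
  rw [integral_eq_lintegral_of_nonneg_ae (ae_of_all _ fun ω ↦ exp_neg_sub_one_add_nonneg _)
      (by fun_prop), hlayer,
    integral_eq_lintegral_of_nonneg_ae
      (ae_restrict_of_forall_mem measurableSet_Ioi fun w hw ↦
        mul_nonneg (hweight hw) measureReal_nonneg)
      (hcont.measurable.mul (measurable_measureReal_le W)).aestronglyMeasurable]
  refine congrArg _ (setLIntegral_congr_fun measurableSet_Ioi fun w (hw : 0 < w) ↦ ?_)
  have hset : {ω | w ≤ max (W ω) 0} = {ω | w ≤ W ω} := by simp [hw.not_ge]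
  rw [hset, ENNReal.ofReal_mul (hweight hw), ofReal_measureReal, mul_comm]

theorem norm_one_sub_exp_neg_mul_div_mul_le {s w : ℝ} (hs : 0 < s) (hw : 0 ≤ w) (y : ℝ) :
    ‖(1 - Real.exp (-s * w)) / s * y‖ ≤ ‖w * y‖ := by
  obtain ⟨h₀, h₁⟩ := one_sub_exp_neg_mul_div_mem_Icc hs hw
  rw [norm_mul, norm_mul, Real.norm_of_nonneg h₀, Real.norm_of_nonneg hw]
  exact mul_le_mul_of_nonneg_right h₁ (norm_nonneg y)

section WeightedLimit

variable {g : ℝ → ℝ}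

theorem integrableOn_one_sub_exp_neg_mul_div_mul (hmeas : Measurable g)
    (hg : IntegrableOn (fun w ↦ w * g w) (Ioi 0)) {s : ℝ} (hs : 0 < s) :
    IntegrableOn (fun w ↦ (1 - Real.exp (-s * w)) / s * g w) (Ioi 0) :=
  hg.norm.mono' (by fun_prop) (ae_restrict_of_forall_mem measurableSet_Ioi fun _ hw ↦
    norm_one_sub_exp_neg_mul_div_mul_le hs (le_of_lt hw) _)

theorem tendsto_integral_one_sub_exp_neg_mul_div_mul (hmeas : Measurable g)
    (hg : IntegrableOn (fun w ↦ w * g w) (Ioi 0)) :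
    Tendsto (fun s ↦ ∫ w in Ioi 0, (1 - Real.exp (-s * w)) / s * g w) (𝓝[>] 0)
      (𝓝 (∫ w in Ioi 0, w * g w)) := by
  refine tendsto_integral_filter_of_dominated_convergence _
    (Eventually.of_forall fun s ↦ by fun_prop) ?_ hg.norm
    (ae_of_all _ fun w ↦ (tendsto_one_sub_exp_neg_mul_div w).mul_const (g w))
  filter_upwards [self_mem_nhdsWithin] with s hs
  exact ae_restrict_of_forall_mem measurableSet_Ioi fun _ hw ↦
    norm_one_sub_exp_neg_mul_div_mul_le hs (le_of_lt hw) _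

end WeightedLimit

theorem integral_one_sub_exp_neg_mul_rpow (hY : Y ∈ Ioo (1 : ℝ) 2) {s : ℝ} (hs : 0 < s) :
    ∫ w in Ioi (0 : ℝ), (1 - Real.exp (-s * w)) * w ^ (-Y) = Y * Real.Gamma (-Y) * s ^ (Y - 1) := by
  have hY₁ : Y - 1 ≠ 0 := (sub_pos.2 hY.1).ne'
  have hGamma : Real.Gamma (1 - (Y - 1)) = Y * (Y - 1) * Real.Gamma (-Y) := by
    rw [show 1 - (Y - 1) = -Y + 1 + 1 by ring, Real.Gamma_add_one (by linarith [hY.1]),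
      Real.Gamma_add_one (by linarith [hY.1])]
    ring
  have h := integral_one_sub_exp_mul_rpow_neg (p := 1) hY.1 (by linarith [hY.2]) hs
  simp only [Real.rpow_one, div_one, hGamma] at h
  rw [h]
  field_simp

theorem integral_exp_neg_mul_max_sub_one_add_div_sq (hW : Measurable W) (hY : Y ∈ Ioo (1 : ℝ) 2)
    (hint : IntegrableOn (fun w ↦ w * (P.real {ω | w ≤ W ω} - T * w ^ (-Y))) (Ioi 0))
    {s : ℝ} (hs : 0 < s) :
    (∫ ω, (Real.exp (-(s * max (W ω) 0)) - 1 + s * max (W ω) 0) ∂P) / s ^ 2 =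
      (∫ w in Ioi 0, (1 - Real.exp (-s * w)) / s * (P.real {ω | w ≤ W ω} - T * w ^ (-Y))) +
        T * Y * Real.Gamma (-Y) * s ^ Y / s ^ 2 := by
  have hmeas : Measurable fun w ↦ P.real {ω | w ≤ W ω} - T * w ^ (-Y) :=
    (measurable_measureReal_le W).sub (by fun_prop)
  have hint₁ := integrableOn_one_sub_exp_neg_mul_div_mul hmeas hint hs
  have hint₂ := integrableOn_one_sub_exp_mul_rpow_neg (p := 1) hY.1 (by linarith [hY.2]) hs.le
  simp only [Real.rpow_one] at hint₂
  have hsplit (w : ℝ) : s * (1 - Real.exp (-s * w)) * P.real {ω | w ≤ W ω} =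
      s ^ 2 * ((1 - Real.exp (-s * w)) / s * (P.real {ω | w ≤ W ω} - T * w ^ (-Y))) +
        T * s * ((1 - Real.exp (-s * w)) * w ^ (-Y)) := by
    field_simp
    ring
  simp_rw [integral_exp_neg_mul_max_sub_one_add hW hs, hsplit]
  rw [integral_add (hint₁.const_mul _) (hint₂.const_mul _), integral_const_mul,
    integral_const_mul, integral_one_sub_exp_neg_mul_rpow hY hs, Real.rpow_sub_one hs.ne']
  field_simp

theorem integral_exp_neg_mul_sub_one_add (hW : Measurable W) (hint : Integrable W P)
    (hexp : Integrable (fun ω ↦ Real.exp (-W ω)) P) {s : ℝ} (hs : s ∈ Ioc 0 1) :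
    (∫ ω, Real.exp (-(s * W ω)) ∂P) - 1 + s * ∫ ω, W ω ∂P =
      (∫ ω, (Real.exp (-(s * min (W ω) 0)) - 1 + s * min (W ω) 0) ∂P) +
        ∫ ω, (Real.exp (-(s * max (W ω) 0)) - 1 + s * max (W ω) 0) ∂P := by
  have hexps := integrable_exp_neg_mul_of_mem_Icc hexp (Ioc_subset_Icc_self hs)
  have hψ : Integrable (fun ω ↦ Real.exp (-(s * W ω)) - 1 + s * W ω) P :=
    (hexps.sub (integrable_const 1)).add (hint.const_mul s)
  have hsplit (ω : Ω) : Real.exp (-(s * W ω)) - 1 + s * W ω =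
      (Real.exp (-(s * min (W ω) 0)) - 1 + s * min (W ω) 0) +
        (Real.exp (-(s * max (W ω) 0)) - 1 + s * max (W ω) 0) := by
    rcases le_total (W ω) 0 with h | h <;> simp [h]
  have hmin : Integrable (fun ω ↦ Real.exp (-(s * min (W ω) 0)) - 1 + s * min (W ω) 0) P := by
    refine hψ.mono' (by fun_prop) (ae_of_all _ fun ω ↦ ?_)
    rw [Real.norm_of_nonneg (exp_neg_sub_one_add_nonneg _), hsplit]
    exact le_add_of_nonneg_right (exp_neg_sub_one_add_nonneg _)
  have hmax : Integrable (fun ω ↦ Real.exp (-(s * max (W ω) 0)) - 1 + s * max (W ω) 0) P := by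
    refine hψ.mono' (by fun_prop) (ae_of_all _ fun ω ↦ ?_)
    rw [Real.norm_of_nonneg (exp_neg_sub_one_add_nonneg _), hsplit]
    exact le_add_of_nonneg_left (exp_neg_sub_one_add_nonneg _)
  have hexps_sub : Integrable (fun ω ↦ Real.exp (-(s * W ω)) - 1) P :=
    hexps.sub (integrable_const 1)
  rw [← integral_add hmin hmax, ← integral_congr_ae (ae_of_all P hsplit),
    integral_add hexps_sub (hint.const_mul s), integral_sub hexps (integrable_const 1),
    integral_const_mul, integral_const, probReal_univ, one_smul]

/-- Half the second moment of a random variable whose upper tail is asymptotically `T * w ^ (-Y)`,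
regularized by removing this tail from the layer-cake formula `∫ w * P(w ≤ W)` over `w > 0`. When
`Y < 2` it is the finite coefficient that replaces `E[W ^ 2] / 2` in the expansion of the Laplace
transform. -/
noncomputable def halfRegularizedSecondMoment (P : Measure Ω) (T Y : ℝ) (W : Ω → ℝ) : ℝ :=
  (∫ ω, min (W ω) 0 ^ 2 / 2 ∂P) + ∫ w in Ioi 0, w * (P.real {ω | w ≤ W ω} - T * w ^ (-Y))

theorem isLittleO_integral_exp_neg_mul (hW : Measurable W) (hint : Integrable W P)
    (hexp : Integrable (fun ω ↦ Real.exp (-W ω)) P) (hY : Y ∈ Ioo (1 : ℝ) 2) (hT : 0 ≤ T)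
    (htail : ∀ w, 1 ≤ w → |P.real {ω | w ≤ W ω} - T * w ^ (-Y)| ≤ B * w ^ (-Y - 1)) :
    (fun s ↦ (∫ ω, Real.exp (-(s * W ω)) ∂P) - 1 + s * (∫ ω, W ω ∂P) -
        T * Y * Real.Gamma (-Y) * s ^ Y - halfRegularizedSecondMoment P T Y W * s ^ 2)
      =o[𝓝[>] 0] fun s ↦ s ^ 2 := by
  have hexpmin : Integrable (fun ω ↦ Real.exp (-min (W ω) 0)) P := by
    refine (hexp.sup (integrable_const 1)).congr (ae_of_all _ fun ω ↦ ?_)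
    rcases le_total (W ω) 0 with h | h <;> simp [h]
  have hweighted := integrableOn_mul_measureReal_le_sub hY hT htail
  have hmeas : Measurable fun w ↦ P.real {ω | w ≤ W ω} - T * w ^ (-Y) :=
    (measurable_measureReal_le W).sub (by fun_prop)
  have hlim := (tendsto_integral_exp_neg_mul_sub_one_add_div_sq (hW.min measurable_const)
    (fun ω ↦ min_le_right (W ω) 0) hexpmin).add
    (tendsto_integral_one_sub_exp_neg_mul_div_mul hmeas hweighted)
  refine (isLittleO_iff_tendsto' ?_).2 ((tendsto_sub_nhds_zero_iff.2 hlim).congr' ?_)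
  · filter_upwards [self_mem_nhdsWithin] with s (hs : 0 < s) h
    exact absurd h (by positivity)
  filter_upwards [Ioc_mem_nhdsGT one_pos] with s hs
  have hs₀ : s ≠ 0 := hs.1.ne'
  have hmax := integral_exp_neg_mul_max_sub_one_add_div_sq (P := P) hW hY hweighted hs.1
  rw [integral_exp_neg_mul_sub_one_add hW hint hexp hs, sub_div, sub_div, add_div, hmax,
    mul_div_cancel_right₀ _ (pow_ne_zero 2 hs₀), halfRegularizedSecondMoment, integral_div]
  ring

end LaplaceExpansion

section ShiftedPositivePart

theorem abs_one_sub_exp_neg_mul_le {s : ℝ} (hs : s ∈ Icc (0 : ℝ) 1) (v : ℝ) :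
    |1 - Real.exp (-(s * v))| ≤ s * (|v| + Real.exp (-v)) := by
  have hconv : Real.exp (-(s * v)) ≤ s * Real.exp (-v) + (1 - s) := by
    have h := convexOn_exp.2 (mem_univ (-v)) (mem_univ 0) hs.1 (sub_nonneg.2 hs.2)
      (add_sub_cancel s 1)
    simpa using h
  have hlow := Real.add_one_le_exp (-(s * v))
  have hsv : s * v ≤ s * |v| := mul_le_mul_of_nonneg_left (le_abs_self v) hs.1
  have : 0 ≤ s * |v| := mul_nonneg hs.1 (abs_nonneg v)
  have : 0 ≤ s * Real.exp (-v) := mul_nonneg hs.1 (Real.exp_pos _).le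
  rw [mul_add, abs_le]
  constructor <;> linarith [hs.1]

theorem abs_exp_neg_mul_add_sub_exp_neg_mul_add_le {s m a b : ℝ} (hs : s ∈ Icc (0 : ℝ) 1)
    (ha : a ∈ Icc 0 m) (hb : b ∈ Icc 0 m) (u : ℝ) :
    |Real.exp (-(s * (u + a))) - Real.exp (-(s * (u + b))) + s * (a - b)| ≤
      s ^ 2 * (|u| + Real.exp (-u) + m) * |a - b| := by
  have hderiv (x : ℝ) : HasDerivAt (fun x ↦ Real.exp (-(s * (u + x))) + s * x)
      (s * (1 - Real.exp (-(s * (u + x))))) x := by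
    refine ((((hasDerivAt_id' x).const_add u).const_mul s).fun_neg.exp.add
      ((hasDerivAt_id' x).const_mul s)).congr_deriv ?_
    ring
  have hbound (x : ℝ) (hx : x ∈ Icc 0 m) :
      ‖s * (1 - Real.exp (-(s * (u + x))))‖ ≤ s ^ 2 * (|u| + Real.exp (-u) + m) := by
    have habs : |u + x| ≤ |u| + m :=
      (abs_add_le u x).trans (by rw [abs_of_nonneg hx.1]; linarith [hx.2])
    have hexp : Real.exp (-(u + x)) ≤ Real.exp (-u) := Real.exp_le_exp.2 (by linarith [hx.1])
    rw [norm_mul, Real.norm_of_nonneg hs.1, Real.norm_eq_abs, sq, mul_assoc]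
    refine mul_le_mul_of_nonneg_left ((abs_one_sub_exp_neg_mul_le hs _).trans ?_) hs.1
    exact mul_le_mul_of_nonneg_left (by linarith) hs.1
  have hmvt := (convex_Icc 0 m).norm_image_sub_le_of_norm_hasDerivWithin_le
    (fun x _ ↦ (hderiv x).hasDerivWithinAt) hbound hb ha
  rwa [Real.norm_eq_abs, Real.norm_eq_abs, add_sub_add_comm, ← mul_sub] at hmvt

theorem abs_exp_neg_mul_add_max_sub_le {s θ : ℝ} (hs : s ∈ Icc (0 : ℝ) 1) (hθ : |θ| ≤ 1)
    (u z : ℝ) :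
    |Real.exp (-(s * (u + max (z + θ) 0))) - Real.exp (-(s * (u + max z 0))) +
        s * (max (z + θ) 0 - max z 0)| ≤
      s ^ 2 * |θ| * (|u| + Real.exp (-u) + (|z| + 1)) := by
  have hz : max z 0 ∈ Icc 0 (|z| + 1) :=
    ⟨le_max_right _ _, max_le (by linarith [le_abs_self z]) (by positivity)⟩
  have hzθ : max (z + θ) 0 ∈ Icc 0 (|z| + 1) :=
    ⟨le_max_right _ _, max_le (by linarith [le_abs_self z, le_abs_self θ]) (by positivity)⟩
  have hdiff : |max (z + θ) 0 - max z 0| ≤ |θ| := by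
    simpa using abs_max_sub_max_le_abs (z + θ) z 0
  calc _ ≤ s ^ 2 * (|u| + Real.exp (-u) + (|z| + 1)) * |max (z + θ) 0 - max z 0| :=
        abs_exp_neg_mul_add_sub_exp_neg_mul_add_le hs hzθ hz u
    _ ≤ s ^ 2 * (|u| + Real.exp (-u) + (|z| + 1)) * |θ| := by gcongr
    _ = _ := by ring

theorem exists_abs_integral_exp_neg_mul_add_max_sub_le {Ω : Type*} [MeasurableSpace Ω]
    {P : Measure Ω} [IsProbabilityMeasure P] {A Z : Ω → ℝ} (hA : Integrable A P)
    (hZ : Integrable Z P) (hexp : Integrable (fun ω ↦ Real.exp (-A ω)) P) :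
    ∃ B, ∀ s ∈ Icc (0 : ℝ) 1, ∀ θ : ℝ, |θ| ≤ 1 →
      |(∫ ω, Real.exp (-(s * (A ω + max (Z ω + θ) 0))) ∂P) -
          (∫ ω, Real.exp (-(s * (A ω + max (Z ω) 0))) ∂P) +
          s * ((∫ ω, max (Z ω + θ) 0 ∂P) - ∫ ω, max (Z ω) 0 ∂P)| ≤ s ^ 2 * |θ| * B := by
  refine ⟨∫ ω, (|A ω| + Real.exp (-A ω) + (|Z ω| + 1)) ∂P, fun s hs θ hθ ↦ ?_⟩
  have hbound : Integrable (fun ω ↦ |A ω| + Real.exp (-A ω) + (|Z ω| + 1)) P :=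
    (hA.abs.add hexp).add (hZ.abs.add (integrable_const 1))
  have hshift (η : ℝ) : Integrable (fun ω ↦ max (Z ω + η) 0) P :=
    (hZ.add (integrable_const η)).pos_part
  have hZ₀ : Integrable (fun ω ↦ max (Z ω) 0) P := hZ.pos_part
  have hexps {m : Ω → ℝ} (hm : Integrable m P) (hm₀ : ∀ ω, 0 ≤ m ω) :
      Integrable (fun ω ↦ Real.exp (-(s * (A ω + m ω)))) P := by
    refine (integrable_exp_neg_mul_of_mem_Icc hexp hs).mono' (by fun_prop)
      (ae_of_all _ fun ω ↦ ?_)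
    rw [Real.norm_of_nonneg (Real.exp_pos _).le, Real.exp_le_exp, neg_le_neg_iff]
    exact mul_le_mul_of_nonneg_left (le_add_of_nonneg_right (hm₀ ω)) hs.1
  have hexpθ := hexps (hshift θ) fun _ ↦ le_max_right _ _
  have hexp₀ := hexps hZ₀ fun _ ↦ le_max_right _ _
  have hdiff : Integrable (fun ω ↦ Real.exp (-(s * (A ω + max (Z ω + θ) 0))) -
      Real.exp (-(s * (A ω + max (Z ω) 0)))) P := hexpθ.sub hexp₀
  have hdiff₀ : Integrable (fun ω ↦ max (Z ω + θ) 0 - max (Z ω) 0) P := (hshift θ).sub hZ₀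
  rw [← integral_sub hexpθ hexp₀, ← integral_sub (hshift θ) hZ₀, ← integral_const_mul,
    ← integral_add hdiff (hdiff₀.const_mul s), ← integral_const_mul, ← Real.norm_eq_abs]
  exact norm_integral_le_of_norm_le (hbound.const_mul _)
    (ae_of_all P fun ω ↦ abs_exp_neg_mul_add_max_sub_le hs hθ (A ω) (Z ω))

end ShiftedPositivePart

section PowerScale

theorem isBigO_rpow_rpow_nhdsGT_zero {a b : ℝ} (hab : b ≤ a) :
    (fun t : ℝ ↦ t ^ a) =O[𝓝[>] 0] fun t ↦ t ^ b := by
  refine IsBigO.of_bound 1 ?_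
  filter_upwards [Ioc_mem_nhdsGT one_pos] with t ht
  rw [Real.norm_of_nonneg (Real.rpow_nonneg ht.1.le a),
    Real.norm_of_nonneg (Real.rpow_nonneg ht.1.le b), one_mul]
  exact Real.rpow_le_rpow_of_exponent_ge ht.1 ht.2 hab

theorem tendsto_rpow_nhdsGT_zero {a : ℝ} (ha : 0 < a) :
    Tendsto (fun t : ℝ ↦ t ^ a) (𝓝[>] 0) (𝓝[>] 0) := by
  refine tendsto_nhdsWithin_iff.2 ⟨?_, ?_⟩
  · simpa [Real.zero_rpow ha.ne'] using
      (Real.continuousAt_rpow_const 0 a (Or.inr ha.le)).tendsto.mono_left nhdsWithin_le_nhds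
  · filter_upwards [self_mem_nhdsWithin] with t ht using Real.rpow_pos_of_pos ht a

theorem isLittleO_rpow_rpow_nhdsGT_zero {a b : ℝ} (hab : b < a) :
    (fun t : ℝ ↦ t ^ a) =o[𝓝[>] 0] fun t ↦ t ^ b := by
  have hone : (fun t : ℝ ↦ t ^ (a - b)) =o[𝓝[>] 0] fun _ ↦ (1 : ℝ) :=
    (isLittleO_one_iff ℝ).2 ((tendsto_rpow_nhdsGT_zero (sub_pos.2 hab)).mono_right
      nhdsWithin_le_nhds)
  refine ((isBigO_refl (fun t : ℝ ↦ t ^ b) (𝓝[>] 0)).mul_isLittleO hone).congr' ?_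
    (by simp)
  filter_upwards [self_mem_nhdsWithin] with t ht
  rw [← Real.rpow_add ht, add_sub_cancel]

theorem one_div_mem_Ioo {Y : ℝ} (hY : Y ∈ Ioo (1 : ℝ) 2) : 1 / Y ∈ Ioo (1 / 2 : ℝ) 1 :=
  ⟨one_div_lt_one_div_of_lt (by linarith [hY.1]) hY.2, (div_lt_one (by linarith [hY.1])).2 hY.1⟩

theorem rpow_one_div_sq {Y t : ℝ} (ht : 0 ≤ t) : (t ^ (1 / Y)) ^ 2 = t ^ (2 / Y) := by
  rw [← Real.rpow_natCast, ← Real.rpow_mul ht]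
  ring_nf

theorem isLittleO_one_sub_exp_neg_mul_mul {F : ℝ → ℝ} {a p : ℝ} (ha : 0 ≤ a)
    (hF : (fun t ↦ F t - 1) =O[𝓝[>] 0] fun t ↦ t ^ a) (hp : p < 2) (hpa : p < 1 + a) (η : ℝ) :
    (fun t ↦ 1 - Real.exp (-(η * t)) * F t - (1 - F t + η * t)) =o[𝓝[>] 0] fun t ↦ t ^ p := by
  have hlin : Tendsto (fun t ↦ -(η * t)) (𝓝[>] 0) (𝓝 0) :=
    ((Continuous.tendsto' (by fun_prop) 0 0 (by simp)).mono_left nhdsWithin_le_nhds)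
  have hexp : (fun t ↦ Real.exp (-(η * t)) - 1 + η * t) =O[𝓝[>] 0] fun t ↦ t ^ (2 : ℝ) := by
    refine ((Real.exp_sub_sum_range_isBigO_pow 2).comp_tendsto hlin).trans
      (IsBigO.of_bound (η ^ 2) ?_) |>.congr_left fun t ↦ by simp [Finset.sum_range_succ]; ring
    exact Eventually.of_forall fun t ↦ by simp [mul_pow]
  have hF₁ : F =O[𝓝[>] 0] fun _ ↦ (1 : ℝ) := by
    have h := (hF.trans (by simpa using isBigO_rpow_rpow_nhdsGT_zero ha)).add
      (isBigO_refl (fun _ ↦ (1 : ℝ)) (𝓝[>] 0))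
    simpa using h
  have hquad := (hexp.mul hF₁).congr_right fun t ↦ mul_one _
  have hcross : (fun t ↦ η * t * (F t - 1)) =O[𝓝[>] 0] fun t ↦ t ^ (1 + a) := by
    refine (((isBigO_refl (fun t : ℝ ↦ t) (𝓝[>] 0)).const_mul_left η).mul hF).congr'
      EventuallyEq.rfl ?_
    filter_upwards [self_mem_nhdsWithin] with t (ht : 0 < t)
    rw [Real.rpow_add ht, Real.rpow_one]
  refine ((hcross.trans_isLittleO (isLittleO_rpow_rpow_nhdsGT_zero hpa)).sub
    (hquad.trans_isLittleO (isLittleO_rpow_rpow_nhdsGT_zero hp))).congr_left fun t ↦ ?_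
  ring

end PowerScale

/-- The difference between the drift `c * t` and the log-moneyness `κ t`, measured in the spatial
scale `t ^ (1 / Y)` of a `Y`-stable process at time `t`. -/
noncomputable def scaledDrift (Y c : ℝ) (κ : ℝ → ℝ) (t : ℝ) : ℝ :=
  (c * t - κ t) / t ^ (1 / Y)

section ScaledDrift

variable {Y c e₁ e₂ : ℝ} {κ : ℝ → ℝ}

theorem isLittleO_sub_linear (hY : Y ∈ Ioo (1 : ℝ) 2)
    (hκ : (fun t ↦ κ t - (e₁ * t + e₂ * t ^ (2 - 1 / Y))) =o[𝓝[>] 0] fun t ↦ t ^ (2 - 1 / Y)) :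
    (fun t ↦ c * t - κ t - (c - e₁) * t) =o[𝓝[>] 0] fun t : ℝ ↦ t := by
  have hlin : (fun t : ℝ ↦ t ^ (2 - 1 / Y)) =o[𝓝[>] 0] fun t ↦ t := by
    simpa using isLittleO_rpow_rpow_nhdsGT_zero
      (show (1 : ℝ) < 2 - 1 / Y by linarith [(one_div_mem_Ioo hY).2])
  refine ((hκ.trans hlin).add (hlin.const_mul_left e₂)).neg_left.congr_left fun t ↦ ?_
  ring

theorem isLittleO_scaledDrift_sub (hY : Y ∈ Ioo (1 : ℝ) 2)
    (hκ : (fun t ↦ κ t - (e₁ * t + e₂ * t ^ (2 - 1 / Y))) =o[𝓝[>] 0] fun t ↦ t ^ (2 - 1 / Y)) :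
    (fun t ↦ scaledDrift Y c κ t - (c - e₁) * t ^ (1 - 1 / Y)) =o[𝓝[>] 0]
      fun t ↦ t ^ (1 - 1 / Y) := by
  have hpow : (fun t : ℝ ↦ t * (t ^ (1 / Y))⁻¹) =ᶠ[𝓝[>] 0] fun t ↦ t ^ (1 - 1 / Y) := by
    filter_upwards [self_mem_nhdsWithin] with t (ht : 0 < t)
    rw [Real.rpow_sub ht, Real.rpow_one, ← div_eq_mul_inv]
  refine ((isLittleO_sub_linear (c := c) hY hκ).mul_isBigO
    (isBigO_refl (fun t : ℝ ↦ (t ^ (1 / Y))⁻¹) _)).congr' ?_ hpow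
  filter_upwards [hpow] with t ht
  rw [scaledDrift, ← ht]
  ring

theorem isBigO_scaledDrift (hY : Y ∈ Ioo (1 : ℝ) 2)
    (hκ : (fun t ↦ κ t - (e₁ * t + e₂ * t ^ (2 - 1 / Y))) =o[𝓝[>] 0] fun t ↦ t ^ (2 - 1 / Y)) :
    scaledDrift Y c κ =O[𝓝[>] 0] fun t ↦ t ^ (1 - 1 / Y) := by
  simpa using (isLittleO_scaledDrift_sub (c := c) hY hκ).isBigO.add
    ((isBigO_refl (fun t : ℝ ↦ t ^ (1 - 1 / Y)) _).const_mul_left (c - e₁))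

theorem tendsto_scaledDrift (hY : Y ∈ Ioo (1 : ℝ) 2)
    (hκ : (fun t ↦ κ t - (e₁ * t + e₂ * t ^ (2 - 1 / Y))) =o[𝓝[>] 0] fun t ↦ t ^ (2 - 1 / Y)) :
    Tendsto (scaledDrift Y c κ) (𝓝[>] 0) (𝓝 0) :=
  (isBigO_scaledDrift hY hκ).trans_tendsto ((tendsto_rpow_nhdsGT_zero
    (sub_pos.2 (one_div_mem_Ioo hY).2)).mono_right nhdsWithin_le_nhds)

theorem isLittleO_mul_scaledDrift_sq_sub (hY : Y ∈ Ioo (1 : ℝ) 2)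
    (hκ : (fun t ↦ κ t - (e₁ * t + e₂ * t ^ (2 - 1 / Y))) =o[𝓝[>] 0] fun t ↦ t ^ (2 - 1 / Y)) :
    (fun t ↦ t ^ (1 / Y) * scaledDrift Y c κ t ^ 2 - (c - e₁) ^ 2 * t ^ (2 - 1 / Y)) =o[𝓝[>] 0]
      fun t ↦ t ^ (2 - 1 / Y) := by
  have hpow : (fun t : ℝ ↦ t ^ (1 / Y) * (t ^ (1 - 1 / Y) * t ^ (1 - 1 / Y))) =ᶠ[𝓝[>] 0]
      fun t ↦ t ^ (2 - 1 / Y) := by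
    filter_upwards [self_mem_nhdsWithin] with t (ht : 0 < t)
    rw [← Real.rpow_add ht, ← Real.rpow_add ht]
    ring_nf
  have hsum := (isBigO_scaledDrift (c := c) hY hκ).add
    ((isBigO_refl (fun t : ℝ ↦ t ^ (1 - 1 / Y)) _).const_mul_left (c - e₁))
  refine ((isBigO_refl (fun t : ℝ ↦ t ^ (1 / Y)) _).mul_isLittleO
    ((isLittleO_scaledDrift_sub (c := c) hY hκ).mul_isBigO hsum)).congr' ?_ hpow
  filter_upwards [hpow] with t ht
  rw [← ht]
  ring

variable {Φ : ℝ → ℝ → ℝ} {p : ℝ → ℝ} {m₁ K D L B : ℝ}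

theorem isLittleO_comp_scaledDrift (hY : Y ∈ Ioo (1 : ℝ) 2)
    (hκ : (fun t ↦ κ t - (e₁ * t + e₂ * t ^ (2 - 1 / Y))) =o[𝓝[>] 0] fun t ↦ t ^ (2 - 1 / Y))
    (hΦ : ∀ s ∈ Icc (0 : ℝ) 1, ∀ θ : ℝ, |θ| ≤ 1 →
      |Φ s θ - Φ s 0 + s * (p θ - p 0)| ≤ s ^ 2 * |θ| * B) :
    (fun t ↦ Φ (t ^ (1 / Y)) (scaledDrift Y c κ t) - Φ (t ^ (1 / Y)) 0 +
        t ^ (1 / Y) * (p (scaledDrift Y c κ t) - p 0)) =o[𝓝[>] 0] fun t ↦ t ^ (2 / Y) := by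
  have hθ := tendsto_scaledDrift (c := c) hY hκ
  have hs := tendsto_rpow_nhdsGT_zero (one_div_pos.2 (one_pos.trans hY.1))
  have hbound : (fun t ↦ Φ (t ^ (1 / Y)) (scaledDrift Y c κ t) - Φ (t ^ (1 / Y)) 0 +
      t ^ (1 / Y) * (p (scaledDrift Y c κ t) - p 0)) =O[𝓝[>] 0]
      fun t ↦ t ^ (2 / Y) * scaledDrift Y c κ t := by
    refine IsBigO.of_bound B ?_
    filter_upwards [self_mem_nhdsWithin, hs.eventually (Ioc_mem_nhdsGT one_pos),
      hθ.eventually (Metric.closedBall_mem_nhds 0 one_pos)] with t (ht : 0 < t) hst hθt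
    refine (hΦ _ (Ioc_subset_Icc_self hst) _ (by simpa using hθt)).trans_eq ?_
    rw [rpow_one_div_sq ht.le, norm_mul, Real.norm_of_nonneg (Real.rpow_nonneg ht.le _),
      Real.norm_eq_abs, mul_comm]
  refine hbound.trans_isLittleO ?_
  simpa using (isBigO_refl (fun t : ℝ ↦ t ^ (2 / Y)) _).mul_isLittleO ((isLittleO_one_iff ℝ).2 hθ)

theorem isLittleO_mul_comp_scaledDrift (hY : Y ∈ Ioo (1 : ℝ) 2)
    (hκ : (fun t ↦ κ t - (e₁ * t + e₂ * t ^ (2 - 1 / Y))) =o[𝓝[>] 0] fun t ↦ t ^ (2 - 1 / Y))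
    (hp : (fun θ ↦ p θ - p 0 - θ / 2 - L * θ ^ 2) =o[𝓝 0] fun θ ↦ θ ^ 2) :
    (fun t ↦ t ^ (1 / Y) * (p (scaledDrift Y c κ t) - p 0) - ((c - e₁) / 2 * t +
        (L * (c - e₁) ^ 2 - e₂ / 2) * t ^ (2 - 1 / Y))) =o[𝓝[>] 0] fun t ↦ t ^ (2 - 1 / Y) := by
  have hsq := isLittleO_mul_scaledDrift_sq_sub (c := c) hY hκ
  have hsqO : (fun t ↦ t ^ (1 / Y) * scaledDrift Y c κ t ^ 2) =O[𝓝[>] 0]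
      fun t ↦ t ^ (2 - 1 / Y) :=
    (hsq.isBigO.add ((isBigO_refl _ _).const_mul_left ((c - e₁) ^ 2))).congr_left
      fun t ↦ sub_add_cancel _ _
  have hpθ := ((isBigO_refl (fun t : ℝ ↦ t ^ (1 / Y)) _).mul_isLittleO
    (hp.comp_tendsto (tendsto_scaledDrift (c := c) hY hκ))).trans_isBigO hsqO
  refine ((hpθ.add (hsq.const_mul_left L)).sub (hκ.const_mul_left (1 / 2))).congr' ?_
    EventuallyEq.rfl
  filter_upwards [self_mem_nhdsWithin] with t (ht : 0 < t)
  have hdrift : t ^ (1 / Y) * scaledDrift Y c κ t = c * t - κ t :=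
    mul_div_cancel₀ _ (Real.rpow_pos_of_pos ht _).ne'
  simp only [Function.comp_apply]
  linear_combination -hdrift / 2

theorem isLittleO_comp_rpow_one_div (hY : Y ∈ Ioo (1 : ℝ) 2) {φ : ℝ → ℝ}
    (hφ : (fun s ↦ φ s - 1 + s * m₁ - K * s ^ Y - D * s ^ 2) =o[𝓝[>] 0] fun s ↦ s ^ 2) :
    (fun t ↦ φ (t ^ (1 / Y)) - (1 - m₁ * t ^ (1 / Y) + K * t + D * t ^ (2 / Y))) =o[𝓝[>] 0]
      fun t ↦ t ^ (2 / Y) := by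
  have hY₀ : 0 < Y := one_pos.trans hY.1
  refine (hφ.comp_tendsto (tendsto_rpow_nhdsGT_zero (one_div_pos.2 hY₀))).congr' ?_ ?_
  · filter_upwards [self_mem_nhdsWithin] with t (ht : 0 < t)
    simp only [Function.comp_apply]
    rw [rpow_one_div_sq ht.le, ← Real.rpow_mul ht.le, one_div_mul_cancel hY₀.ne', Real.rpow_one]
    ring
  · filter_upwards [self_mem_nhdsWithin] with t (ht : 0 < t) using rpow_one_div_sq ht.le

theorem isLittleO_comp_scaledDrift_sub (hY : Y ∈ Ioo (1 : ℝ) 2)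
    (hκ : (fun t ↦ κ t - (e₁ * t + e₂ * t ^ (2 - 1 / Y))) =o[𝓝[>] 0] fun t ↦ t ^ (2 - 1 / Y))
    (hΦ₀ : (fun s ↦ Φ s 0 - 1 + s * m₁ - K * s ^ Y - D * s ^ 2) =o[𝓝[>] 0] fun s ↦ s ^ 2)
    (hΦ : ∀ s ∈ Icc (0 : ℝ) 1, ∀ θ : ℝ, |θ| ≤ 1 →
      |Φ s θ - Φ s 0 + s * (p θ - p 0)| ≤ s ^ 2 * |θ| * B)
    (hp : (fun θ ↦ p θ - p 0 - θ / 2 - L * θ ^ 2) =o[𝓝 0] fun θ ↦ θ ^ 2) :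
    (fun t ↦ Φ (t ^ (1 / Y)) (scaledDrift Y c κ t) - (1 - m₁ * t ^ (1 / Y) +
        (K - (c - e₁) / 2) * t + (e₂ / 2 - L * (c - e₁) ^ 2) * t ^ (2 - 1 / Y) +
        D * t ^ (2 / Y))) =o[𝓝[>] 0] fun t ↦ t ^ min (2 - 1 / Y) (2 / Y) := by
  have hmin₁ := isBigO_rpow_rpow_nhdsGT_zero (min_le_left (2 - 1 / Y) (2 / Y))
  have hmin₂ := isBigO_rpow_rpow_nhdsGT_zero (min_le_right (2 - 1 / Y) (2 / Y))
  refine (((isLittleO_comp_rpow_one_div hY hΦ₀).add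
    (isLittleO_comp_scaledDrift (c := c) hY hκ hΦ)).trans_isBigO hmin₂).sub
    ((isLittleO_mul_comp_scaledDrift (c := c) hY hκ hp).trans_isBigO hmin₁) |>.congr_left
    fun t ↦ ?_
  ring

theorem isLittleO_one_sub_exp_neg_mul_comp_scaledDrift (hY : Y ∈ Ioo (1 : ℝ) 2)
    (hκ : (fun t ↦ κ t - (e₁ * t + e₂ * t ^ (2 - 1 / Y))) =o[𝓝[>] 0] fun t ↦ t ^ (2 - 1 / Y))
    (hΦ₀ : (fun s ↦ Φ s 0 - 1 + s * m₁ - K * s ^ Y - D * s ^ 2) =o[𝓝[>] 0] fun s ↦ s ^ 2)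
    (hΦ : ∀ s ∈ Icc (0 : ℝ) 1, ∀ θ : ℝ, |θ| ≤ 1 →
      |Φ s θ - Φ s 0 + s * (p θ - p 0)| ≤ s ^ 2 * |θ| * B)
    (hp : (fun θ ↦ p θ - p 0 - θ / 2 - L * θ ^ 2) =o[𝓝 0] fun θ ↦ θ ^ 2) (η : ℝ) :
    (fun t ↦ 1 - Real.exp (-(η * t)) * Φ (t ^ (1 / Y)) (scaledDrift Y c κ t) -
        (m₁ * t ^ (1 / Y) + (η - K + (c - e₁) / 2) * t +
          (L * (c - e₁) ^ 2 - e₂ / 2) * t ^ (2 - 1 / Y) - D * t ^ (2 / Y))) =o[𝓝[>] 0]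
      fun t ↦ t ^ min (2 - 1 / Y) (2 / Y) := by
  obtain ⟨hY₁, hY₂⟩ := one_div_mem_Ioo hY
  have htwo : 2 / Y = 1 / Y + 1 / Y := by ring
  have hpow {a : ℝ} (b : ℝ) (ha : 1 / Y ≤ a) :
      (fun t : ℝ ↦ b * t ^ a) =O[𝓝[>] 0] fun t ↦ t ^ (1 / Y) :=
    (isBigO_rpow_rpow_nhdsGT_zero ha).const_mul_left b
  have hexpand := isLittleO_comp_scaledDrift_sub (c := c) hY hκ hΦ₀ hΦ hp
  have hsub : (fun t ↦ Φ (t ^ (1 / Y)) (scaledDrift Y c κ t) - 1) =O[𝓝[>] 0]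
      fun t ↦ t ^ (1 / Y) := by
    have hpoly := (((hpow (-m₁) le_rfl).add (hpow (K - (c - e₁) / 2) hY₂.le)).add
      (hpow (e₂ / 2 - L * (c - e₁) ^ 2) (show 1 / Y ≤ 2 - 1 / Y by linarith))).add
      (hpow D (show 1 / Y ≤ 2 / Y by linarith))
    refine ((hexpand.isBigO.trans (isBigO_rpow_rpow_nhdsGT_zero (le_min ?_ ?_))).add
      hpoly).congr_left fun t ↦ ?_
    · linarith
    · linarith
    · rw [Real.rpow_one]
      ring
  have hprod := isLittleO_one_sub_exp_neg_mul_mul (p := min (2 - 1 / Y) (2 / Y))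
    (by linarith) hsub (min_lt_iff.2 (Or.inl (by linarith)))
    (min_lt_iff.2 (Or.inr (by linarith))) η
  refine (hprod.sub hexpand).congr_left fun t ↦ ?_
  ring

end ScaledDrift

section CallPrice

theorem symmStableRate_eq_abs {C Y : ℝ} (hY : Y ∈ Ioo (1 : ℝ) 2) :
    symmStableRate C Y = 2 * C * Real.Gamma (-Y) * |Real.cos (Real.pi * Y / 2)| := by
  rw [symmStableRate, abs_of_neg (cos_pi_mul_div_two_neg hY)]
  ring

variable {Ω : Type*} [MeasurableSpace Ω] {P : Measure Ω}

theorem halfRegularizedSecondMoment_eq (C A B Y : ℝ) (W : Ω → ℝ) :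
    halfRegularizedSecondMoment P (C / Y * (A + B)) Y W =
      1 / 2 * (∫ ω, indicator {ω | W ω ≤ 0} (fun ω ↦ W ω ^ 2) ω ∂P) +
        ∫ w in Ioi (0 : ℝ), w * (P.real {ω | w ≤ W ω} - C * A / (Y * w ^ Y) -
          C * B / (Y * w ^ Y)) := by
  have hmin (ω : Ω) : min (W ω) 0 ^ 2 / 2 =
      1 / 2 * indicator {ω | W ω ≤ 0} (fun ω ↦ W ω ^ 2) ω := by
    rcases le_or_gt (W ω) 0 with h | h
    · rw [indicator_of_mem (mem_ofPred_eq ▸ h), min_eq_left h]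
      ring
    · simp [h.le, h.not_ge]
  have htail (w : ℝ) (hw : w ∈ Ioi (0 : ℝ)) :
      w * (P.real {ω | w ≤ W ω} - C / Y * (A + B) * w ^ (-Y)) =
        w * (P.real {ω | w ≤ W ω} - C * A / (Y * w ^ Y) - C * B / (Y * w ^ Y)) := by
    rw [Real.rpow_neg (le_of_lt hw), div_mul_eq_div_div, div_mul_eq_div_div]
    ring
  rw [halfRegularizedSecondMoment, setIntegral_congr_fun measurableSet_Ioi htail]
  simp_rw [hmin, integral_const_mul]

variable [IsProbabilityMeasure P] {C G M Y a b c e₁ e₂ : ℝ} {U V : Ω → ℝ}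

theorem integrable_add_max_sub (hC : 0 < C) (hY : Y ∈ Ioo (1 : ℝ) 2)
    (hU : IsOneSidedStable P C Y U) (hV : IsOneSidedStable P C Y V) (a b : ℝ) :
    Integrable (fun ω ↦ a * U ω + b * V ω + max (U ω - V ω) 0) P :=
  (((hU.integrable hC hY).const_mul a).add ((hV.integrable hC hY).const_mul b)).add
    ((hU.integrable hC hY).sub (hV.integrable hC hY)).pos_part

theorem integral_add_max_sub (hC : 0 < C) (hY : Y ∈ Ioo (1 : ℝ) 2)
    (hU : IsOneSidedStable P C Y U) (hV : IsOneSidedStable P C Y V) (hUV : IndepFun U V P)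
    (a b : ℝ) :
    ∫ ω, (a * U ω + b * V ω + max (U ω - V ω) 0) ∂P =
      1 / Real.pi * Real.Gamma (1 - 1 / Y) * symmStableRate C Y ^ (1 / Y) := by
  have hU₁ := (hU.integrable hC hY).const_mul a
  have hV₁ := (hV.integrable hC hY).const_mul b
  have hlin : Integrable (fun ω ↦ a * U ω + b * V ω) P := hU₁.add hV₁
  have hmax : Integrable (fun ω ↦ max (U ω - V ω) 0) P :=
    ((hU.integrable hC hY).sub (hV.integrable hC hY)).pos_part
  rw [integral_add hlin hmax, integral_add hU₁ hV₁, integral_const_mul, integral_const_mul,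
    hU.integral_eq_zero hC hY, hV.integral_eq_zero hC hY, integral_max_sub_zero hC hY hU hV hUV]
  ring

theorem isLittleO_integral_exp_neg_add_max_sub (hC : 0 < C) (hY : Y ∈ Ioo (1 : ℝ) 2)
    (hU : IsOneSidedStable P C Y U) (hV : IsOneSidedStable P C Y V) (hUV : IndepFun U V P)
    (ha : 0 ≤ a) (hb : 1 ≤ b) :
    (fun s ↦ (∫ ω, Real.exp (-(s * (a * U ω + b * V ω + max (U ω - V ω) 0))) ∂P) - 1 +
        s * (∫ ω, (a * U ω + b * V ω + max (U ω - V ω) 0) ∂P) -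
        C / Y * ((a + 1) ^ Y + b ^ Y) * Y * Real.Gamma (-Y) * s ^ Y -
        halfRegularizedSecondMoment P (C / Y * ((a + 1) ^ Y + b ^ Y)) Y
          (fun ω ↦ a * U ω + b * V ω + max (U ω - V ω) 0) * s ^ 2)
      =o[𝓝[>] 0] fun s ↦ s ^ 2 := by
  have hU₀ := hU.measurable
  have hV₀ := hV.measurable
  have hY₀ : 0 < Y := one_pos.trans hY.1
  have hb₀ : 0 ≤ b := zero_le_one.trans hb
  obtain ⟨B, hB⟩ := exists_abs_measureReal_le_add_max_sub_le hC hY hU hV hUV ha hb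
  have hexp := integrable_exp_neg_add_max hC hY hU hV hUV ha hb₀ zero_le_one 0
  simp only [add_zero, one_mul] at hexp
  exact isLittleO_integral_exp_neg_mul (by fun_prop) (integrable_add_max_sub hC hY hU hV a b)
    hexp hY (by positivity) hB

theorem integral_max_exp_sub_exp_eq_scaledDrift {μ : Measure ℝ} [IsProbabilityMeasure μ]
    (hC : 0 < C) (hY : Y ∈ Ioo (1 : ℝ) 2) (hU : IsOneSidedStable P C Y U)
    (hV : IsOneSidedStable P C Y V) (hUV : IndepFun U V P) (hG : 0 ≤ G) (hM : 1 ≤ M)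
    {t : ℝ} (ht : 0 < t)
    (hc : c = -C * Real.Gamma (-Y) * ((M - 1) ^ Y + (G + 1) ^ Y - M ^ Y - G ^ Y))
    (hμ : ∀ u : ℝ, charFun μ u =
      Complex.exp (t * (Complex.I * c * u + cgmyExponent C G M Y u))) (κ : ℝ → ℝ) :
    ∫ x, max (Real.exp x - Real.exp (κ t)) 0 ∂μ =
      1 - Real.exp (-(C * Real.Gamma (-Y) * ((M - 1) ^ Y + (G + 1) ^ Y) * t)) *
        ∫ ω, Real.exp (-(t ^ (1 / Y) * ((M - 1) * U ω + (G + 1) * V ω +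
          max (U ω - V ω + scaledDrift Y c κ t) 0))) ∂P := by
  have hs : 0 < t ^ (1 / Y) := Real.rpow_pos_of_pos ht _
  have hsY : (t ^ (1 / Y)) ^ Y = t := by
    rw [← Real.rpow_mul ht.le, one_div_mul_cancel (one_pos.trans hY.1).ne', Real.rpow_one]
  have hdrift : t ^ (1 / Y) * scaledDrift Y c κ t = c * (t ^ (1 / Y)) ^ Y - κ t := by
    rw [hsY]
    exact mul_div_cancel₀ _ hs.ne'
  have hprice := integral_max_exp_sub_exp_eq hC hY hU hV hUV hG hM hs hc
    (by simpa only [hsY] using hμ) hdrift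
  rwa [hsY] at hprice

theorem isLittleO_integral_max_exp_sub_exp (hC : 0 < C) (hG : 0 ≤ G) (hM : 1 ≤ M)
    (hY : Y ∈ Ioo (1 : ℝ) 2)
    (hc : c = -C * Real.Gamma (-Y) * ((M - 1) ^ Y + (G + 1) ^ Y - M ^ Y - G ^ Y))
    {μ : ℝ → Measure ℝ} (hμprob : ∀ t > 0, IsProbabilityMeasure (μ t))
    (hμ : ∀ t > (0 : ℝ), ∀ u : ℝ, charFun (μ t) u =
      Complex.exp (t * (Complex.I * c * u + cgmyExponent C G M Y u)))
    {κ : ℝ → ℝ} (hκ : (fun t ↦ κ t - (e₁ * t + e₂ * t ^ (2 - 1 / Y))) =o[𝓝[>] 0]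
      fun t ↦ t ^ (2 - 1 / Y))
    (hU : IsOneSidedStable P C Y U) (hV : IsOneSidedStable P C Y V) (hUV : IndepFun U V P) :
    (fun t ↦ (∫ x, max (Real.exp x - Real.exp (κ t)) 0 ∂μ t) -
        (1 / Real.pi * Real.Gamma (1 - 1 / Y) * symmStableRate C Y ^ (1 / Y) * t ^ (1 / Y) +
          (C * Real.Gamma (-Y) * ((M - 1) ^ Y + (G + 1) ^ Y - M ^ Y - (G + 1) ^ Y) +
            (c - e₁) / 2) * t +
          (1 / (2 * Real.pi) * Real.Gamma (1 + 1 / Y) * symmStableRate C Y ^ (-(1 / Y)) *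
            (c - e₁) ^ 2 - e₂ / 2) * t ^ (2 - 1 / Y) -
          halfRegularizedSecondMoment P (C / Y * (M ^ Y + (G + 1) ^ Y)) Y
            (fun ω ↦ (M - 1) * U ω + (G + 1) * V ω + max (U ω - V ω) 0) * t ^ (2 / Y)))
      =o[𝓝[>] 0] fun t ↦ t ^ min (2 - 1 / Y) (2 / Y) := by
  have hM₁ : 0 ≤ M - 1 := sub_nonneg.2 hM
  have hG₁ : 1 ≤ G + 1 := le_add_of_nonneg_left hG
  have hU₁ := hU.integrable hC hY
  have hV₁ := hV.integrable hC hY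
  have hlaplace := isLittleO_integral_exp_neg_add_max_sub hC hY hU hV hUV hM₁ hG₁
  rw [integral_add_max_sub hC hY hU hV hUV, sub_add_cancel] at hlaplace
  obtain ⟨B, hshift⟩ := exists_abs_integral_exp_neg_mul_add_max_sub_le
    (A := fun ω ↦ (M - 1) * U ω + (G + 1) * V ω) (Z := fun ω ↦ U ω - V ω)
    ((hU₁.const_mul (M - 1)).add (hV₁.const_mul (G + 1))) (hU₁.sub hV₁)
    (integrable_exp_neg_add hC hY hU hV hUV hM₁ (by linarith))
  have hexpand := isLittleO_one_sub_exp_neg_mul_comp_scaledDrift (c := c) hY hκ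
    (Φ := fun s θ ↦ ∫ ω, Real.exp
      (-(s * ((M - 1) * U ω + (G + 1) * V ω + max (U ω - V ω + θ) 0))) ∂P)
    (p := fun θ ↦ ∫ ω, max (U ω - V ω + θ) 0 ∂P)
    (by simpa only [add_zero] using hlaplace) (by simpa only [add_zero] using hshift)
    (by simpa only [add_zero] using isLittleO_integral_max_sub_add_zero hC hY hU hV hUV)
    (C * Real.Gamma (-Y) * ((M - 1) ^ Y + (G + 1) ^ Y))
  have hY₀ : Y ≠ 0 := (one_pos.trans hY.1).ne'
  refine hexpand.congr' ?_ EventuallyEq.rfl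
  filter_upwards [self_mem_nhdsWithin] with t (ht : 0 < t)
  have := hμprob t ht
  rw [integral_max_exp_sub_exp_eq_scaledDrift hC hY hU hV hUV hG hM ht hc (hμ t ht) κ]
  field_simp
  ring

end CallPrice

/-- Third-order close-to-the-money call price expansion under the pure-jump CGMY model. -/
theorem stmt0
    {Ω : Type} [MeasurableSpace Ω] (P : Measure Ω) [IsProbabilityMeasure P]
    (C G M Y : ℝ) (hC : 0 < C) (hG : 0 < G) (hM : 1 < M) (hY : Y ∈ Set.Ioo (1:ℝ) 2)
    (c : ℝ)
    (hc : c = -C * Real.Gamma (-Y) * ((M-1) ^ Y + (G+1) ^ Y - M ^ Y - G ^ Y))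
    (μ : ℝ → Measure ℝ)
    (hμprob : ∀ t > (0:ℝ), IsProbabilityMeasure (μ t))
    (hμchar : ∀ t > (0:ℝ), ∀ u : ℝ,
      (∫ x, Complex.exp (Complex.I * u * x) ∂(μ t)) =
        Complex.exp ((t : ℂ) * (Complex.I * (c : ℂ) * (u : ℂ) +
          ((C * Real.Gamma (-Y) : ℝ) : ℂ) *
          (((M : ℂ) - Complex.I * (u : ℂ)) ^ (Y : ℂ) + ((G : ℂ) + Complex.I * (u : ℂ)) ^ (Y : ℂ)
            - (M : ℂ) ^ (Y : ℂ) - (G : ℂ) ^ (Y : ℂ)))))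
    (κ : ℝ → ℝ) (e₁ e₂ : ℝ)
    (hκ : (fun t => κ t - (e₁ * t + e₂ * t ^ (2 - 1/Y))) =o[𝓝[>] (0:ℝ)]
      fun t => t ^ (2 - 1/Y))
    (Pr : ℝ → ℝ)
    (hPr : ∀ t > (0:ℝ), Pr t = ∫ x, max (Real.exp x - Real.exp (κ t)) 0 ∂(μ t))
    (U V : Ω → ℝ) (hU : Measurable U) (hV : Measurable V)
    (hIndep : IndepFun U V P)
    (hUchar : ∀ u : ℝ, (∫ ω, Complex.exp (Complex.I * u * (U ω)) ∂P) =
      Complex.exp (((C * Real.Gamma (-Y) * |u| ^ Y : ℝ) : ℂ) *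
        (((Real.cos (Real.pi * Y / 2) : ℝ) : ℂ)
          - Complex.I * ((Real.sign u : ℝ) : ℂ) * ((Real.sin (Real.pi * Y / 2) : ℝ) : ℂ))))
    (hVchar : ∀ u : ℝ, (∫ ω, Complex.exp (Complex.I * u * (V ω)) ∂P) =
      Complex.exp (((C * Real.Gamma (-Y) * |u| ^ Y : ℝ) : ℂ) *
        (((Real.cos (Real.pi * Y / 2) : ℝ) : ℂ)
          - Complex.I * ((Real.sign u : ℝ) : ℂ) * ((Real.sin (Real.pi * Y / 2) : ℝ) : ℂ))))
    (Z Ut : Ω → ℝ)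
    (hZ : Z = fun ω => U ω - V ω)
    (hUt : Ut = fun ω => (M - 1) * U ω + (G + 1) * V ω)
    (γ' d₁ d₂ d₃₁ d₃₂ : ℝ)
    (hγ' : γ' = -C * Real.Gamma (-Y) * ((M-1) ^ Y + (G+1) ^ Y - M ^ Y - G ^ Y))
    (hd₁ : d₁ = (1 / Real.pi) * Real.Gamma (1 - 1/Y) *
      (2 * C * Real.Gamma (-Y) * |Real.cos (Real.pi * Y / 2)|) ^ (1/Y))
    (hd₂ : d₂ = (C * Real.Gamma (-Y) / 2) * ((M-1) ^ Y - M ^ Y - (G+1) ^ Y + G ^ Y) - e₁ / 2)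
    (hd₃₁ : d₃₁ = ((γ' - e₁) ^ 2 / (2 * Real.pi)) * Real.Gamma (1 + 1/Y) *
      (-2 * C * Real.Gamma (-Y) * Real.cos (Real.pi * Y / 2)) ^ (-(1/Y)) - e₂ / 2)
    (hd₃₂ : d₃₂ = -(1/2) * (∫ ω, Set.indicator {ω | max (Z ω) 0 + Ut ω ≤ 0}
        (fun ω => (max (Z ω) 0 + Ut ω) ^ 2) ω ∂P)
      - ∫ w in Set.Ioi (0:ℝ), w * ((P {ω | w ≤ max (Z ω) 0 + Ut ω}).toReal
          - C * M ^ Y / (Y * w ^ Y) - C * (G+1) ^ Y / (Y * w ^ Y))) :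
    (fun t => Pr t - (d₁ * t ^ (1/Y) + d₂ * t + d₃₁ * t ^ (2 - 1/Y) + d₃₂ * t ^ (2/Y)))
      =o[𝓝[>] (0:ℝ)] fun t => t ^ (min (2 - 1/Y) (2/Y)) := by
  subst hZ hUt hγ' hd₁ hd₂ hd₃₁ hd₃₂
  have hY₀ : Y ≠ 0 := (one_pos.trans hY.1).ne'
  have hμ (t : ℝ) (ht : 0 < t) (u : ℝ) : charFun (μ t) u =
      Complex.exp (t * (Complex.I * c * u + cgmyExponent C G M Y u)) := by
    simp_rw [charFun_apply_real, cgmyExponent, ← hμchar t ht u, mul_comm Complex.I, mul_right_comm]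
  have hexpand := isLittleO_integral_max_exp_sub_exp hC hG.le hM.le hY hc hμprob hμ hκ
    (isOneSidedStable_of_integral_cexp hY₀ hU hUchar)
    (isOneSidedStable_of_integral_cexp hY₀ hV hVchar) hIndep
  rw [halfRegularizedSecondMoment_eq, symmStableRate_eq_abs hY] at hexpand
  refine hexpand.congr' ?_ EventuallyEq.rfl
  filter_upwards [self_mem_nhdsWithin] with t ht
  simp only [hPr t ht, add_comm (max _ _), Measure.real]
  rw [← symmStableRate_eq_abs hY, ← symmStableRate, hc]
  ring
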